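/- arXiv:2007.12111 — 3 statements merged into one kernel-verified Lean document; each statement's English description precedes it below -/
import Mathlib

section
/- Let r ≥ 2 be an integer and let ε > 0, and let p : ℕ → [0,1] be a function satisfying n·p(n) − log n → ∞ as n → ∞. Then, as n → ∞ through even integers, with high probability the random graph G ~ G(n, p(n)) has the following property: for every r-colouring of the edges of G there exist a colour i ∈ {1,…,r} and a perfect matching of G containing at least (1/(r+1) − ε)·n edges of colour i. -/
open scoped Classical in
/-- The probability, under the binomial random graph `G(n,p)`, that a graph
property `P` holds. Each of the `n.choose 2` possible edges is present
independently with probability `p`. -/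
noncomputable def gnpProb (n : ℕ) (p : ℝ) (P : SimpleGraph (Fin n) → Prop) : ℝ :=
  ∑ G : SimpleGraph (Fin n),
    (if P G then p ^ G.edgeSet.ncard * (1 - p) ^ (n.choose 2 - G.edgeSet.ncard) else 0)

/-!
If a colour class has no large matching, the Tutte–Berge formula gives it a barrier `S i`: a set
whose removal leaves many odd components. In a graph without bipartite holes of size `a = o(n)`, all
but `o(n)` of the vertices outside the barriers have pairwise a common colour in which both lie in
components of more than `a` vertices. Hence the large components of a single colour contain almost
all of these vertices, or almost all of them lie in large components of two colours. If all colours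
had only matchings of fewer than `(1 / (r + 1) - o(1)) * n` edges, counting components and barriers
would rule out both cases.

A random graph has no such holes, its small vertex sets are sparse, it has no isolated vertices and
its vertices of low degree are far apart. It then has a core of `o(n)` vertices containing many
neighbours of each vertex, or all of them. Drop the edges at the core from a large monochromatic
matching. The vertices that are now uncovered include the core, and the theorem of Tutte matches
them with each other, because pseudorandomness excludes a barrier. This costs only `o(n)` edges.
-/

namespace MonochromaticMatching

open Finset

open scoped Classical

/-! ### Binomial random subsets -/

section BinomialSubset

variable {α : Type*}

/-- The expectation of `F A`, where `A` is the binomial random subset of `E` that contains each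
element independently with probability `p`. -/
noncomputable def subsetExpectation (E : Finset α) (p : ℝ) (F : Finset α → ℝ) : ℝ :=
  ∑ A ∈ E.powerset, p ^ #A * (1 - p) ^ (#E - #A) * F A

lemma subsetExpectation_insert [DecidableEq α] {E : Finset α} {e : α} (he : e ∉ E)
    (p : ℝ) (F : Finset α → ℝ) :
    subsetExpectation (insert e E) p F =
      (1 - p) * subsetExpectation E p F + p * subsetExpectation E p (fun A => F (insert e A)) := by
  unfold subsetExpectation
  rw [sum_powerset_insert he, mul_sum, mul_sum]
  congr 1 <;> refine sum_congr rfl fun A hA => ?_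
  · rw [card_insert_of_notMem he, Nat.succ_sub (card_le_card (mem_powerset.1 hA)), pow_succ]
    ring
  · rw [card_insert_of_notMem he, card_insert_of_notMem fun h => he (mem_powerset.1 hA h),
      Nat.add_sub_add_right, pow_succ]
    ring

lemma subsetExpectation_le_subsetExpectation {p : ℝ} (hp₀ : 0 ≤ p) (hp₁ : p ≤ 1) (E : Finset α)
    {F F' : Finset α → ℝ} (hF : ∀ A, F A ≤ F' A) :
    subsetExpectation E p F ≤ subsetExpectation E p F' :=
  sum_le_sum fun A _ => mul_le_mul_of_nonneg_left (hF A)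
    (mul_nonneg (pow_nonneg hp₀ _) (pow_nonneg (sub_nonneg.2 hp₁) _))

lemma subsetExpectation_mono_prob {p q : ℝ} (hp : 0 ≤ p) (hpq : p ≤ q) (hq : q ≤ 1)
    (E : Finset α) {F : Finset α → ℝ} (hF : Monotone F) :
    subsetExpectation E p F ≤ subsetExpectation E q F := by
  induction E using Finset.induction_on generalizing F with
  | empty => simp [subsetExpectation]
  | insert e E he ih =>
    have without_e := ih hF
    have with_e := ih (F := fun A => F (insert e A)) fun A B h => hF (insert_subset_insert e h)
    have without_le_with :
        subsetExpectation E p F ≤ subsetExpectation E p fun A => F (insert e A) :=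
      subsetExpectation_le_subsetExpectation hp (hpq.trans hq) E fun A => hF (subset_insert e A)
    rw [subsetExpectation_insert he, subsetExpectation_insert he]
    nlinarith

lemma subsetExpectation_prod_mul_prod [DecidableEq α] (E : Finset α) (p : ℝ) (f g : α → ℝ) :
    subsetExpectation E p (fun A => (∏ e ∈ A, f e) * ∏ e ∈ E \ A, g e) =
      ∏ e ∈ E, (p * f e + (1 - p) * g e) := by
  rw [prod_add]
  refine sum_congr rfl fun A hA => ?_
  simp only [prod_mul_distrib, prod_const, card_sdiff_of_subset (mem_powerset.1 hA)]
  ring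

lemma subsetExpectation_ite_subset_mul_pow [DecidableEq α] {E Q T : Finset α} (hQ : Q ⊆ E)
    (hT : T ⊆ E) (hQT : Disjoint Q T) (p t : ℝ) :
    subsetExpectation E p (fun A => (if Q ⊆ A then 1 else 0) * t ^ #(A ∩ T)) =
      p ^ #Q * (1 - p + p * t) ^ #T := by
  have integrand_eq : ∀ A, (if Q ⊆ A then 1 else 0) * t ^ #(A ∩ T) =
      (∏ e ∈ A, if e ∈ T then t else 1) * ∏ e ∈ E \ A, if e ∈ Q then 0 else 1 := fun A => by
    rw [prod_ite_mem, prod_ite_mem, prod_const, prod_const, mul_comm, zero_pow_eq]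
    have : #((E \ A) ∩ Q) = 0 ↔ Q ⊆ A := by
      rw [card_eq_zero, ← disjoint_iff_inter_eq_empty, disjoint_left]
      exact ⟨fun h e he => by_contra fun heA => h (mem_sdiff.2 ⟨hQ he, heA⟩) he,
        fun h e he heQ => (mem_sdiff.1 he).2 (h heQ)⟩
    simp only [this]
  have factor_eq : ∀ e, p * (if e ∈ T then t else 1) + (1 - p) * (if e ∈ Q then 0 else 1) =
      (if e ∈ Q then p else 1) * (if e ∈ T then 1 - p + p * t else 1) := fun e => by
    by_cases heQ : e ∈ Q
    · simp [heQ, disjoint_left.1 hQT heQ]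
    · by_cases heT : e ∈ T <;> simp [heQ, heT]; ring
  simp_rw [integrand_eq, subsetExpectation_prod_mul_prod, factor_eq, prod_mul_distrib,
    prod_ite_mem, inter_eq_right.2 hQ, inter_eq_right.2 hT, prod_const]

end BinomialSubset

/-! ### The binomial random graph -/

section RandomGraph

variable {n : ℕ} {p : ℝ}

lemma edgeFinset_eq_of_fromEdgeSet_eq {G : SimpleGraph (Fin n)} {A : Finset (Sym2 (Fin n))}
    (hA : A ⊆ (⊤ : SimpleGraph (Fin n)).edgeFinset) (hG : SimpleGraph.fromEdgeSet A = G) :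
    G.edgeFinset = A := by
  subst hG
  ext e
  have : e ∈ A → ¬ e.IsDiag := fun he => by simpa using hA he
  simpa using this

lemma gnpProb_eq_subsetExpectation (n : ℕ) (p : ℝ) (P : SimpleGraph (Fin n) → Prop) :
    gnpProb n p P = subsetExpectation (⊤ : SimpleGraph (Fin n)).edgeFinset p
      fun A => if P (SimpleGraph.fromEdgeSet A) then 1 else 0 := by
  refine sum_bij' (fun G _ => G.edgeFinset) (fun A _ => SimpleGraph.fromEdgeSet A)
    (fun G _ => mem_powerset.2 (SimpleGraph.edgeFinset_mono le_top)) (fun _ _ => mem_univ _)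
    (fun G _ => by simp) (fun A hA => edgeFinset_eq_of_fromEdgeSet_eq (mem_powerset.1 hA) rfl)
    (fun G _ => ?_)
  rw [← SimpleGraph.coe_edgeFinset, Set.ncard_coe_finset,
    SimpleGraph.card_edgeFinset_top_eq_card_choose_two, Fintype.card_fin]
  simp

lemma gnpProb_eq_one {P : SimpleGraph (Fin n) → Prop} (hP : ∀ G, P G) : gnpProb n p P = 1 := by
  have h := subsetExpectation_prod_mul_prod (⊤ : SimpleGraph (Fin n)).edgeFinset p 1 1
  simp only [Pi.one_apply, prod_const_one, mul_one, add_sub_cancel] at h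
  simp only [gnpProb_eq_subsetExpectation, hP, if_true, h]

lemma gnpProb_mono (hp₀ : 0 ≤ p) (hp₁ : p ≤ 1) {P Q : SimpleGraph (Fin n) → Prop}
    (h : ∀ G, P G → Q G) : gnpProb n p P ≤ gnpProb n p Q := by
  simp only [gnpProb_eq_subsetExpectation]
  refine subsetExpectation_le_subsetExpectation hp₀ hp₁ _ fun A => ?_
  have := h (SimpleGraph.fromEdgeSet A)
  split_ifs <;> simp_all

lemma gnpProb_le_one (hp₀ : 0 ≤ p) (hp₁ : p ≤ 1) (P : SimpleGraph (Fin n) → Prop) :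
    gnpProb n p P ≤ 1 :=
  (gnpProb_mono hp₀ hp₁ fun _ _ => trivial).trans_eq (gnpProb_eq_one (P := fun _ => True) (by simp))

lemma gnpProb_mono_prob {q : ℝ} (hp : 0 ≤ p) (hpq : p ≤ q) (hq : q ≤ 1)
    {P : SimpleGraph (Fin n) → Prop} (hP : Monotone P) : gnpProb n p P ≤ gnpProb n q P := by
  simp only [gnpProb_eq_subsetExpectation]
  refine subsetExpectation_mono_prob hp hpq hq _ fun A B hAB => ?_
  have : P (SimpleGraph.fromEdgeSet A) → P (SimpleGraph.fromEdgeSet B) :=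
    hP (SimpleGraph.fromEdgeSet_mono (coe_subset.2 hAB))
  split_ifs <;> simp_all

lemma gnpProb_add_gnpProb_not (P : SimpleGraph (Fin n) → Prop) :
    gnpProb n p P + gnpProb n p (fun G => ¬ P G) = 1 := by
  rw [← gnpProb_eq_one (n := n) (p := p) (P := fun _ => True) fun _ => trivial]
  unfold gnpProb
  rw [← sum_add_distrib]
  refine sum_congr rfl fun G _ => ?_
  by_cases h : P G <;> simp [h]

lemma gnpProb_exists_le {ι : Type*} (hp₀ : 0 ≤ p) (hp₁ : p ≤ 1) (J : Finset ι)
    (P : ι → SimpleGraph (Fin n) → Prop) :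
    gnpProb n p (fun G => ∃ j ∈ J, P j G) ≤ ∑ j ∈ J, gnpProb n p (P j) := by
  unfold gnpProb
  rw [sum_comm]
  refine sum_le_sum fun G _ => ?_
  have summand_nonneg : ∀ j ∈ J, 0 ≤ if P j G then
      p ^ G.edgeSet.ncard * (1 - p) ^ (n.choose 2 - G.edgeSet.ncard) else 0 := fun j _ => by
    have := sub_nonneg.2 hp₁
    positivity
  split_ifs with hG
  · obtain ⟨j, hj, hPj⟩ := hG
    simpa [hPj] using single_le_sum summand_nonneg hj
  · exact sum_nonneg summand_nonneg

lemma gnpProb_or_le (hp₀ : 0 ≤ p) (hp₁ : p ≤ 1) (P Q : SimpleGraph (Fin n) → Prop) :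
    gnpProb n p (fun G => P G ∨ Q G) ≤ gnpProb n p P + gnpProb n p Q := by
  simpa [or_comm] using gnpProb_exists_le hp₀ hp₁ univ fun b : Bool => if b then P else Q

lemma gnpProb_le_mul_pow_mul_pow (hp₀ : 0 ≤ p) (hp₁ : p ≤ 1) {P : SimpleGraph (Fin n) → Prop}
    {Q T : Finset (Sym2 (Fin n))} (hQ : Q ⊆ (⊤ : SimpleGraph (Fin n)).edgeFinset)
    (hT : T ⊆ (⊤ : SimpleGraph (Fin n)).edgeFinset) (hQT : Disjoint Q T) {C t : ℝ} (hC : 0 ≤ C)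
    (ht : 0 ≤ t) (hP : ∀ G, P G → Q ⊆ G.edgeFinset ∧ 1 ≤ C * t ^ #(G.edgeFinset ∩ T)) :
    gnpProb n p P ≤ C * (p ^ #Q * (1 - p + p * t) ^ #T) := by
  -- Markov inequality for the random variable `1{Q ⊆ G} · C · t ^ #(G ∩ T)`.
  rw [← subsetExpectation_ite_subset_mul_pow hQ hT hQT, gnpProb_eq_subsetExpectation]
  unfold subsetExpectation
  rw [mul_sum]
  refine sum_le_sum fun A hA => ?_
  rw [mul_left_comm]
  refine mul_le_mul_of_nonneg_left ?_ (mul_nonneg (pow_nonneg hp₀ _)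
    (pow_nonneg (sub_nonneg.2 hp₁) _))
  beta_reduce
  split_ifs with h h' h'
  · simpa [edgeFinset_eq_of_fromEdgeSet_eq (mem_powerset.1 hA) rfl] using (hP _ h).2
  · exact absurd (edgeFinset_eq_of_fromEdgeSet_eq (mem_powerset.1 hA) rfl ▸ (hP _ h).1) h'
  · positivity
  · simp

variable {Q T : Finset (Sym2 (Fin n))}

lemma gnpProb_disjoint_le (hp₀ : 0 ≤ p) (hp₁ : p ≤ 1)
    (hT : T ⊆ (⊤ : SimpleGraph (Fin n)).edgeFinset) :
    gnpProb n p (fun G => Disjoint G.edgeFinset T) ≤ (1 - p) ^ #T := by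
  refine (gnpProb_le_mul_pow_mul_pow hp₀ hp₁ (empty_subset _) hT (disjoint_empty_left T)
    zero_le_one le_rfl fun G hG => ⟨empty_subset _, ?_⟩).trans_eq (by simp)
  simp [disjoint_iff_inter_eq_empty.1 hG]

lemma gnpProb_le_card_inter_le (hp₀ : 0 ≤ p) (hp₁ : p ≤ 1)
    (hT : T ⊆ (⊤ : SimpleGraph (Fin n)).edgeFinset) {θ : ℝ} (hθ : 1 ≤ θ) (m : ℕ) :
    gnpProb n p (fun G => m ≤ #(G.edgeFinset ∩ T)) ≤ θ⁻¹ ^ m * (1 - p + p * θ) ^ #T := by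
  refine (gnpProb_le_mul_pow_mul_pow hp₀ hp₁ (empty_subset _) hT (disjoint_empty_left T)
    (C := θ⁻¹ ^ m) (t := θ) (by positivity) (by positivity)
    fun G hG => ⟨empty_subset _, ?_⟩).trans_eq (by simp)
  rw [inv_pow, inv_mul_eq_div, one_le_div (by positivity)]
  exact pow_le_pow_right₀ hθ hG

lemma gnpProb_subset_and_card_inter_le_le (hp₀ : 0 ≤ p) (hp₁ : p ≤ 1)
    (hQ : Q ⊆ (⊤ : SimpleGraph (Fin n)).edgeFinset)
    (hT : T ⊆ (⊤ : SimpleGraph (Fin n)).edgeFinset) (hQT : Disjoint Q T) {t : ℝ} (ht₀ : 0 < t)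
    (ht₁ : t ≤ 1) (m : ℕ) :
    gnpProb n p (fun G => Q ⊆ G.edgeFinset ∧ #(G.edgeFinset ∩ T) ≤ m) ≤
      t⁻¹ ^ m * (p ^ #Q * (1 - p + p * t) ^ #T) := by
  refine gnpProb_le_mul_pow_mul_pow hp₀ hp₁ hQ hT hQT (by positivity) ht₀.le
    fun G hG => ⟨hG.1, ?_⟩
  rw [inv_pow, inv_mul_eq_div, one_le_div (by positivity)]
  exact pow_le_pow_of_le_one ht₀.le ht₁ hG.2

end RandomGraph

/-! ### Matchings as involutions and Berge barriers -/

section Berge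

variable {V : Type*} {G : SimpleGraph V}

/-- The involution `f` encodes the matching of `G` with edges `{v, f v}`, where `f v ≠ v`; the
fixed points of `f` are the vertices that the matching leaves uncovered. -/
structure IsMatchingInvolution (G : SimpleGraph V) (f : V → V) : Prop where
  involutive : Function.Involutive f
  adj : ∀ v, f v ≠ v → G.Adj v (f v)

/-- The join of `G` with a complete graph on `D`, used to absorb up to `card D` uncovered
vertices of a matching of `G`. -/
def apexJoin (G : SimpleGraph V) (D : Type*) : SimpleGraph (V ⊕ D) where
  Adj x y := x ≠ y ∧ ∀ u v, x = Sum.inl u → y = Sum.inl v → G.Adj u v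
  symm := ⟨fun _ _ h => ⟨h.1.symm, fun u v hx hy => (h.2 v u hy hx).symm⟩⟩
  loopless := ⟨fun _ h => h.1 rfl⟩

lemma exists_involutive_adj_of_isPerfectMatching {M : G.Subgraph} (hM : M.IsPerfectMatching) :
    ∃ f : V → V, Function.Involutive f ∧ ∀ v, G.Adj v (f v) := by
  have existsUnique_adj : ∀ v, ∃! w, M.Adj v w := fun v => hM.1 (hM.2 v)
  choose f hf f_unique using existsUnique_adj
  exact ⟨f, fun v => (f_unique (f v) v (hf v).symm).symm, fun v => M.adj_sub (hf v)⟩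

lemma apexJoin_deleteVerts_adj {D : Type*} {u : Set (V ⊕ D)}
    {x y : ((⊤ : (apexJoin G D).Subgraph).deleteVerts u).verts} :
    ((⊤ : (apexJoin G D).Subgraph).deleteVerts u).coe.Adj x y ↔ (apexJoin G D).Adj x y := by
  have hx := x.2.2
  have hy := y.2.2
  simp [hx, hy]

lemma exists_labelling_of_surjective {S : Finset V} {C : Type*} {q : {v // v ∉ S} → C}
    (hq : Function.Surjective q) :
    ∃ (rep : C ↪ V) (g : V → V), ∀ v (hv : v ∉ S), g v = rep (q ⟨v, hv⟩) := by
  let rep : C ↪ V := ⟨fun c => (Function.surjInv hq c).1,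
    Subtype.val_injective.comp (Function.injective_surjInv hq)⟩
  exact ⟨rep, fun v => if hv : v ∉ S then rep (q ⟨v, hv⟩) else v, fun v hv => dif_pos hv⟩

variable [Fintype V] {D : Type*} [Fintype D]

lemma exists_isMatchingInvolution_of_apexJoin {f : V ⊕ D → V ⊕ D} (hf : Function.Involutive f)
    (hadj : ∀ x, (apexJoin G D).Adj x (f x)) :
    ∃ f' : V → V, IsMatchingInvolution G f' ∧ #{v | f' v = v} ≤ Fintype.card D := by
  let f' : V → V := fun v => Sum.elim id (fun _ => v) (f (Sum.inl v))
  have f'_of_inl : ∀ {v w}, f (Sum.inl v) = Sum.inl w → f' v = w := fun h => by simp [f', h]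
  have f'_of_inr : ∀ {v j}, f (Sum.inl v) = Sum.inr j → f' v = v := fun h => by simp [f', h]
  have apex_of_fixed : ∀ v, f' v = v → ∃ j, f (Sum.inl v) = Sum.inr j := by
    intro v hv
    rcases h : f (Sum.inl v) with w | j
    · exact absurd (by rw [h, ← f'_of_inl h, hv]) (hadj (Sum.inl v)).1
    · exact ⟨j, rfl⟩
  refine ⟨f', ⟨fun v => ?_, fun v hv => ?_⟩, ?_⟩
  · rcases h : f (Sum.inl v) with w | j
    · rw [f'_of_inl h, f'_of_inl (w := v) (by rw [← h, hf])]
    · rw [f'_of_inr h, f'_of_inr h]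
  · rcases h : f (Sum.inl v) with w | j
    · exact (f'_of_inl h).symm ▸ (hadj (Sum.inl v)).2 v w rfl h
    · exact absurd (f'_of_inr h) hv
  · choose j hj using apex_of_fixed
    rw [← Fintype.card_subtype]
    refine Fintype.card_le_of_injective (fun v : {v // f' v = v} => j v v.2) fun v w hvw => ?_
    exact Subtype.ext (Sum.inl_injective (hf.injective
      ((hj v v.2).trans ((congrArg Sum.inr hvw).trans (hj w w.2).symm))))

/-- The vertices outside `S` with label `c`. -/
noncomputable def labelClass (S : Finset V) (g : V → V) (c : V) : Finset V :=
  {v | v ∉ S ∧ g v = c}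

lemma mem_labelClass {S : Finset V} {g : V → V} {c v : V} :
    v ∈ labelClass S g c ↔ v ∉ S ∧ g v = c := by
  simp [labelClass]

/-- The set `S` witnesses that every matching of `G` leaves more than `d` vertices uncovered: the
labelling `g` is constant on the components of `G - S`, and more than `#S + d` label classes are
odd. Labelling by vertices avoids any reference to the components themselves. -/
structure IsBarrier (G : SimpleGraph V) (d : ℕ) (S : Finset V) (g : V → V) : Prop where
  label_eq : ∀ x y, x ∉ S → y ∉ S → G.Adj x y → g x = g y
  card_lt : #S + d < #{c | Odd #(labelClass S g c)}

lemma inr_mem_of_isTutteViolator_apexJoin (hpar : Even (Fintype.card V + Fintype.card D))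
    {u : Set (V ⊕ D)} (hu : (apexJoin G D).IsTutteViolator u) (j : D) : Sum.inr j ∈ u := by
  unfold SimpleGraph.IsTutteViolator at hu
  set K := (⊤ : (apexJoin G D).Subgraph).deleteVerts u
  by_contra hj
  have hjK : Sum.inr j ∈ K.verts := ⟨trivial, hj⟩
  have eq_apex_component : ∀ c, c = K.coe.connectedComponentMk ⟨Sum.inr j, hjK⟩ := by
    refine SimpleGraph.ConnectedComponent.ind fun x => ?_
    by_cases hx : x = ⟨Sum.inr j, hjK⟩
    · rw [hx]
    · refine SimpleGraph.ConnectedComponent.sound (SimpleGraph.Adj.reachable ?_)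
      exact apexJoin_deleteVerts_adj.2 ⟨fun h => hx (Subtype.ext h), by simp⟩
  have odd_le_one : K.coe.oddComponents.ncard ≤ 1 :=
    (Set.ncard_le_one_iff (Set.toFinite _)).2 fun {a b} _ _ =>
      (eq_apex_component a).trans (eq_apex_component b).symm
  have u_empty : u = ∅ := (Set.ncard_eq_zero (Set.toFinite _)).1 (by omega)
  have odd_card : Odd (Nat.card K.verts) :=
    (SimpleGraph.odd_ncard_oddComponents K.coe).1 (by
      rw [show K.coe.oddComponents.ncard = 1 by omega]; exact odd_one)
  have verts_eq : K.verts = Set.univ := by simp [K, u_empty]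
  rw [verts_eq, Nat.card_univ, Nat.card_sum, Nat.card_eq_fintype_card,
    Nat.card_eq_fintype_card] at odd_card
  exact Nat.not_odd_iff_even.2 hpar odd_card

lemma exists_isBarrier_of_isTutteViolator_apexJoin {u : Set (V ⊕ D)}
    (hu : (apexJoin G D).IsTutteViolator u) (hD : ∀ j : D, Sum.inr j ∈ u) :
    ∃ S g, IsBarrier G (Fintype.card D) S g := by
  unfold SimpleGraph.IsTutteViolator at hu
  set K := (⊤ : (apexJoin G D).Subgraph).deleteVerts u
  let S : Finset V := {v | Sum.inl v ∈ u}
  have mem_verts : ∀ {v}, v ∉ S → Sum.inl v ∈ K.verts := fun hv =>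
    ⟨trivial, by simpa [S] using hv⟩
  have inl_rep : ∀ x : K.verts, ∃ v, ∃ hv : v ∉ S, x = ⟨Sum.inl v, mem_verts hv⟩ := by
    rintro ⟨v | j, hx⟩
    · exact ⟨v, by simpa [S] using hx.2, rfl⟩
    · exact absurd (hD j) hx.2
  let component : {v // v ∉ S} → K.coe.ConnectedComponent := fun v =>
    K.coe.connectedComponentMk ⟨Sum.inl v, mem_verts v.2⟩
  have component_surjective : Function.Surjective component := by
    refine SimpleGraph.ConnectedComponent.ind fun x => ?_
    obtain ⟨v, hv, rfl⟩ := inl_rep x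
    exact ⟨⟨v, hv⟩, rfl⟩
  obtain ⟨rep, g, g_eq⟩ := exists_labelling_of_surjective component_surjective
  have card_labelClass : ∀ c, #(labelClass S g (rep c)) = c.supp.ncard := fun c => by
    rw [Set.ncard_eq_toFinset_card']
    refine card_bij (fun v hv => ⟨Sum.inl v, mem_verts (mem_labelClass.1 hv).1⟩)
      (fun v hv => ?_) (fun v _ w _ hvw => Sum.inl_injective (congrArg Subtype.val hvw))
      (fun x hx => ?_)
    · obtain ⟨hvS, hv⟩ := mem_labelClass.1 hv
      rw [g_eq v hvS] at hv
      simpa using rep.injective hv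
    · obtain ⟨v, hv, rfl⟩ := inl_rep x
      exact ⟨v, mem_labelClass.2 ⟨hv, (g_eq v hv).trans (congrArg rep (by simpa using hx))⟩, rfl⟩
  refine ⟨S, g, fun x y hx hy hxy => ?_, ?_⟩
  · rw [g_eq x hx, g_eq y hy]
    refine congrArg rep (SimpleGraph.ConnectedComponent.sound (SimpleGraph.Adj.reachable ?_))
    exact apexJoin_deleteVerts_adj.2 ⟨by simpa using hxy.ne, by rintro _ _ ⟨⟩ ⟨⟩; exact hxy⟩
  · have card_u : u.ncard = #S + Fintype.card D := by
      rw [Set.ncard_eq_toFinset_card', ← card_univ (α := D), ← card_disjSum]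
      congr 1
      ext (v | j) <;> simp [S, hD]
    rw [card_u, Set.ncard_eq_toFinset_card'] at hu
    refine hu.trans_le (card_le_card_of_injOn rep (fun c hc => ?_) rep.injective.injOn)
    simpa [card_labelClass, SimpleGraph.oddComponents] using hc

-- The deficiency version of the theorem of Tutte, applied to the join of `G` with `d` apices.
theorem exists_isBarrier (d : ℕ) (hpar : Even (Fintype.card V + d))
    (h : ∀ f, IsMatchingInvolution G f → d < #{v | f v = v}) : ∃ S g, IsBarrier G d S g := by
  have not_perfect : ¬ ∃ M : (apexJoin G (Fin d)).Subgraph, M.IsPerfectMatching := by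
    rintro ⟨M, hM⟩
    obtain ⟨f, hf, hadj⟩ := exists_involutive_adj_of_isPerfectMatching hM
    obtain ⟨f', hf', fixed_le⟩ := exists_isMatchingInvolution_of_apexJoin hf hadj
    exact (h f' hf').not_ge (by simpa using fixed_le)
  rw [SimpleGraph.tutte, not_forall] at not_perfect
  obtain ⟨u, hu⟩ := not_perfect
  rw [not_not] at hu
  simpa using exists_isBarrier_of_isTutteViolator_apexJoin hu
    (inr_mem_of_isTutteViolator_apexJoin (by simpa using hpar) hu)

lemma IsBarrier.card_add_two_le {d : ℕ} {S : Finset V} {g : V → V} (hS : IsBarrier G d S g)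
    (hpar : Even (Fintype.card V + d)) : #S + d + 2 ≤ #{c | Odd #(labelClass S g c)} := by
  have card_compl : #Sᶜ = ∑ c, #(labelClass S g c) := by
    rw [card_eq_sum_card_fiberwise (f := g) (t := univ) fun _ _ => by simp]
    refine sum_congr rfl fun c _ => congrArg card ?_
    ext v
    simp [mem_labelClass]
  have odd_iff : Odd #Sᶜ ↔ Odd #{c | Odd #(labelClass S g c)} := by
    rw [card_compl, odd_sum_iff_odd_card_odd]
  have card_S := card_add_card_compl S
  have card_lt := hS.card_lt
  by_contra hlt
  rw [show #{c | Odd #(labelClass S g c)} = #S + d + 1 by omega] at odd_iff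
  rw [← card_S] at hpar
  grind

end Berge

/-! ### A large monochromatic matching -/

section Separation

variable {V κ ι : Type*}

lemma exists_threshold (g : V → ℕ) {X : Finset V} {b : ℕ} (hb : b ≤ #X) :
    ∃ s, b ≤ #{x ∈ X | g x ≤ s} ∧ #{x ∈ X | g x < s} ≤ b - 1 := by
  have exists_le : ∃ s, b ≤ #{x ∈ X | g x ≤ s} :=
    ⟨X.sup g, by rwa [filter_true_of_mem fun x hx => le_sup hx]⟩
  refine ⟨Nat.find exists_le, Nat.find_spec exists_le, ?_⟩
  rcases h : Nat.find exists_le with _ | s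
  · simp
  · simpa only [Nat.lt_succ_iff] using
      Nat.le_sub_one_of_lt (not_le.1 (Nat.find_min exists_le (h ▸ s.lt_succ_self)))

lemma exists_separated_of_card_fiber_le [Countable κ] (h : V → κ) {t : ℕ} {X Y : Finset V}
    (hfib : ∀ c, #{x ∈ X | h x = c} ≤ t) :
    ∃ X' ⊆ X, ∃ Y' ⊆ Y, (∀ x ∈ X', ∀ y ∈ Y', h x ≠ h y) ∧ #X ≤ 2 * (#X' + t) ∧ #Y ≤ 2 * #Y' := by
  -- Cut the labels at the median label of `X`, and keep the side with the larger part of `Y`.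
  obtain ⟨φ, hφ⟩ := Countable.exists_injective_nat κ
  obtain ⟨s, le_card_le, card_lt_le⟩ :=
    exists_threshold (fun v => φ (h v)) (X := X) (b := (#X + 1) / 2) (by omega)
  have card_eq_le : #{x ∈ X | φ (h x) = s} ≤ t := by
    by_cases hs : ∃ c, φ c = s
    · obtain ⟨c, rfl⟩ := hs
      simpa only [hφ.eq_iff] using hfib c
    · rw [filter_false_of_mem fun x _ hx => hs ⟨h x, hx⟩]
      simp
  have card_le_split : #{x ∈ X | φ (h x) ≤ s} ≤
      #{x ∈ X | φ (h x) < s} + #{x ∈ X | φ (h x) = s} := by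
    refine (card_le_card fun x hx => ?_).trans (card_union_le _ _)
    simpa only [← filter_or, ← le_iff_lt_or_eq] using hx
  have card_X := card_filter_add_card_filter_not (s := X) (fun x => φ (h x) ≤ s)
  have card_Y := card_filter_add_card_filter_not (s := Y) (fun y => φ (h y) ≤ s)
  by_cases hY : #Y ≤ 2 * #{y ∈ Y | φ (h y) ≤ s}
  · refine ⟨{x ∈ X | ¬ φ (h x) ≤ s}, filter_subset _ _, {y ∈ Y | φ (h y) ≤ s}, filter_subset _ _,
      fun x hx y hy hxy => ?_, by omega, hY⟩
    exact (mem_filter.1 hx).2 (hxy ▸ (mem_filter.1 hy).2)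
  · refine ⟨{x ∈ X | φ (h x) ≤ s}, filter_subset _ _, {y ∈ Y | ¬ φ (h y) ≤ s}, filter_subset _ _,
      fun x hx y hy hxy => ?_, by omega, by omega⟩
    exact (mem_filter.1 hy).2 (hxy ▸ (mem_filter.1 hx).2)

lemma exists_forall_separated_of_card_fiber_le [Countable κ] (I : Finset ι) (h : ι → V → κ) {t : ℕ}
    {X Y : Finset V} (hfib : ∀ i c, #{x ∈ X | h i x = c} ≤ t) :
    ∃ X' ⊆ X, ∃ Y' ⊆ Y, (∀ i ∈ I, ∀ x ∈ X', ∀ y ∈ Y', h i x ≠ h i y) ∧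
      #X ≤ 2 ^ #I * (#X' + 2 * t) ∧ #Y ≤ 2 ^ #I * #Y' := by
  induction I using Finset.induction_on with
  | empty => exact ⟨X, Subset.rfl, Y, Subset.rfl, by simp, by simp, by simp⟩
  | insert i I hi ih =>
    obtain ⟨X₁, hX₁, Y₁, hY₁, separated₁, card_X₁, card_Y₁⟩ := ih
    obtain ⟨X₂, hX₂, Y₂, hY₂, separated₂, card_X₂, card_Y₂⟩ :=
      exists_separated_of_card_fiber_le (h i) (X := X₁) (Y := Y₁) fun c =>
        (card_le_card (filter_subset_filter _ hX₁)).trans (hfib i c)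
    refine ⟨X₂, hX₂.trans hX₁, Y₂, hY₂.trans hY₁, fun j hj x hx y hy => ?_, ?_, ?_⟩
    · rcases mem_insert.1 hj with rfl | hj
      · exact separated₂ x hx y hy
      · exact separated₁ j hj x (hX₂ hx) y (hY₂ hy)
    · rw [card_insert_of_notMem hi, pow_succ, mul_assoc]
      exact card_X₁.trans (Nat.mul_le_mul_left _ (by omega))
    · rw [card_insert_of_notMem hi, pow_succ, mul_assoc]
      exact card_Y₁.trans (Nat.mul_le_mul_left _ card_Y₂)

end Separation

section Popular

variable {V : Type*}

lemma exists_subset_forall_rel {τ : Type*} [Fintype τ] (T : V → τ) (R : τ → τ → Prop)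
    {W : Finset V} {b : ℕ}
    (hR : ∀ X ⊆ W, ∀ Y ⊆ W, b ≤ #X → b ≤ #Y → ∃ x ∈ X, ∃ y ∈ Y, R (T x) (T y)) :
    ∃ P ⊆ W, #W ≤ #P + Fintype.card τ * b ∧ ∀ v ∈ P, ∀ w ∈ P, R (T v) (T w) := by
  let fiber : τ → Finset V := fun t => {v ∈ W | T v = t}
  refine ⟨{v ∈ W | b ≤ #(fiber (T v))}, filter_subset _ _, ?_, fun v hv w hw => ?_⟩
  · have unpopular_subset : {v ∈ W | ¬ b ≤ #(fiber (T v))} ⊆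
        ({t | ¬ b ≤ #(fiber t)} : Finset τ).biUnion fiber := fun v hv => by
      obtain ⟨hvW, hv⟩ := mem_filter.1 hv
      exact mem_biUnion.2 ⟨T v, by simpa using hv, by simp [fiber, hvW]⟩
    have card_unpopular_le : #{v ∈ W | ¬ b ≤ #(fiber (T v))} ≤ Fintype.card τ * b :=
      (card_le_card unpopular_subset).trans <|
        (card_biUnion_le_card_mul _ _ b fun t ht => by simp at ht; omega).trans
          (Nat.mul_le_mul_right b (card_le_univ _))
    have card_W := card_filter_add_card_filter_not (s := W) fun v => b ≤ #(fiber (T v))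
    omega
  · obtain ⟨x, hx, y, hy, hxy⟩ := hR (fiber (T v)) (filter_subset _ _) (fiber (T w))
      (filter_subset _ _) (mem_filter.1 hv).2 (mem_filter.1 hw).2
    rwa [(mem_filter.1 hx).2, (mem_filter.1 hy).2] at hxy

lemma exists_subset_or_two_mul_card_le_sum {K : Type*} [Fintype K] {A : K → Finset V}
    {P : Finset V} (hP : ∀ v ∈ P, ∀ w ∈ P, ∃ i, v ∈ A i ∧ w ∈ A i) :
    (∃ j, P ⊆ A j) ∨ 2 * #P ≤ ∑ i, #(A i) := by
  by_cases hcover : ∃ v ∈ P, #{i | v ∈ A i} ≤ 1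
  · obtain ⟨v, hv, hv_le⟩ := hcover
    obtain ⟨j, hj, -⟩ := hP v hv v hv
    refine Or.inl ⟨j, fun w hw => ?_⟩
    obtain ⟨i, hi, hwi⟩ := hP v hv w hw
    rwa [card_le_one.1 hv_le j (by simpa using hj) i (by simpa using hi)]
  · push Not at hcover
    refine Or.inr ?_
    calc 2 * #P = #P • 2 := by rw [smul_eq_mul, mul_comm]
      _ ≤ ∑ v ∈ P, #{i | v ∈ A i} := card_nsmul_le_sum _ _ _ hcover
      _ = ∑ i, #{v ∈ P | v ∈ A i} := sum_card_bipartiteAbove_eq_sum_card_bipartiteBelow _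
      _ ≤ ∑ i, #(A i) := sum_le_sum fun i _ => card_le_card fun v hv => (mem_filter.1 hv).2

end Popular

/-- The graph `G` has no bipartite hole of size `a`: any two disjoint sets of at least `a` vertices
are joined by an edge. -/
def NoHole {V : Type*} (G : SimpleGraph V) (a : ℕ) : Prop :=
  ∀ X Y : Finset V, a ≤ #X → a ≤ #Y → Disjoint X Y → ∃ x ∈ X, ∃ y ∈ Y, G.Adj x y

lemma NoHole.pos {V : Type*} {G : SimpleGraph V} {a : ℕ} (hole : NoHole G a) : 0 < a := by
  refine Nat.pos_of_ne_zero fun ha => ?_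
  obtain ⟨x, hx, -⟩ := hole ∅ ∅ (by simp [ha]) (by simp [ha]) (by simp)
  simp at hx

/-- The graph formed by the edges of `G` that have colour `i` under `c`. -/
def colourGraph {V K : Type*} (G : SimpleGraph V) (c : Sym2 V → K) (i : K) : SimpleGraph V where
  Adj x y := G.Adj x y ∧ c s(x, y) = i
  symm := ⟨fun _ _ h => ⟨h.1.symm, Sym2.eq_swap ▸ h.2⟩⟩
  loopless := ⟨fun _ h => h.1.ne rfl⟩

section BigVertices

variable {V : Type*} [Fintype V] {G : SimpleGraph V} {S : Finset V} {g : V → V} {a d q : ℕ}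

/-- The vertices outside `S` whose label class has more than `a` elements. -/
noncomputable def bigVertices (S : Finset V) (g : V → V) (a : ℕ) : Finset V :=
  {v | v ∉ S ∧ a < #(labelClass S g (g v))}

lemma mem_bigVertices {v : V} :
    v ∈ bigVertices S g a ↔ v ∉ S ∧ a < #(labelClass S g (g v)) := by
  simp [bigVertices]

lemma card_big_labels_le (ha : 0 < a) (hq : Fintype.card V ≤ q * a) :
    #{c | a < #(labelClass S g c)} ≤ q := by
  have classes_disjoint : ∀ c c', c ≠ c' → Disjoint (labelClass S g c) (labelClass S g c') :=
    fun c c' hc => disjoint_left.2 fun v hv hv' =>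
      hc ((mem_labelClass.1 hv).2.symm.trans (mem_labelClass.1 hv').2)
  refine Nat.le_of_mul_le_mul_right (le_trans ?_ hq) ha
  calc #{c | a < #(labelClass S g c)} * a
      ≤ ∑ c with a < #(labelClass S g c), #(labelClass S g c) :=
        card_nsmul_le_sum _ _ _ fun c hc => (mem_filter.1 hc).2.le
    _ = #(({c | a < #(labelClass S g c)} : Finset V).biUnion (labelClass S g)) :=
        (card_biUnion fun c _ c' _ => classes_disjoint c c').symm
    _ ≤ Fintype.card V := card_le_univ _

lemma IsBarrier.card_bigVertices_add_lt (hS : IsBarrier G d S g) (ha : 0 < a)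
    (hq : Fintype.card V ≤ q * a) :
    #(bigVertices S g a) + 2 * #S + d < Fintype.card V + q := by
  have odd_labels_subset : ({c | Odd #(labelClass S g c)} : Finset V) ⊆
      ({c | a < #(labelClass S g c)} : Finset V) ∪ (S ∪ bigVertices S g a)ᶜ.image g := by
    intro c hc
    obtain ⟨v, hv⟩ := card_pos.1 (mem_filter.1 hc).2.pos
    obtain ⟨hvS, rfl⟩ := mem_labelClass.1 hv
    by_cases hbig : a < #(labelClass S g (g v))
    · exact mem_union_left _ (by simpa using hbig)
    · exact mem_union_right _ (mem_image_of_mem g (by simp [hvS, mem_bigVertices, hbig]))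
  have card_odd_le := (card_le_card odd_labels_subset).trans ((card_union_le _ _).trans
    (add_le_add (card_big_labels_le ha hq) card_image_le))
  have disjoint_big : Disjoint S (bigVertices S g a) :=
    disjoint_right.2 fun v hv => (mem_bigVertices.1 hv).1
  have card_V := card_add_card_compl (S ∪ bigVertices S g a)
  rw [card_union_of_disjoint disjoint_big] at card_V
  have := hS.card_lt
  omega

/-- The label of `v`, except that every big vertex gets a label of its own, so that no label is
shared by more than `a` vertices outside `S`. -/
noncomputable def refinedLabel (S : Finset V) (g : V → V) (a : ℕ) (v : V) : V ⊕ V :=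
  if v ∈ bigVertices S g a then Sum.inr v else Sum.inl (g v)

lemma card_refinedLabel_eq_le (ha : 0 < a) {X : Finset V} (hX : ∀ x ∈ X, x ∉ S) (l : V ⊕ V) :
    #{x ∈ X | refinedLabel S g a x = l} ≤ a := by
  rcases Finset.eq_empty_or_nonempty {x ∈ X | refinedLabel S g a x = l} with h | ⟨x, hx⟩
  · simp [h]
  obtain ⟨hxX, rfl⟩ := mem_filter.1 hx
  by_cases hxb : x ∈ bigVertices S g a
  · refine (card_le_one.2 fun y hy z hz => ?_).trans ha
    have eq_of_label_eq : ∀ w, refinedLabel S g a w = refinedLabel S g a x → w = x := fun w hw => by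
      by_cases hwb : w ∈ bigVertices S g a <;> simp_all [refinedLabel]
    rw [eq_of_label_eq y (mem_filter.1 hy).2, eq_of_label_eq z (mem_filter.1 hz).2]
  · refine (card_le_card fun y hy => ?_).trans
      (not_lt.1 fun h => hxb (mem_bigVertices.2 ⟨hX x hxX, h⟩))
    obtain ⟨hyX, hxy⟩ := mem_filter.1 hy
    by_cases hyb : y ∈ bigVertices S g a
    · simp [refinedLabel, hyb, hxb] at hxy
    · exact mem_labelClass.2 ⟨hX y hyX, by simpa [refinedLabel, hyb, hxb] using hxy⟩

variable {K : Type*} [Fintype K] {c : Sym2 V → K} {S : K → Finset V} {g : K → V → V}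

lemma exists_mem_bigVertices_of_noHole (hole : NoHole G a)
    (hg : ∀ i x y, x ∉ S i → y ∉ S i → (colourGraph G c i).Adj x y → g i x = g i y)
    {X Y : Finset V} (hX : ∀ x ∈ X, ∀ i, x ∉ S i) (hY : ∀ y ∈ Y, ∀ i, y ∉ S i)
    (card_X : 2 ^ Fintype.card K * (3 * a) ≤ #X) (card_Y : 2 ^ Fintype.card K * (3 * a) ≤ #Y) :
    ∃ x ∈ X, ∃ y ∈ Y, ∃ i, x ∈ bigVertices (S i) (g i) a ∧ y ∈ bigVertices (S i) (g i) a := by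
  obtain ⟨X', hX', Y', hY', separated, card_X', card_Y'⟩ :=
    exists_forall_separated_of_card_fiber_le univ (fun i => refinedLabel (S i) (g i) a)
      (X := X) (Y := Y) (t := a) fun i l => by
        convert card_refinedLabel_eq_le hole.pos (fun x hx => hX x hx i) l
  have two_pow_pos : 0 < 2 ^ Fintype.card K := by positivity
  have le_X' : 3 * a ≤ #X' + 2 * a := Nat.le_of_mul_le_mul_left (card_X.trans card_X') two_pow_pos
  have le_Y' : 3 * a ≤ #Y' := Nat.le_of_mul_le_mul_left (card_Y.trans card_Y') two_pow_pos
  obtain ⟨x, hx, y, hy, hxy⟩ := hole X' Y' (by omega) (by omega)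
    (disjoint_left.2 fun v hv hv' => separated (c s(v, v)) (mem_univ _) v hv v hv' rfl)
  have hxS := hX x (hX' hx) (c s(x, y))
  have hyS := hY y (hY' hy) (c s(x, y))
  have label_eq := hg _ x y hxS hyS ⟨hxy, rfl⟩
  have big_iff : x ∈ bigVertices (S (c s(x, y))) (g (c s(x, y))) a ↔
      y ∈ bigVertices (S (c s(x, y))) (g (c s(x, y))) a := by
    simp [mem_bigVertices, hxS, hyS, label_eq]
  by_cases hbig : y ∈ bigVertices (S (c s(x, y))) (g (c s(x, y))) a
  · exact ⟨x, hX' hx, y, hY' hy, _, big_iff.2 hbig, hbig⟩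
  · refine absurd ?_ (separated (c s(x, y)) (mem_univ _) x hx y hy)
    simp [refinedLabel, hbig, big_iff, label_eq]

lemma exists_large_pairwise_sharing_bigVertices (hole : NoHole G a)
    (hg : ∀ i x y, x ∉ S i → y ∉ S i → (colourGraph G c i).Adj x y → g i x = g i y) :
    ∃ P : Finset V,
      Fintype.card V ≤
        ∑ i, #(S i) + #P + 2 ^ Fintype.card K * (2 ^ Fintype.card K * (3 * a)) ∧
      ∀ v ∈ P, ∀ w ∈ P, ∃ i, v ∈ bigVertices (S i) (g i) a ∧ w ∈ bigVertices (S i) (g i) a := by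
  have notMem_of_mem : ∀ {X : Finset V}, X ⊆ (univ.biUnion S)ᶜ → ∀ x ∈ X, ∀ i, x ∉ S i :=
    fun hX x hx i hi => mem_compl.1 (hX hx) (mem_biUnion.2 ⟨i, mem_univ i, hi⟩)
  obtain ⟨P, -, card_le, hP⟩ := exists_subset_forall_rel
    (fun v => ({i | v ∈ bigVertices (S i) (g i) a} : Finset K))
    (fun s t => ∃ i, i ∈ s ∧ i ∈ t) (W := (univ.biUnion S)ᶜ)
    fun X hX Y hY card_X card_Y => by
      simpa only [mem_filter_univ] using exists_mem_bigVertices_of_noHole hole hg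
        (notMem_of_mem hX) (notMem_of_mem hY) card_X card_Y
  refine ⟨P, ?_, by simpa using hP⟩
  have card_V := card_add_card_compl (univ.biUnion S)
  have card_union_le : #(univ.biUnion S) ≤ ∑ i, #(S i) := card_biUnion_le
  rw [Fintype.card_finset] at card_le
  omega

lemma sum_add_lt_of_forall_add_two_mul_lt [Nonempty K] {A S : K → ℕ} {P k : ℕ}
    (hAS : ∀ i, A i + 2 * S i < 2 * k + q) (hP : (∃ j, P ≤ A j) ∨ 2 * P ≤ ∑ i, A i) :
    ∑ i, S i + P < (Fintype.card K + 1) * k + Fintype.card K * q := by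
  rcases hP with ⟨j, hj⟩ | hP
  · have hj_lt := hAS j
    have sum_erase_le : ∑ i ∈ univ.erase j, S i ≤ (Fintype.card K - 1) * (k + q) := by
      rw [← card_univ, ← card_erase_of_mem (mem_univ j), ← smul_eq_mul]
      exact sum_le_card_nsmul _ _ _ fun i _ => by have := hAS i; omega
    obtain ⟨s, hs⟩ := Nat.exists_eq_succ_of_ne_zero (Fintype.card_ne_zero (α := K))
    rw [hs, Nat.succ_sub_one] at sum_erase_le
    rw [← add_sum_erase _ _ (mem_univ j), hs]
    linarith
  · have sum_lt : ∑ i, (A i + 2 * S i) < ∑ _i : K, (2 * k + q) :=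
      sum_lt_sum_of_nonempty univ_nonempty fun i _ => hAS i
    rw [sum_add_distrib, ← mul_sum, sum_const, card_univ, smul_eq_mul] at sum_lt
    linarith [Nat.zero_le (Fintype.card K * q)]

theorem exists_isMatchingInvolution_colourGraph {k m : ℕ} (hole : NoHole G a)
    (card_V : Fintype.card V = 2 * m) (hk : k ≤ m) (hq : 2 * m ≤ q * a)
    (hm : (Fintype.card K + 1) * k + Fintype.card K * q +
      2 ^ Fintype.card K * (2 ^ Fintype.card K * (3 * a)) ≤ 2 * m) :
    ∃ i f, IsMatchingInvolution (colourGraph G c i) f ∧ #{v | f v = v} ≤ 2 * m - 2 * k := by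
  by_contra! hcon
  choose S g hS using fun i => exists_isBarrier (2 * m - 2 * k)
    (by rw [card_V]; exact ⟨m + (m - k), by omega⟩) (hcon i)
  have big_bound : ∀ i, #(bigVertices (S i) (g i) a) + 2 * #(S i) < 2 * k + q := fun i => by
    have := (hS i).card_bigVertices_add_lt hole.pos (by rwa [card_V])
    omega
  obtain ⟨P, card_P, hP⟩ :=
    exists_large_pairwise_sharing_bigVertices hole fun i => (hS i).label_eq
  have remainder_pos : 0 < 2 ^ Fintype.card K * (2 ^ Fintype.card K * (3 * a)) := by
    have := hole.pos
    positivity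
  obtain ⟨v⟩ : Nonempty V := Fintype.card_pos_iff.1 (by omega)
  have : Nonempty K := ⟨c s(v, v)⟩
  have sum_lt := sum_add_lt_of_forall_add_two_mul_lt big_bound
    ((exists_subset_or_two_mul_card_le_sum hP).imp_left fun ⟨j, hj⟩ => ⟨j, card_le_card hj⟩)
  omega

end BigVertices

/-! ### Extending a matching to a perfect matching -/

section Pseudorandom

variable {V : Type*} {G : SimpleGraph V} {a D κ : ℕ} {S U X : Finset V} {mate : V → V}

lemma NoHole.exists_label_card_ne_add_two_le {L : Type*} [Countable L] (hole : NoHole G a)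
    {g : V → L} {Z : Finset V} (hg : ∀ x ∈ Z, ∀ y ∈ Z, G.Adj x y → g x = g y) (hZ : a ≤ #Z) :
    ∃ t, #{x ∈ Z | g x ≠ t} + 2 ≤ 2 * a := by
  -- Fewer than `a` vertices lie below the threshold label, and fewer than `a` lie above it.
  have a_pos := hole.pos
  obtain ⟨φ, hφ⟩ := Countable.exists_injective_nat L
  obtain ⟨s, le_card_le, card_lt_le⟩ := exists_threshold (fun v => φ (g v)) hZ
  have card_gt_lt : #{x ∈ Z | s < φ (g x)} < a := by
    by_contra! le_card_gt
    obtain ⟨x, hx, y, hy, hxy⟩ := hole _ _ le_card_le le_card_gt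
      (disjoint_filter.2 fun _ _ h => not_lt.2 h)
    obtain ⟨hxZ, hxs⟩ := mem_filter.1 hx
    obtain ⟨hyZ, hys⟩ := mem_filter.1 hy
    rw [hg x hxZ y hyZ hxy] at hxs
    exact hxs.not_gt hys
  obtain ⟨x, -, hxs⟩ : ∃ x ∈ Z, φ (g x) = s := by
    by_contra! hne
    have := card_le_card (s := {x ∈ Z | φ (g x) ≤ s}) (t := {x ∈ Z | φ (g x) < s}) fun x hx =>
      mem_filter.2 ⟨(mem_filter.1 hx).1, (mem_filter.1 hx).2.lt_of_ne (hne x (mem_filter.1 hx).1)⟩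
    omega
  refine ⟨g x, ?_⟩
  have card_ne_le : #{y ∈ Z | g y ≠ g x} ≤ #{y ∈ Z | φ (g y) < s} + #{y ∈ Z | s < φ (g y)} := by
    refine (card_le_card fun y hy => ?_).trans (card_union_le _ _)
    rw [← filter_or]
    exact mem_filter.2 ⟨(mem_filter.1 hy).1, Nat.lt_or_gt_of_ne fun h =>
      (mem_filter.1 hy).2 (hφ (h.trans hxs.symm))⟩
  omega

/-- Every vertex has at least `κ` neighbours in `U`, or all its neighbours are in `U`. A matching is
completed to a perfect one by rematching a superset of a small core. -/
def IsCore (G : SimpleGraph V) (κ : ℕ) (U : Finset V) : Prop :=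
  ∀ v, κ ≤ #{w ∈ U | G.Adj v w} ∨ ∀ w, G.Adj v w → w ∈ U

lemma IsCore.mono {C : Finset V} (hC : IsCore G κ C) (hCU : C ⊆ U) : IsCore G κ U := fun v =>
  (hC v).imp (fun h => h.trans (card_le_card (filter_subset_filter _ hCU)))
    fun h w hw => hCU (h w hw)

lemma exists_deletion_of_forall_isMatchingInvolution_ne [Finite V] (hU : Even #U)
    (h : ¬ ∃ f, IsMatchingInvolution G f ∧ ∀ v, f v = v ↔ v ∉ U) :
    ∃ (S : Finset V) (g : V → V), (∀ x ∈ U \ S, ∀ y ∈ U \ S, G.Adj x y → g x = g y) ∧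
      #S + 2 ≤ #((U \ S).image g) := by
  have := Fintype.ofFinite V
  let H : SimpleGraph V := ((⊤ : G.Subgraph).induce U).spanningCoe
  have H_adj : ∀ {x y}, H.Adj x y ↔ x ∈ U ∧ y ∈ U ∧ G.Adj x y := by simp [H]
  have card_V := card_add_card_compl U
  have hpar : Even (Fintype.card V + #Uᶜ) := by
    rw [← card_V, add_assoc]
    exact hU.add (Even.add_self _)
  obtain ⟨S, g, hS⟩ := exists_isBarrier (G := H) #Uᶜ hpar fun f hf => by
    by_contra! card_le
    have compl_subset : Uᶜ ⊆ ({v | f v = v} : Finset V) := fun v hv => by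
      simpa using fun hne => mem_compl.1 hv (H_adj.1 (hf.adj v hne)).1
    refine h ⟨f, ⟨hf.involutive, fun v hv => (H_adj.1 (hf.adj v hv)).2.2⟩, fun v => ?_⟩
    simpa using (Finset.ext_iff.1 (eq_of_subset_of_card_le compl_subset card_le) v).symm
  refine ⟨S, g, fun x hx y hy hxy => ?_, ?_⟩
  · obtain ⟨hxU, hxS⟩ := mem_sdiff.1 hx
    obtain ⟨hyU, hyS⟩ := mem_sdiff.1 hy
    exact hS.label_eq x y hxS hyS (H_adj.2 ⟨hxU, hyU, hxy⟩)
  · have odd_subset : ({c | Odd #(labelClass S g c)} : Finset V) ⊆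
        (U \ S).image g ∪ Uᶜ.image g := fun c hc => by
      obtain ⟨v, hv⟩ := card_pos.1 (mem_filter.1 hc).2.pos
      obtain ⟨hvS, rfl⟩ := mem_labelClass.1 hv
      rw [← image_union]
      exact mem_image_of_mem g (by simp [hvS, em])
    have card_odd_le := (card_le_card odd_subset).trans ((card_union_le _ _).trans
      (add_le_add_right card_image_le _))
    have := hS.card_add_two_le hpar
    omega

variable [Fintype V]

/-- The vertex `v` has fewer than `κ` neighbours in `G`. -/
def IsLow (G : SimpleGraph V) (κ : ℕ) (v : V) : Prop :=
  #{w | G.Adj v w} < κ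

/-- The properties of a random graph that allow a matching to be completed to a perfect one: there
is no bipartite hole of size `a`, small sets span few edges (`D` bounds the average degree), no
vertex is isolated, and the vertices with fewer than `κ` neighbours are far apart. -/
structure IsPseudorandom (G : SimpleGraph V) (a D κ : ℕ) : Prop where
  noHole : NoHole G a
  sparse : ∀ Y : Finset V, Y.Nonempty → #Y ≤ 4 * a → ∑ y ∈ Y, #{z ∈ Y | G.Adj y z} < D * #Y
  exists_adj : ∀ v, ∃ w, G.Adj v w
  low_far : ∀ u v, u ≠ v → IsLow G κ u → IsLow G κ v → 4 < G.edist u v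

lemma IsCore.mem_of_isLow (hU : IsCore G κ U) {v w : V} (hv : IsLow G κ v) (hvw : G.Adj v w) :
    w ∈ U :=
  (hU v).elim (fun h => absurd (h.trans (card_le_card (filter_subset_filter _ (subset_univ U))))
    (not_le.2 hv)) fun h => h w hvw

lemma IsCore.le_card_of_not_isLow (hU : IsCore G κ U) {v : V} (hv : ¬ IsLow G κ v) :
    κ ≤ #{w ∈ U | G.Adj v w} :=
  (hU v).elim id fun h => (not_lt.1 hv).trans <| card_le_card fun w hw =>
    mem_filter.2 ⟨h w (mem_filter.1 hw).2, (mem_filter.1 hw).2⟩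

lemma IsPseudorandom.eq_of_isLow_of_walk (hG : IsPseudorandom G a D κ) {u v : V}
    (hu : IsLow G κ u) (hv : IsLow G κ v) (w : G.Walk u v) (hw : w.length ≤ 4) : u = v := by
  by_contra huv
  exact (hG.low_far u v huv hu hv).not_ge (w.edist_le.trans (by exact_mod_cast hw))

/-- The values of `mate` at the vertices with fewer than `κ` neighbours. -/
noncomputable def lowMates (G : SimpleGraph V) (κ : ℕ) (mate : V → V) : Finset V :=
  ({v | IsLow G κ v} : Finset V).image mate

lemma mem_lowMates {w : V} : w ∈ lowMates G κ mate ↔ ∃ v, IsLow G κ v ∧ mate v = w := by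
  simp [lowMates]

lemma IsPseudorandom.card_image_label_le {L : Type*} {g : V → L} (hG : IsPseudorandom G a D κ)
    (hU : IsCore G κ U) (hmate : ∀ v, G.Adj v (mate v))
    (hX : ∀ x ∈ X, ∀ y ∈ U, G.Adj x y → y ∈ S ∨ y ∈ X ∧ g y = g x) :
    #(X.image g) ≤ #{x ∈ X | ¬ IsLow G κ x} + #(S ∩ lowMates G κ mate) := by
  let lowX : Finset V := {x ∈ X | IsLow G κ x ∧ mate x ∈ S}
  have image_subset : X.image g ⊆ {x ∈ X | ¬ IsLow G κ x}.image g ∪ lowX.image g := by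
    refine image_subset_iff.2 fun x hx => ?_
    by_cases hlow : IsLow G κ x
    · rcases hX x hx (mate x) (hU.mem_of_isLow hlow (hmate x)) (hmate x) with hS | ⟨hX', hg⟩
      · exact mem_union_right _ (mem_image_of_mem g (mem_filter.2 ⟨hx, hlow, hS⟩))
      · have mate_not_low : ¬ IsLow G κ (mate x) := fun h =>
          (hmate x).ne (hG.eq_of_isLow_of_walk hlow h (hmate x).toWalk (by simp))
        rw [← hg]
        exact mem_union_left _ (mem_image_of_mem g (mem_filter.2 ⟨hX', mate_not_low⟩))
    · exact mem_union_left _ (mem_image_of_mem g (mem_filter.2 ⟨hx, hlow⟩))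
  have card_lowX_le : #lowX ≤ #(S ∩ lowMates G κ mate) := by
    refine card_le_card_of_injOn mate (fun x hx => ?_) fun x hx y hy hxy => ?_
    · obtain ⟨-, hlow, hS⟩ := mem_filter.1 hx
      exact mem_inter.2 ⟨hS, mem_lowMates.2 ⟨x, hlow, rfl⟩⟩
    · exact hG.eq_of_isLow_of_walk (mem_filter.1 hx).2.1 (mem_filter.1 hy).2.1
        (.cons (hxy ▸ hmate x) (.cons (hmate y).symm .nil)) (by simp)
  exact (card_le_card image_subset).trans ((card_union_le _ _).trans
    (add_le_add card_image_le (card_image_le.trans card_lowX_le)))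

lemma IsPseudorandom.le_card_adj_add_two {x : V} (hG : IsPseudorandom G a D κ)
    (hU : IsCore G κ U) (hmate : ∀ v, G.Adj v (mate v))
    (hX : ∀ y ∈ U, G.Adj x y → y ∈ S ∨ y ∈ X) (hx : ¬ IsLow G κ x) :
    κ ≤ #{z ∈ {y ∈ X | ¬ IsLow G κ y} ∪ S \ lowMates G κ mate | G.Adj x z} + 2 := by
  have card_low_le : #{w | IsLow G κ w ∧ G.Adj x w} ≤ 1 := by
    refine card_le_one.2 fun u hu v hv => ?_
    obtain ⟨hu_low, hxu⟩ := (mem_filter.1 hu).2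
    obtain ⟨hv_low, hxv⟩ := (mem_filter.1 hv).2
    exact hG.eq_of_isLow_of_walk hu_low hv_low (.cons hxu.symm (.cons hxv .nil)) (by simp)
  have card_lowMates_le : #{w ∈ lowMates G κ mate | G.Adj x w} ≤ 1 := by
    refine card_le_one.2 fun w hw z hz => ?_
    obtain ⟨hwm, hxw⟩ := mem_filter.1 hw
    obtain ⟨hzm, hxz⟩ := mem_filter.1 hz
    obtain ⟨u, hu, rfl⟩ := mem_lowMates.1 hwm
    obtain ⟨v, hv, rfl⟩ := mem_lowMates.1 hzm
    exact congrArg mate (hG.eq_of_isLow_of_walk hu hv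
      (.cons (hmate u) (.cons hxw.symm (.cons hxz (.cons (hmate v).symm .nil)))) (by simp))
  have neighbours_subset : {w ∈ U | G.Adj x w} ⊆
      {z ∈ {y ∈ X | ¬ IsLow G κ y} ∪ S \ lowMates G κ mate | G.Adj x z} ∪
        (({w | IsLow G κ w ∧ G.Adj x w} : Finset V) ∪ {w ∈ lowMates G κ mate | G.Adj x w}) := by
    intro w hw
    obtain ⟨hwU, hxw⟩ := mem_filter.1 hw
    have := hX w hwU hxw
    simp only [mem_union, mem_filter, mem_univ, true_and, mem_sdiff]
    tauto
  have card_union_le₁ := card_union_le {w | IsLow G κ w ∧ G.Adj x w}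
    {w ∈ lowMates G κ mate | G.Adj x w}
  have := (hU.le_card_of_not_isLow hx).trans
    ((card_le_card neighbours_subset).trans (card_union_le _ _))
  omega

lemma IsPseudorandom.two_mul_card_lt_card (hG : IsPseudorandom G a D κ)
    (hDκ : 2 * D + 2 ≤ κ) {Y : Finset V} (hY : Y.Nonempty) (hYa : #Y ≤ 4 * a) (hXY : X ⊆ Y)
    (hdeg : ∀ x ∈ X, κ ≤ #{z ∈ Y | G.Adj x z} + 2) : 2 * #X < #Y := by
  have sum_lt : #X * (2 * D) < D * #Y := by
    calc #X * (2 * D) ≤ ∑ x ∈ X, #{z ∈ Y | G.Adj x z} :=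
          card_nsmul_le_sum _ _ _ fun x hx => by have := hdeg x hx; omega
      _ ≤ ∑ y ∈ Y, #{z ∈ Y | G.Adj y z} := sum_le_sum_of_subset hXY
      _ < D * #Y := hG.sparse Y hY hYa
  exact lt_of_mul_lt_mul_left (by linarith) (Nat.zero_le D)

theorem IsPseudorandom.exists_isMatchingInvolution_fixing_compl (hG : IsPseudorandom G a D κ)
    (hDκ : 2 * D + 2 ≤ κ) (hU : IsCore G κ U) (hUa : 2 * a ≤ #U) (hU_even : Even #U) :
    ∃ f, IsMatchingInvolution G f ∧ ∀ v, f v = v ↔ v ∉ U := by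
  by_contra hcon
  obtain ⟨S, g, hg, card_labels⟩ := exists_deletion_of_forall_isMatchingInvolution_ne hU_even hcon
  have card_sdiff := le_card_sdiff S U
  have card_labels_le : #((U \ S).image g) ≤ #(U \ S) := card_image_le
  obtain ⟨t, ht⟩ := hG.noHole.exists_label_card_ne_add_two_le hg (by omega)
  choose mate hmate using hG.exists_adj
  set X : Finset V := {x ∈ U \ S | g x ≠ t}
  have hX : ∀ x ∈ X, ∀ y ∈ U, G.Adj x y → y ∈ S ∨ y ∈ X ∧ g y = g x := by
    intro x hx y hy hxy
    obtain ⟨hxUS, hxt⟩ := mem_filter.1 hx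
    by_cases hyS : y ∈ S
    · exact Or.inl hyS
    · have hyUS := mem_sdiff.2 ⟨hy, hyS⟩
      have label_eq := hg x hxUS y hyUS hxy
      exact Or.inr ⟨mem_filter.2 ⟨hyUS, label_eq ▸ hxt⟩, label_eq.symm⟩
  have labels_subset : (U \ S).image g ⊆ insert t (X.image g) := image_subset_iff.2 fun x hx => by
    by_cases hxt : g x = t
    · exact mem_insert.2 (Or.inl hxt)
    · exact mem_insert_of_mem (mem_image_of_mem g (mem_filter.2 ⟨hx, hxt⟩))
  have card_labels_le := (card_le_card labels_subset).trans (card_insert_le _ _)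
  have card_image_X := hG.card_image_label_le hU hmate hX
  have card_S := card_sdiff_add_card_inter S (lowMates G κ mate)
  set highX : Finset V := {x ∈ X | ¬ IsLow G κ x}
  have card_highX : #highX ≤ #X := card_filter_le _ _
  have card_Y := card_union_le highX (S \ lowMates G κ mate)
  have card_X_image : #(X.image g) ≤ #X := card_image_le
  have highX_pos : 0 < #highX := by omega
  have := hG.two_mul_card_lt_card hDκ ((card_pos.1 highX_pos).mono subset_union_left)
    (by omega) subset_union_left fun x hx => hG.le_card_adj_add_two hU hmate
      (fun y hy hxy => (hX x (mem_filter.1 hx).1 y hy hxy).imp_right And.left) (mem_filter.1 hx).2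
  omega

lemma NoHole.card_few_neighbours_lt (hole : NoHole G a) {W : Finset V} (hW : a * (κ + 2) ≤ #W) :
    #{v | #{w ∈ W | G.Adj v w} < κ} < a := by
  by_contra! hbig
  obtain ⟨B, hB, card_B⟩ := exists_subset_card_eq hbig
  let N : Finset V := B.biUnion fun v => {w ∈ W | G.Adj v w}
  have card_N : #N ≤ a * κ := card_B ▸ card_biUnion_le_card_mul _ _ _ fun v hv =>
    (mem_filter.1 (hB hv)).2.le
  have card_W_sdiff := le_card_sdiff N W
  have card_W_sdiff_sdiff := le_card_sdiff B (W \ N)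
  obtain ⟨x, hx, y, hy, hxy⟩ := hole B ((W \ N) \ B) card_B.ge
    (by rw [mul_add] at hW; omega) disjoint_sdiff
  obtain ⟨hyW, hyN⟩ := mem_sdiff.1 (mem_sdiff.1 hy).1
  exact hyN (mem_biUnion.2 ⟨x, hx, mem_filter.2 ⟨hyW, hxy⟩⟩)

lemma NoHole.exists_isCore (hole : NoHole G a) (hV : a * (κ + 2) ≤ Fintype.card V) :
    ∃ C, IsCore G κ C ∧ a * (κ + 2) ≤ #C ∧ #C ≤ a * (2 * κ + 2) := by
  obtain ⟨W, -, card_W⟩ := exists_subset_card_eq (s := (univ : Finset V)) hV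
  let B : Finset V := {v | #{w ∈ W | G.Adj v w} < κ}
  have exists_neighbours : ∀ v, ∃ R : Finset V, #R ≤ κ ∧
      (κ ≤ #{w ∈ R | G.Adj v w} ∨ ∀ w, G.Adj v w → w ∈ R) := fun v => by
    rcases le_total κ #{w | G.Adj v w} with h | h
    · obtain ⟨R, hR, card_R⟩ := exists_subset_card_eq h
      refine ⟨R, card_R.le, Or.inl ?_⟩
      rw [filter_true_of_mem fun w hw => (mem_filter.1 (hR hw)).2, card_R]
    · exact ⟨_, h, Or.inr fun w hw => by simpa using hw⟩
  choose R card_R hR using exists_neighbours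
  refine ⟨W ∪ B.biUnion R, fun v => ?_, card_W ▸ card_le_card subset_union_left, ?_⟩
  · by_cases hv : v ∈ B
    · have hRC : R v ⊆ W ∪ B.biUnion R := (subset_biUnion_of_mem R hv).trans subset_union_right
      exact (hR v).imp (fun h => h.trans (card_le_card (filter_subset_filter _ hRC)))
        fun h w hw => hRC (h w hw)
    · have hvW : κ ≤ #{w ∈ W | G.Adj v w} := by simpa [B] using hv
      exact Or.inl (hvW.trans (card_le_card (filter_subset_filter _ subset_union_left)))
  · have card_biUnion_le : #(B.biUnion R) ≤ a * κ :=
      (card_biUnion_le_card_mul _ _ κ fun v _ => card_R v).trans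
        (Nat.mul_le_mul_right _ (hole.card_few_neighbours_lt card_W.ge).le)
    have := card_union_le W (B.biUnion R)
    linarith

end Pseudorandom

section Extension

variable {V : Type*} {G : SimpleGraph V} {f h : V → V} {U : Finset V}

lemma even_card_of_involutive_of_ne {s : Finset V} (hf : Function.Involutive f)
    (hs : ∀ v ∈ s, f v ∈ s) (hne : ∀ v ∈ s, f v ≠ v) : Even #s := by
  have sum_eq_zero : ∑ _v ∈ s, (1 : ZMod 2) = 0 :=
    sum_involution (fun v _ => f v) (fun _ _ => by decide) (fun v hv _ => hne v hv) hs
      fun v _ => hf v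
  rw [sum_const, nsmul_one] at sum_eq_zero
  exact ZMod.natCast_eq_zero_iff_even.1 sum_eq_zero

lemma IsMatchingInvolution.ite (hf : IsMatchingInvolution G f) (hh : IsMatchingInvolution G h)
    (hfU : ∀ v ∈ U, f v ∈ U) (hhU : ∀ v, h v = v ↔ v ∉ U) :
    IsMatchingInvolution G fun v => if v ∈ U then h v else f v where
  involutive v := by
    by_cases hv : v ∈ U
    · have hhv : h v ∈ U := by
        by_contra hhv
        have := (hhU (h v)).2 hhv
        rw [hh.involutive] at this
        exact (hhU v).1 this.symm hv
      simp [hv, hhv, hh.involutive v]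
    · have hfv : f v ∉ U := fun hfv => hv (hf.involutive v ▸ hfU _ hfv)
      simp [hv, hfv, hf.involutive v]
  adj v hv := by
    by_cases hvU : v ∈ U
    · simp only [hvU, if_true] at hv ⊢
      exact hh.adj v hv
    · simp only [hvU, if_false] at hv ⊢
      exact hf.adj v hv

/-- The perfect matching of `G` whose edges join each `v` to `f v`. -/
def IsMatchingInvolution.toSubgraph (hf : IsMatchingInvolution G f) (hne : ∀ v, f v ≠ v) :
    G.Subgraph where
  verts := Set.univ
  Adj x y := f x = y
  adj_sub := fun {x _} h => h ▸ hf.adj x (hne x)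
  edge_vert := fun _ => trivial
  symm := ⟨fun x _ h => h ▸ hf.involutive x⟩

lemma IsMatchingInvolution.isPerfectMatching_toSubgraph (hf : IsMatchingInvolution G f)
    (hne : ∀ v, f v ≠ v) : (hf.toSubgraph hne).IsPerfectMatching :=
  ⟨fun v _ => ⟨f v, rfl, fun _ h => Eq.symm h⟩, fun _ => trivial⟩

lemma IsMatchingInvolution.card_le_two_mul_ncard [Finite V]
    (hf : IsMatchingInvolution G f) (hne : ∀ v, f v ≠ v) {A : Finset V} {E : Set (Sym2 V)}
    (hA : ∀ v ∈ A, s(v, f v) ∈ E) :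
    #A ≤ 2 * {e ∈ (hf.toSubgraph hne).edgeSet | e ∈ E}.ncard := by
  have card_le_image : #A ≤ 2 * #(A.image fun v => s(v, f v)) := by
    refine card_le_mul_card_image A 2 fun e he => ?_
    obtain ⟨v, -, rfl⟩ := mem_image.1 he
    refine (card_le_card (t := {v, f v}) fun w hw => ?_).trans card_le_two
    have := (mem_filter.1 hw).2
    simp only [Sym2.eq_iff] at this
    simp only [mem_insert, mem_singleton]
    tauto
  refine card_le_image.trans (Nat.mul_le_mul_left 2 ?_)
  rw [← Set.ncard_coe_finset]
  refine Set.ncard_le_ncard (fun e he => ?_) (Set.toFinite _)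
  obtain ⟨v, hv, rfl⟩ := mem_image.1 (mem_coe.1 he)
  exact ⟨rfl, hA v hv⟩

/-- Every colouring of `G` with colours in `K` has a perfect matching with at least `b` edges of
the same colour. The colourings are defined on all pairs, but only edges of `G` matter. -/
def HasMonochromaticPerfectMatching (G : SimpleGraph V) (K : Type*) (b : ℝ) : Prop :=
  ∀ c : Sym2 V → K, ∃ i, ∃ M : G.Subgraph,
    M.IsPerfectMatching ∧ b ≤ ({e ∈ M.edgeSet | c e = i}.ncard : ℝ)

lemma HasMonochromaticPerfectMatching.mono_graph {H : SimpleGraph V} {K : Type*} {b : ℝ}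
    (hG : HasMonochromaticPerfectMatching G K b) (hGH : G ≤ H) :
    HasMonochromaticPerfectMatching H K b := fun c => by
  obtain ⟨i, M, hM, hb⟩ := hG c
  refine ⟨i, M.map (SimpleGraph.Hom.ofLE hGH), ⟨hM.1.map_ofLE hGH, fun v => ?_⟩, ?_⟩
  · simpa using hM.2 v
  · simpa using hb

lemma HasMonochromaticPerfectMatching.mono_bound {K : Type*} {b b' : ℝ}
    (hG : HasMonochromaticPerfectMatching G K b) (hb : b' ≤ b) :
    HasMonochromaticPerfectMatching G K b' := fun c =>
  let ⟨i, M, hM, hbM⟩ := hG c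
  ⟨i, M, hM, hb.trans hbM⟩

variable [Fintype V] {a D κ : ℕ}

theorem IsPseudorandom.exists_perfect_isMatchingInvolution (hG : IsPseudorandom G a D κ)
    (hDκ : 2 * D + 2 ≤ κ) (hV_even : Even (Fintype.card V)) (hV : a * (κ + 2) ≤ Fintype.card V)
    (hf : IsMatchingInvolution G f) :
    ∃ f', IsMatchingInvolution G f' ∧ (∀ v, f' v ≠ v) ∧ Fintype.card V ≤
      #{v | f v ≠ v ∧ f' v = f v} + #{v | f v = v} + 2 * (a * (2 * κ + 2)) := by
  obtain ⟨C, hC, le_card_C, card_C_le⟩ := hG.noHole.exists_isCore hV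
  let U : Finset V := ({v | f v = v} : Finset V) ∪ (C ∪ C.image f)
  have mem_U : ∀ {v}, v ∈ U ↔ f v = v ∨ v ∈ C ∨ ∃ w ∈ C, f w = v := by simp [U]
  have hfU : ∀ v ∈ U, f v ∈ U := fun v hv => by
    rcases mem_U.1 hv with h | h | ⟨w, hw, rfl⟩
    · rwa [h]
    · exact mem_U.2 (Or.inr (Or.inr ⟨v, h, rfl⟩))
    · exact mem_U.2 (Or.inr (Or.inl (by rwa [hf.involutive])))
  have hfU_compl : ∀ v ∈ Uᶜ, f v ∈ Uᶜ := fun v hv => by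
    simp only [mem_compl] at hv ⊢
    exact fun h => hv (hf.involutive v ▸ hfU _ h)
  have ne_of_notMem : ∀ v, v ∉ U → f v ≠ v := fun v hv h => hv (mem_U.2 (Or.inl h))
  have card_U := card_add_card_compl U
  have U_even : Even #U := by
    have := even_card_of_involutive_of_ne hf.involutive hfU_compl
      fun v hv => ne_of_notMem v (mem_compl.1 hv)
    rw [← card_U] at hV_even
    exact (Nat.even_add.1 hV_even).2 this
  have hCU : C ⊆ U := subset_union_left.trans subset_union_right
  obtain ⟨h, hh, hhU⟩ := hG.exists_isMatchingInvolution_fixing_compl hDκ (hC.mono hCU)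
    (by have := card_le_card hCU; linarith [Nat.zero_le (a * κ)]) U_even
  refine ⟨_, hf.ite hh hfU hhU, fun v => ?_, ?_⟩
  · by_cases hv : v ∈ U
    · simpa [hv] using fun hv' => (hhU v).1 hv' hv
    · simpa [hv] using ne_of_notMem v hv
  · have card_compl_le : #Uᶜ ≤ #{v | f v ≠ v ∧ (if v ∈ U then h v else f v) = f v} :=
      card_le_card fun v hv => by
        have hvU := mem_compl.1 hv
        simp [hvU, ne_of_notMem v hvU]
    have card_image_C : #(C.image f) ≤ #C := card_image_le
    have card_U_le := (card_union_le ({v | f v = v} : Finset V) (C ∪ C.image f)).trans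
      (add_le_add_right (card_union_le C (C.image f)) _)
    change #U ≤ _ at card_U_le
    omega

theorem IsPseudorandom.hasMonochromaticPerfectMatching {K : Type*} [Fintype K] {k m q : ℕ}
    (hG : IsPseudorandom G a D κ) (hDκ : 2 * D + 2 ≤ κ) (card_V : Fintype.card V = 2 * m)
    (hk : k ≤ m) (hq : 2 * m ≤ q * a)
    (hm : (Fintype.card K + 1) * k + Fintype.card K * q +
      2 ^ Fintype.card K * (2 ^ Fintype.card K * (3 * a)) ≤ 2 * m)
    (haκ : a * (κ + 2) ≤ 2 * m) :
    HasMonochromaticPerfectMatching G K (k - a * (2 * κ + 2)) := by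
  intro c
  obtain ⟨i, f, hf, card_fixed⟩ :=
    exists_isMatchingInvolution_colourGraph (c := c) hG.noHole card_V hk hq hm
  obtain ⟨f', hf', hne, card_le⟩ := hG.exists_perfect_isMatchingInvolution hDκ (by simp [card_V])
    (card_V ▸ haκ) ⟨hf.involutive, fun v hv => (hf.adj v hv).1⟩
  refine ⟨i, _, hf'.isPerfectMatching_toSubgraph hne, ?_⟩
  have card_common_le := hf'.card_le_two_mul_ncard hne (A := {v | f v ≠ v ∧ f' v = f v})
    (E := {e | c e = i}) fun v hv => by
      obtain ⟨hfv, hf'v⟩ := (mem_filter.1 hv).2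
      rw [hf'v]
      exact (hf.adj v hfv).2
  have le_ncard_add : k ≤ {e ∈ (hf'.toSubgraph hne).edgeSet | c e = i}.ncard +
      a * (2 * κ + 2) := by
    simp only [Set.mem_ofPred_eq] at card_common_le
    omega
  have : (k : ℝ) ≤ {e ∈ (hf'.toSubgraph hne).edgeSet | c e = i}.ncard + a * (2 * κ + 2) := by
    exact_mod_cast le_ncard_add
  linarith

end Extension

/-! ### Failure probabilities -/

section EdgesOfCompleteGraph

variable {V : Type*} [DecidableEq V]

/-- The set of potential edges between `X` and `Y`. -/
def edgesBetween (X Y : Finset V) : Finset (Sym2 V) :=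
  (X ×ˢ Y).image Sym2.mk.uncurry

/-- The set of potential edges with both ends in `Y`. -/
def edgesInside (Y : Finset V) : Finset (Sym2 V) :=
  Y.offDiag.image Sym2.mk.uncurry

lemma card_edgesBetween {X Y : Finset V} (h : Disjoint X Y) : #(edgesBetween X Y) = #X * #Y := by
  rw [edgesBetween, card_image_of_injOn, card_product]
  rintro ⟨x, y⟩ hxy ⟨x', y'⟩ hxy' heq
  simp only [coe_product, Set.mem_prod, mem_coe] at hxy hxy'
  obtain ⟨rfl, rfl⟩ | ⟨rfl, rfl⟩ := Sym2.eq_iff.1 heq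
  · rfl
  · exact absurd hxy'.2 (disjoint_left.1 h hxy.1)

variable [Fintype V]

/-- The set of potential edges at `v`. -/
def edgesAt (v : V) : Finset (Sym2 V) :=
  (⊤ : SimpleGraph V).incidenceFinset v

lemma edgesBetween_subset {X Y : Finset V} (h : Disjoint X Y) :
    edgesBetween X Y ⊆ (⊤ : SimpleGraph V).edgeFinset := by
  refine image_subset_iff.2 fun z hz => ?_
  simpa [Function.uncurry_def] using
    disjoint_iff_ne.1 h _ (mem_product.1 hz).1 _ (mem_product.1 hz).2

lemma edgesInside_subset (Y : Finset V) : edgesInside Y ⊆ (⊤ : SimpleGraph V).edgeFinset :=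
  image_subset_iff.2 fun z hz => by simpa [Function.uncurry_def] using (mem_offDiag.1 hz).2.2

lemma card_edgesAt (v : V) : #(edgesAt v) = Fintype.card V - 1 := by
  rw [edgesAt, SimpleGraph.card_incidenceFinset_eq_degree, SimpleGraph.complete_graph_degree]

lemma edgesAt_subset (v : V) : edgesAt v ⊆ (⊤ : SimpleGraph V).edgeFinset :=
  SimpleGraph.incidenceFinset_subset _ v

lemma card_edgesAt_union {u v : V} (huv : u ≠ v) :
    2 * Fintype.card V - 3 ≤ #(edgesAt u ∪ edgesAt v) := by
  have card_inter : #(edgesAt u ∩ edgesAt v) ≤ 1 := by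
    refine card_le_card (t := {s(u, v)}) fun e he => ?_
    simp only [edgesAt, mem_inter, SimpleGraph.mem_incidenceFinset] at he
    exact mem_singleton.2 (SimpleGraph.incidenceSet_inter_incidenceSet_subset _ huv he)
  have := card_union_add_card_inter (edgesAt u) (edgesAt v)
  rw [card_edgesAt, card_edgesAt] at this
  omega

lemma edgeFinset_inter_edgesAt (G : SimpleGraph V) (v : V) :
    G.edgeFinset ∩ edgesAt v = G.incidenceFinset v := by
  ext e
  have : e ∈ G.edgeSet → ¬ e.IsDiag := G.not_isDiag_of_mem_edgeSet
  simp only [edgesAt, mem_inter, SimpleGraph.mem_edgeFinset, SimpleGraph.mem_incidenceFinset,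
    SimpleGraph.incidenceSet, SimpleGraph.edgeSet_top, Set.mem_ofPred_eq, Set.mem_compl_iff,
    Sym2.mem_diagSet]
  tauto

lemma IsLow.card_edgeFinset_inter_edgesAt_le {G : SimpleGraph V} {κ : ℕ} {v : V}
    (hv : IsLow G κ v) : #(G.edgeFinset ∩ edgesAt v) ≤ κ := by
  rw [edgeFinset_inter_edgesAt, SimpleGraph.card_incidenceFinset_eq_degree,
    ← SimpleGraph.card_neighborFinset_eq_degree, SimpleGraph.neighborFinset_eq_filter]
  exact hv.le

lemma sum_card_adj_le (G : SimpleGraph V) (Y : Finset V) :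
    ∑ y ∈ Y, #{z ∈ Y | G.Adj y z} ≤ 2 * #(G.edgeFinset ∩ edgesInside Y) := by
  let arcs : Finset (V × V) := {z ∈ Y ×ˢ Y | G.Adj z.1 z.2}
  have fiber_le_two : ∀ e ∈ arcs.image Sym2.mk.uncurry,
      #{z ∈ arcs | Sym2.mk.uncurry z = e} ≤ 2 := fun e he => by
    obtain ⟨⟨a, b⟩, -, rfl⟩ := mem_image.1 he
    refine (card_le_card (t := {(a, b), (b, a)}) fun ⟨c, d⟩ hcd => ?_).trans card_le_two
    simpa using (mem_filter.1 hcd).2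
  calc ∑ y ∈ Y, #{z ∈ Y | G.Adj y z}
      = #arcs := by simp only [arcs, card_filter, sum_product]
    _ ≤ 2 * #(arcs.image Sym2.mk.uncurry) := card_le_mul_card_image _ _ fiber_le_two
    _ ≤ 2 * #(G.edgeFinset ∩ edgesInside Y) := by
        gcongr
        refine image_subset_iff.2 fun z hz => ?_
        obtain ⟨hzY, hadj⟩ := mem_filter.1 hz
        obtain ⟨hz₁, hz₂⟩ := mem_product.1 hzY
        exact mem_inter.2 ⟨SimpleGraph.mem_edgeFinset.2 hadj,
          mem_image_of_mem _ (mem_offDiag.2 ⟨hz₁, hz₂, hadj.ne⟩)⟩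

lemma sum_card_finsetWalkLength_le (G : SimpleGraph V) [DecidableRel G.Adj] (q : ℕ) (u : V) :
    ∑ v, #(G.finsetWalkLength q u v) ≤ Fintype.card V ^ q := by
  induction q generalizing u with
  | zero => simp [SimpleGraph.finsetWalkLength, apply_dite card]
  | succ q ih =>
    calc ∑ v, #(G.finsetWalkLength (q + 1) u v)
        ≤ ∑ v, ∑ w : G.neighborSet u, #(G.finsetWalkLength q w v) := by
          refine sum_le_sum fun v _ => card_biUnion_le.trans_eq ?_
          simp only [card_map]
      _ = ∑ w : G.neighborSet u, ∑ v, #(G.finsetWalkLength q w v) := sum_comm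
      _ ≤ ∑ _w : G.neighborSet u, Fintype.card V ^ q := sum_le_sum fun w _ => ih w
      _ ≤ Fintype.card V ^ (q + 1) := by
          rw [sum_const, card_univ, smul_eq_mul, pow_succ']
          gcongr
          exact Fintype.card_subtype_le _

/-- The paths of length `q` between distinct vertices of the complete graph on `V`, each paired
with its ends. -/
noncomputable def pathsOfLength (V : Type*) [Fintype V] [DecidableEq V] (q : ℕ) :
    Finset (Σ z : V × V, (⊤ : SimpleGraph V).Walk z.1 z.2) :=
  {j ∈ univ.sigma fun z => (⊤ : SimpleGraph V).finsetWalkLength q z.1 z.2 |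
    j.2.IsPath ∧ j.1.1 ≠ j.1.2}

lemma mem_pathsOfLength {q : ℕ} {j : Σ z : V × V, (⊤ : SimpleGraph V).Walk z.1 z.2} :
    j ∈ pathsOfLength V q ↔ j.2.length = q ∧ j.2.IsPath ∧ j.1.1 ≠ j.1.2 := by
  simp [pathsOfLength, SimpleGraph.mem_finsetWalkLength_iff]

lemma card_pathsOfLength_le (q : ℕ) : #(pathsOfLength V q) ≤ Fintype.card V ^ (q + 1) := by
  refine (card_filter_le _ _).trans ?_
  rw [card_sigma, Fintype.sum_prod_type]
  calc ∑ u : V, ∑ v, #((⊤ : SimpleGraph V).finsetWalkLength q u v)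
      ≤ ∑ _u : V, Fintype.card V ^ q := sum_le_sum fun u _ => sum_card_finsetWalkLength_le _ q u
    _ = Fintype.card V ^ (q + 1) := by simp [pow_succ']

end EdgesOfCompleteGraph

section FailureProbability

variable {n : ℕ} {p : ℝ}

lemma gnpProb_exists_isolated_le (hp₀ : 0 ≤ p) (hp₁ : p ≤ 1) :
    gnpProb n p (fun G => ∃ v, ∀ w, ¬ G.Adj v w) ≤ n * (1 - p) ^ (n - 1) := by
  calc gnpProb n p (fun G => ∃ v, ∀ w, ¬ G.Adj v w)
      ≤ gnpProb n p (fun G => ∃ v ∈ univ, Disjoint G.edgeFinset (edgesAt v)) := by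
        refine gnpProb_mono hp₀ hp₁ fun G ⟨v, hv⟩ => ⟨v, mem_univ v, ?_⟩
        rw [disjoint_iff_inter_eq_empty, edgeFinset_inter_edgesAt, ← card_eq_zero,
          SimpleGraph.card_incidenceFinset_eq_degree, SimpleGraph.degree_eq_zero]
        exact fun w => hv w
    _ ≤ ∑ v : Fin n, (1 - p) ^ #(edgesAt v) :=
        (gnpProb_exists_le hp₀ hp₁ _ _).trans <| sum_le_sum fun v _ =>
          gnpProb_disjoint_le hp₀ hp₁ (edgesAt_subset v)
    _ = n * (1 - p) ^ (n - 1) := by simp [card_edgesAt]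

lemma gnpProb_not_noHole_le (hp₀ : 0 ≤ p) (hp₁ : p ≤ 1) (a : ℕ) :
    gnpProb n p (fun G => ¬ NoHole G a) ≤ (n.choose a : ℝ) ^ 2 * (1 - p) ^ (a * a) := by
  let J : Finset (Finset (Fin n) × Finset (Fin n)) :=
    {z ∈ powersetCard a univ ×ˢ powersetCard a univ | Disjoint z.1 z.2}
  have mem_J : ∀ z, z ∈ J ↔ (#z.1 = a ∧ #z.2 = a) ∧ Disjoint z.1 z.2 := by simp [J]
  have card_J : #J ≤ n.choose a ^ 2 := (card_filter_le _ _).trans (by simp [sq])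
  have hole_event : ∀ G : SimpleGraph (Fin n), ¬ NoHole G a →
      ∃ z ∈ J, Disjoint G.edgeFinset (edgesBetween z.1 z.2) := fun G hG => by
    simp only [NoHole, not_forall] at hG
    obtain ⟨X, Y, hX, hY, hXY, hno⟩ := hG
    obtain ⟨X', hX', card_X'⟩ := exists_subset_card_eq hX
    obtain ⟨Y', hY', card_Y'⟩ := exists_subset_card_eq hY
    refine ⟨(X', Y'), (mem_J _).2 ⟨⟨card_X', card_Y'⟩, hXY.mono hX' hY'⟩,
      disjoint_right.2 fun e he heG => ?_⟩
    obtain ⟨⟨x, y⟩, hxy, rfl⟩ := mem_image.1 he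
    obtain ⟨hx, hy⟩ := mem_product.1 hxy
    exact hno ⟨x, hX' hx, y, hY' hy, SimpleGraph.mem_edgeFinset.1 heG⟩
  calc gnpProb n p (fun G => ¬ NoHole G a)
      ≤ ∑ z ∈ J, gnpProb n p fun G => Disjoint G.edgeFinset (edgesBetween z.1 z.2) :=
        (gnpProb_mono hp₀ hp₁ hole_event).trans (gnpProb_exists_le hp₀ hp₁ _ _)
    _ ≤ ∑ _z ∈ J, (1 - p) ^ (a * a) := sum_le_sum fun z hz => by
        obtain ⟨⟨card_X, card_Y⟩, hXY⟩ := (mem_J z).1 hz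
        have := gnpProb_disjoint_le hp₀ hp₁ (edgesBetween_subset hXY)
        rwa [card_edgesBetween hXY, card_X, card_Y] at this
    _ ≤ (n.choose a : ℝ) ^ 2 * (1 - p) ^ (a * a) := by
        rw [sum_const, nsmul_eq_mul]
        have := pow_nonneg (sub_nonneg.2 hp₁) (a * a)
        gcongr
        exact_mod_cast card_J

lemma gnpProb_exists_dense_le (hp₀ : 0 ≤ p) (hp₁ : p ≤ 1) (S : Finset ℕ) (d : ℕ) {θ : ℕ → ℝ}
    (hθ : ∀ s ∈ S, 1 ≤ θ s) :
    gnpProb n p (fun G => ∃ Y : Finset (Fin n), #Y ∈ S ∧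
        2 * d * #Y ≤ ∑ y ∈ Y, #{z ∈ Y | G.Adj y z}) ≤
      ∑ s ∈ S, n.choose s * ((θ s)⁻¹ ^ (d * s) * (1 - p + p * θ s) ^ s.choose 2) := by
  have dense_event : ∀ G : SimpleGraph (Fin n), (∃ Y : Finset (Fin n), #Y ∈ S ∧
      2 * d * #Y ≤ ∑ y ∈ Y, #{z ∈ Y | G.Adj y z}) → ∃ s ∈ S, ∃ Y ∈ powersetCard s univ,
        d * s ≤ #(G.edgeFinset ∩ edgesInside Y) := fun G ⟨Y, hY, hdense⟩ => by
    refine ⟨#Y, hY, Y, mem_powersetCard.2 ⟨subset_univ Y, rfl⟩, ?_⟩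
    have := hdense.trans (sum_card_adj_le G Y)
    rw [mul_assoc] at this
    omega
  refine (gnpProb_mono hp₀ hp₁ dense_event).trans <| (gnpProb_exists_le hp₀ hp₁ _ _).trans <|
    sum_le_sum fun s hs => (gnpProb_exists_le hp₀ hp₁ _ _).trans ?_
  calc ∑ Y ∈ powersetCard s univ,
        gnpProb n p (fun G => d * s ≤ #(G.edgeFinset ∩ edgesInside Y))
      ≤ ∑ Y ∈ powersetCard s (univ : Finset (Fin n)),
          (θ s)⁻¹ ^ (d * s) * (1 - p + p * θ s) ^ s.choose 2 := sum_le_sum fun Y hY => by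
        have := gnpProb_le_card_inter_le hp₀ hp₁ (edgesInside_subset Y) (hθ s hs) (d * s)
        rwa [edgesInside, Sym2.card_image_offDiag, (mem_powersetCard.1 hY).2] at this
    _ = n.choose s * ((θ s)⁻¹ ^ (d * s) * (1 - p + p * θ s) ^ s.choose 2) := by simp

lemma gnpProb_isLow_isLow_walk_le (hp₀ : 0 ≤ p) (hp₁ : p ≤ 1) (κ : ℕ) {u v : Fin n}
    (huv : u ≠ v) {w : (⊤ : SimpleGraph (Fin n)).Walk u v} (hw : w.IsPath) :
    gnpProb n p (fun G => (∀ e ∈ w.edges, e ∈ G.edgeSet) ∧ IsLow G κ u ∧ IsLow G κ v) ≤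
      16 ^ κ * (p ^ w.length * (1 - 3 / 4 * p) ^ (2 * n - 3 - w.length)) := by
  let Q := w.edges.toFinset
  let T := (edgesAt u ∪ edgesAt v) \ Q
  have card_Q : #Q = w.length := by
    rw [List.toFinset_card_of_nodup hw.isTrail.edges_nodup, SimpleGraph.Walk.length_edges]
  have card_T : 2 * n - 3 - w.length ≤ #T := by
    have h₁ := card_edgesAt_union huv
    have h₂ := le_card_sdiff Q (edgesAt u ∪ edgesAt v)
    rw [Fintype.card_fin] at h₁
    rw [card_Q] at h₂
    exact (Nat.sub_le_sub_right h₁ _).trans h₂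
  have hQ : Q ⊆ (⊤ : SimpleGraph (Fin n)).edgeFinset := fun e he =>
    SimpleGraph.mem_edgeFinset.2 (w.edges_subset_edgeSet (List.mem_toFinset.1 he))
  have hT : T ⊆ (⊤ : SimpleGraph (Fin n)).edgeFinset :=
    sdiff_subset.trans (union_subset (edgesAt_subset u) (edgesAt_subset v))
  have event : ∀ G : SimpleGraph (Fin n),
      ((∀ e ∈ w.edges, e ∈ G.edgeSet) ∧ IsLow G κ u ∧ IsLow G κ v) →
        Q ⊆ G.edgeFinset ∧ #(G.edgeFinset ∩ T) ≤ 2 * κ := fun G ⟨hwG, hu, hv⟩ => by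
    refine ⟨fun e he => SimpleGraph.mem_edgeFinset.2 (hwG e (List.mem_toFinset.1 he)), ?_⟩
    have hinter : G.edgeFinset ∩ T ⊆ G.edgeFinset ∩ edgesAt u ∪ G.edgeFinset ∩ edgesAt v := by
      rw [← inter_union_distrib_left]
      exact inter_subset_inter_left sdiff_subset
    have := (card_le_card hinter).trans (card_union_le _ _)
    have := hu.card_edgeFinset_inter_edgesAt_le
    have := hv.card_edgeFinset_inter_edgesAt_le
    omega
  calc gnpProb n p (fun G => (∀ e ∈ w.edges, e ∈ G.edgeSet) ∧ IsLow G κ u ∧ IsLow G κ v)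
      ≤ (1 / 4 : ℝ)⁻¹ ^ (2 * κ) * (p ^ #Q * (1 - p + p * (1 / 4)) ^ #T) :=
        (gnpProb_mono hp₀ hp₁ event).trans <| gnpProb_subset_and_card_inter_le_le hp₀ hp₁ hQ hT
          disjoint_sdiff (by norm_num) (by norm_num) (2 * κ)
    _ = 16 ^ κ * (p ^ w.length * (1 - 3 / 4 * p) ^ #T) := by
        rw [card_Q, pow_mul]
        ring_nf
    _ ≤ 16 ^ κ * (p ^ w.length * (1 - 3 / 4 * p) ^ (2 * n - 3 - w.length)) := by
        gcongr 16 ^ κ * (p ^ w.length * ?_)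
        exact pow_le_pow_of_le_one (by linarith) (by linarith) card_T

lemma exists_isPath_of_edist_le {V : Type*} {G : SimpleGraph V} {u v : V} {ℓ : ℕ}
    (h : G.edist u v ≤ ℓ) : ∃ w : (⊤ : SimpleGraph V).Walk u v,
      w.IsPath ∧ w.length ≤ ℓ ∧ ∀ e ∈ w.edges, e ∈ G.edgeSet := by
  obtain ⟨w, hw⟩ := SimpleGraph.exists_walk_of_edist_ne_top
    (ne_top_of_le_ne_top (ENat.natCast_ne_top ℓ) h)
  rw [← hw, Nat.cast_le] at h
  refine ⟨w.bypass.mapLe le_top, w.bypass_isPath.mapLe le_top, ?_, fun e he => ?_⟩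
  · simpa using w.length_bypass_le_length.trans h
  · rw [SimpleGraph.Walk.edges_mapLe_eq_edges] at he
    exact w.bypass.edges_subset_edgeSet he

lemma gnpProb_exists_isLow_isLow_edist_le (hp₀ : 0 ≤ p) (hp₁ : p ≤ 1) (κ ℓ : ℕ) :
    gnpProb n p (fun G => ∃ u v, u ≠ v ∧ IsLow G κ u ∧ IsLow G κ v ∧ G.edist u v ≤ ℓ) ≤
      ∑ q ∈ range (ℓ + 1), n * (n * p) ^ q * 16 ^ κ * (1 - 3 / 4 * p) ^ (2 * n - 3 - ℓ) := by
  have event : ∀ G : SimpleGraph (Fin n),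
      (∃ u v, u ≠ v ∧ IsLow G κ u ∧ IsLow G κ v ∧ G.edist u v ≤ ℓ) → ∃ q ∈ range (ℓ + 1),
        ∃ j ∈ pathsOfLength (Fin n) q, (∀ e ∈ j.2.edges, e ∈ G.edgeSet) ∧
          IsLow G κ j.1.1 ∧ IsLow G κ j.1.2 :=
    fun G ⟨u, v, huv, hu, hv, hdist⟩ => by
      obtain ⟨w, hw, hlen, hwG⟩ := exists_isPath_of_edist_le hdist
      exact ⟨w.length, by simpa [Nat.lt_succ_iff] using hlen, ⟨(u, v), w⟩,
        mem_pathsOfLength.2 ⟨rfl, hw, huv⟩, hwG, hu, hv⟩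
  refine (gnpProb_mono hp₀ hp₁ event).trans <| (gnpProb_exists_le hp₀ hp₁ _ _).trans <|
    sum_le_sum fun q hq => (gnpProb_exists_le hp₀ hp₁ _ _).trans ?_
  have base_nonneg : 0 ≤ 1 - 3 / 4 * p := by linarith
  calc _ ≤ ∑ j ∈ pathsOfLength (Fin n) q,
          (16 : ℝ) ^ κ * (p ^ q * (1 - 3 / 4 * p) ^ (2 * n - 3 - ℓ)) := by
        refine sum_le_sum fun j hj => ?_
        obtain ⟨rfl, hpath, hne⟩ := mem_pathsOfLength.1 hj
        refine (gnpProb_isLow_isLow_walk_le hp₀ hp₁ κ hne hpath).trans ?_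
        gcongr 16 ^ κ * (p ^ _ * ?_)
        exact pow_le_pow_of_le_one base_nonneg (by linarith)
          (Nat.sub_le_sub_left (Nat.lt_succ_iff.1 (mem_range.1 hq)) _)
    _ ≤ (n : ℝ) ^ (q + 1) * (16 ^ κ * (p ^ q * (1 - 3 / 4 * p) ^ (2 * n - 3 - ℓ))) := by
        rw [sum_const, nsmul_eq_mul]
        gcongr
        exact_mod_cast (card_pathsOfLength_le q).trans_eq (by rw [Fintype.card_fin])
    _ = n * (n * p) ^ q * 16 ^ κ * (1 - 3 / 4 * p) ^ (2 * n - 3 - ℓ) := by ring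

lemma gnpProb_not_isPseudorandom_le (hp₀ : 0 ≤ p) (hp₁ : p ≤ 1) (a d κ : ℕ) :
    gnpProb n p (fun G => ¬ IsPseudorandom G a (2 * d) κ) ≤
      gnpProb n p (fun G => ¬ NoHole G a) +
      (gnpProb n p (fun G => ∃ Y : Finset (Fin n), #Y ∈ Icc 1 (4 * a) ∧
        2 * d * #Y ≤ ∑ y ∈ Y, #{z ∈ Y | G.Adj y z}) +
      (gnpProb n p (fun G => ∃ v, ∀ w, ¬ G.Adj v w) +
      gnpProb n p fun G =>
        ∃ u v, u ≠ v ∧ IsLow G κ u ∧ IsLow G κ v ∧ G.edist u v ≤ (4 : ℕ))) := by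
  refine (gnpProb_mono hp₀ hp₁ fun G hG => ?_).trans <| (gnpProb_or_le hp₀ hp₁ _ _).trans <|
    add_le_add_right ((gnpProb_or_le hp₀ hp₁ _ _).trans <|
      add_le_add_right (gnpProb_or_le hp₀ hp₁ _ _) _) _
  by_contra! h
  obtain ⟨noHole, sparse, exists_adj, low_far⟩ := h
  exact hG ⟨noHole, fun Y hY card_Y => sparse Y (mem_Icc.2 ⟨hY.card_pos, card_Y⟩), exists_adj,
    fun u v huv hu hv => by exact_mod_cast low_far u v huv hu hv⟩

end FailureProbability

/-! ### Estimates in a fixed range of parameters -/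

lemma choose_le_exp_mul_div_pow (n : ℕ) {s : ℕ} (hs : 0 < s) :
    (n.choose s : ℝ) ≤ (Real.exp 1 * n / s) ^ s := by
  have hs' : (0 : ℝ) < s := by exact_mod_cast hs
  have pow_le : (s : ℝ) ^ s ≤ Real.exp s * s.factorial :=
    (div_le_iff₀ (by positivity)).1 (Real.pow_div_factorial_le_exp (s : ℝ) hs'.le s)
  calc (n.choose s : ℝ) ≤ n ^ s / s.factorial := Nat.choose_le_pow_div s n
    _ ≤ Real.exp s * n ^ s / s ^ s := by
      rw [div_le_div_iff₀ (by positivity) (by positivity)]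
      calc (n : ℝ) ^ s * s ^ s ≤ n ^ s * (Real.exp s * s.factorial) := by gcongr
        _ = Real.exp s * n ^ s * s.factorial := by ring
    _ = (Real.exp 1 * n / s) ^ s := by rw [div_pow, mul_pow, ← Real.exp_nat_mul, mul_one]

lemma one_sub_pow_le_exp_neg {p : ℝ} (hp : p ≤ 1) (k : ℕ) :
    (1 - p) ^ k ≤ Real.exp (-(k * p)) := by
  calc (1 - p) ^ k ≤ Real.exp (-p) ^ k :=
        pow_le_pow_left₀ (by linarith) (Real.one_sub_le_exp_neg p) k
    _ = Real.exp (-(k * p)) := by rw [← Real.exp_nat_mul, mul_neg]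

lemma sum_Icc_one_pow_le {δ : ℝ} (hδ₀ : 0 ≤ δ) (hδ : δ ≤ 1 / 2) (N : ℕ) :
    ∑ s ∈ Icc 1 N, δ ^ s ≤ 2 * δ := by
  have h := geom_sum_Ico_le_of_lt_one (m := 1) (n := N + 1) hδ₀ (by linarith)
  calc ∑ s ∈ Icc 1 N, δ ^ s ≤ δ ^ 1 / (1 - δ) := h
    _ ≤ 2 * δ := by rw [pow_one, div_le_iff₀ (by linarith)]; nlinarith

lemma mul_pow_le_exp {C y : ℝ} {k : ℕ} (hy₀ : 0 ≤ y) (hy : C * (k + 1).factorial ≤ y) :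
    C * y ^ k ≤ Real.exp y := by
  refine le_trans ?_ (Real.pow_div_factorial_le_exp y hy₀ (k + 1))
  rw [le_div_iff₀ (by positivity)]
  calc C * y ^ k * (k + 1).factorial = C * (k + 1).factorial * y ^ k := by ring
    _ ≤ y * y ^ k := by gcongr
    _ = y ^ (k + 1) := (pow_succ' y k).symm

/-- The range of parameters in which `G(n, p)` is shown to be pseudorandom: `x` is the sixth root
of `log n`, the expected degree `n * p` lies between `log n` and `2 * log n`, and up to rounding
`a = n / x ^ 4` (hole size), `d = 16 * x ^ 2` (local density) and `κ = x ^ 3` (low degree). -/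
structure Regime (n : ℕ) (p x : ℝ) (a d κ : ℕ) : Prop where
  le_x : 200 ≤ x
  n_eq : (n : ℝ) = Real.exp (x ^ 6)
  p_nonneg : 0 ≤ p
  p_le_one : p ≤ 1
  le_np : x ^ 6 ≤ n * p
  np_le : n * p ≤ 2 * x ^ 6
  le_a : n / x ^ 4 ≤ a
  a_le : a ≤ n / x ^ 4 + 1
  le_d : 16 * x ^ 2 + 1 ≤ d
  d_le : d ≤ 16 * x ^ 2 + 2
  le_κ : x ^ 3 ≤ κ
  κ_le : κ ≤ x ^ 3 + 1

section Regime

variable {n a d κ : ℕ} {p x : ℝ}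

lemma Regime.x_pos (h : Regime n p x a d κ) : 0 < x := by
  linarith [h.le_x]

lemma Regime.n_pos (h : Regime n p x a d κ) : (0 : ℝ) < n := by
  rw [h.n_eq]; positivity

lemma Regime.le_x_pow (h : Regime n p x a d κ) (k : ℕ) : 200 ^ k ≤ x ^ k :=
  pow_le_pow_left₀ (by norm_num) h.le_x k

lemma Regime.x_pow_four_le (h : Regime n p x a d κ) : x ^ 4 ≤ n / x ^ 4 := by
  have hx := h.x_pos
  rw [le_div_iff₀ (by positivity), h.n_eq]
  calc x ^ 4 * x ^ 4 = x ^ 8 := by ring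
    _ ≤ x ^ 12 := pow_le_pow_right₀ (by linarith [h.le_x]) (by norm_num)
    _ = 1 * (x ^ 6) ^ 2 := by ring
    _ ≤ Real.exp (x ^ 6) :=
      mul_pow_le_exp (by positivity) (le_trans (by norm_num [Nat.factorial]) (h.le_x_pow 6))

lemma Regime.a_le_two_mul (h : Regime n p x a d κ) : (a : ℝ) ≤ 2 * (n / x ^ 4) := by
  have := h.le_x_pow 4
  linarith [h.a_le, h.x_pow_four_le]

lemma Regime.a_pos (h : Regime n p x a d κ) : 0 < a := by
  have hx := h.x_pos
  have hn := h.n_pos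
  exact_mod_cast lt_of_lt_of_le (show (0 : ℝ) < n / x ^ 4 by positivity) h.le_a

lemma Regime.gnpProb_exists_isolated_le_exp (h : Regime n p x a d κ) :
    gnpProb n p (fun G => ∃ v, ∀ w, ¬ G.Adj v w) ≤ Real.exp (1 - (n * p - x ^ 6)) := by
  have sub_le : (n : ℝ) - 1 ≤ (n - 1 : ℕ) := by
    rw [sub_le_iff_le_add]; exact_mod_cast (by omega : n ≤ n - 1 + 1)
  calc gnpProb n p (fun G => ∃ v, ∀ w, ¬ G.Adj v w)
      ≤ n * (1 - p) ^ (n - 1) := gnpProb_exists_isolated_le h.p_nonneg h.p_le_one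
    _ ≤ Real.exp (x ^ 6) * Real.exp (-((n - 1 : ℕ) * p)) := by
      rw [← h.n_eq]; gcongr; exact one_sub_pow_le_exp_neg h.p_le_one _
    _ = Real.exp (x ^ 6 - (n - 1 : ℕ) * p) := by rw [← Real.exp_add, ← sub_eq_add_neg]
    _ ≤ Real.exp (1 - (n * p - x ^ 6)) := by
      apply Real.exp_le_exp.2
      nlinarith [h.p_nonneg, h.p_le_one]

lemma Regime.choose_a_le (h : Regime n p x a d κ) :
    (n.choose a : ℝ) ≤ (Real.exp 1 * x ^ 4) ^ a := by
  have hx := h.x_pos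
  have ha : (0 : ℝ) < a := by exact_mod_cast h.a_pos
  refine (choose_le_exp_mul_div_pow n h.a_pos).trans ?_
  rw [mul_div_assoc]
  gcongr
  exact (div_le_comm₀ ha (by positivity)).2 h.le_a

lemma Regime.one_sub_pow_a_mul_a_le (h : Regime n p x a d κ) :
    (1 - p) ^ (a * a) ≤ Real.exp (-x ^ 2) ^ a := by
  have hx := h.x_pos
  have sq_le : x ^ 2 ≤ a * p := by
    calc x ^ 2 = x ^ 6 / x ^ 4 := by field_simp
      _ ≤ n * p / x ^ 4 := by gcongr; exact h.le_np
      _ = n / x ^ 4 * p := by ring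
      _ ≤ a * p := mul_le_mul_of_nonneg_right h.le_a h.p_nonneg
  calc (1 - p) ^ (a * a) = ((1 - p) ^ a) ^ a := pow_mul _ _ _
    _ ≤ Real.exp (-(a * p)) ^ a := pow_le_pow_left₀
      (pow_nonneg (sub_nonneg.2 h.p_le_one) _) (one_sub_pow_le_exp_neg h.p_le_one a) _
    _ ≤ Real.exp (-x ^ 2) ^ a := by gcongr

lemma Regime.gnpProb_not_noHole_le_exp (h : Regime n p x a d κ) :
    gnpProb n p (fun G => ¬ NoHole G a) ≤ Real.exp (-(x ^ 2 / 2)) := by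
  have growth : Real.exp 2 * x ^ 8 ≤ Real.exp (x ^ 2 / 2) := by
    have exp_two : Real.exp 2 ≤ 8 := by
      calc Real.exp 2 = Real.exp 1 ^ 2 := by rw [← Real.exp_nat_mul]; norm_num
        _ ≤ 2.8 ^ 2 := by gcongr; linarith [Real.exp_one_lt_d9]
        _ ≤ 8 := by norm_num
    calc Real.exp 2 * x ^ 8 ≤ 8 * x ^ 8 := by gcongr
      _ = 128 * (x ^ 2 / 2) ^ 4 := by ring
      _ ≤ Real.exp (x ^ 2 / 2) := mul_pow_le_exp (by positivity) (by
        have := h.le_x_pow 2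
        norm_num [Nat.factorial]
        linarith)
  calc gnpProb n p (fun G => ¬ NoHole G a)
      ≤ (n.choose a : ℝ) ^ 2 * (1 - p) ^ (a * a) :=
        gnpProb_not_noHole_le h.p_nonneg h.p_le_one a
    _ ≤ ((Real.exp 1 * x ^ 4) ^ a) ^ 2 * Real.exp (-x ^ 2) ^ a := by
      have := pow_nonneg (sub_nonneg.2 h.p_le_one) (a * a)
      gcongr
      exacts [h.choose_a_le, h.one_sub_pow_a_mul_a_le]
    _ = (Real.exp 2 * x ^ 8 * Real.exp (-x ^ 2)) ^ a := by
      rw [pow_right_comm, ← mul_pow, mul_pow (Real.exp 1), ← Real.exp_nat_mul]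
      norm_num
      ring
    _ ≤ (Real.exp (x ^ 2 / 2) * Real.exp (-x ^ 2)) ^ a := by gcongr
    _ = Real.exp (-(x ^ 2 / 2)) ^ a := by rw [← Real.exp_add]; ring_nf
    _ ≤ Real.exp (-(x ^ 2 / 2)) :=
      pow_le_of_le_one (by positivity) (Real.exp_le_one_iff.2 (by nlinarith)) (ne_of_gt h.a_pos)

/-- The exponential tilt used in the Chernoff bound for the number of edges spanned by `s` vertices:
up to a constant, the inverse of the ratio between the mean and the forbidden value. -/
noncomputable def tilt (n : ℕ) (x : ℝ) (s : ℕ) : ℝ := 5 * Real.exp 1 * n / (s * x ^ 4)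

lemma Regime.exp_one_le_tilt (h : Regime n p x a d κ) {s : ℕ} (hs : s ∈ Icc 1 (4 * a)) :
    Real.exp 1 ≤ tilt n x s := by
  obtain ⟨hs₁, hs₂⟩ := mem_Icc.1 hs
  have hx := h.x_pos
  have : (0 : ℝ) < s := by exact_mod_cast hs₁
  have s_le : (s : ℝ) ≤ 4 * a := by exact_mod_cast hs₂
  have s_le' : (s : ℝ) ≤ 5 * n / x ^ 4 := by
    have := h.le_x_pow 4
    rw [mul_div_assoc]
    linarith [h.a_le, h.x_pow_four_le]
  rw [le_div_iff₀ (by positivity)] at s_le'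
  rw [tilt, le_div_iff₀ (by positivity)]
  calc Real.exp 1 * (s * x ^ 4) ≤ Real.exp 1 * (5 * n) := by gcongr
    _ = 5 * Real.exp 1 * n := by ring

lemma Regime.edgeFactor_le (h : Regime n p x a d κ) {s : ℕ} (hs : s ∈ Icc 1 (4 * a)) :
    (1 - p + p * tilt n x s) ^ s.choose 2 ≤ Real.exp (14 * x ^ 2) ^ s := by
  have hx := h.x_pos
  have hp := h.p_nonneg
  have hs₀ : (0 : ℝ) < s := by exact_mod_cast (mem_Icc.1 hs).1
  have tilt_pos : 0 < tilt n x s := (Real.exp_pos 1).trans_le (h.exp_one_le_tilt hs)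
  have mean_le : p * tilt n x s * s ≤ 28 * x ^ 2 := by
    calc p * tilt n x s * s = 5 * Real.exp 1 * (n * p) / x ^ 4 := by rw [tilt]; field_simp
      _ ≤ 5 * 2.8 * (2 * x ^ 6) / x ^ 4 := by
        have := h.np_le
        gcongr ?_ / _
        exact mul_le_mul (by linarith [Real.exp_one_lt_d9]) this (by positivity) (by norm_num)
      _ = 28 * x ^ 2 := by field_simp; norm_num
  have choose_le : (s.choose 2 : ℝ) ≤ s * s / 2 := by
    rw [Nat.cast_choose_two]; nlinarith
  calc (1 - p + p * tilt n x s) ^ s.choose 2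
      ≤ Real.exp (p * tilt n x s) ^ s.choose 2 := by
        have := mul_nonneg hp tilt_pos.le
        exact pow_le_pow_left₀ (by linarith [h.p_le_one])
          (by linarith [Real.add_one_le_exp (p * tilt n x s)]) _
    _ = Real.exp (s.choose 2 * (p * tilt n x s)) := (Real.exp_nat_mul _ _).symm
    _ ≤ Real.exp (s * (14 * x ^ 2)) := by
      apply Real.exp_le_exp.2
      calc s.choose 2 * (p * tilt n x s) ≤ s * s / 2 * (p * tilt n x s) := by gcongr
        _ = s * (p * tilt n x s * s) / 2 := by ring
        _ ≤ s * (28 * x ^ 2) / 2 := by gcongr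
        _ = s * (14 * x ^ 2) := by ring
    _ = Real.exp (14 * x ^ 2) ^ s := Real.exp_nat_mul _ _

lemma Regime.choose_le_tilt (h : Regime n p x a d κ) {s : ℕ} (hs : s ∈ Icc 1 (4 * a)) :
    (n.choose s : ℝ) ≤ (Real.exp (x ^ 2) * tilt n x s) ^ s := by
  have hx := h.x_pos
  have hs₀ : (0 : ℝ) < s := by exact_mod_cast (mem_Icc.1 hs).1
  have growth : x ^ 4 ≤ Real.exp (x ^ 2) := by
    calc x ^ 4 = 1 * (x ^ 2) ^ 2 := by ring
      _ ≤ Real.exp (x ^ 2) :=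
        mul_pow_le_exp (by positivity) (le_trans (by norm_num [Nat.factorial]) (h.le_x_pow 2))
  refine (choose_le_exp_mul_div_pow n (mem_Icc.1 hs).1).trans ?_
  gcongr
  calc Real.exp 1 * n / s ≤ 5 * (Real.exp 1 * n / s) := by
        linarith [show 0 ≤ Real.exp 1 * n / s by positivity]
    _ = x ^ 4 * tilt n x s := by rw [tilt]; field_simp
    _ ≤ Real.exp (x ^ 2) * tilt n x s := by rw [tilt]; gcongr

lemma Regime.tilt_inv_pow_le (h : Regime n p x a d κ) {s : ℕ} (hs : s ∈ Icc 1 (4 * a)) :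
    tilt n x s * (tilt n x s)⁻¹ ^ d ≤ Real.exp (-(16 * x ^ 2)) := by
  have tilt_ge := h.exp_one_le_tilt hs
  have tilt_pos : 0 < tilt n x s := (Real.exp_pos 1).trans_le tilt_ge
  obtain ⟨D, rfl⟩ : ∃ D, d = D + 1 := Nat.exists_eq_succ_of_ne_zero fun hd => by
    have := h.le_d
    rw [hd, Nat.cast_zero] at this
    nlinarith
  have le_D : 16 * x ^ 2 ≤ D := by have := h.le_d; push_cast at this; linarith
  calc tilt n x s * (tilt n x s)⁻¹ ^ (D + 1) = (tilt n x s)⁻¹ ^ D := by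
        rw [pow_succ', ← mul_assoc, mul_inv_cancel₀ tilt_pos.ne', one_mul]
    _ ≤ (Real.exp 1)⁻¹ ^ D := by gcongr
    _ = Real.exp (-D) := by rw [← Real.exp_neg, ← Real.exp_nat_mul, mul_neg_one]
    _ ≤ Real.exp (-(16 * x ^ 2)) := by gcongr

lemma Regime.gnpProb_exists_dense_le_exp (h : Regime n p x a d κ) :
    gnpProb n p (fun G => ∃ Y : Finset (Fin n), #Y ∈ Icc 1 (4 * a) ∧
      2 * d * #Y ≤ ∑ y ∈ Y, #{z ∈ Y | G.Adj y z}) ≤ 2 * Real.exp (-x ^ 2) := by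
  have one_le_tilt : ∀ s ∈ Icc 1 (4 * a), 1 ≤ tilt n x s := fun s hs =>
    (Real.one_le_exp zero_le_one).trans (h.exp_one_le_tilt hs)
  have exp_le_half : Real.exp (-x ^ 2) ≤ 1 / 2 := by
    have := h.le_x_pow 2
    rw [Real.exp_neg, one_div]
    exact inv_anti₀ two_pos (by linarith [Real.add_one_le_exp (x ^ 2)])
  refine (gnpProb_exists_dense_le h.p_nonneg h.p_le_one _ d one_le_tilt).trans
    (le_trans (sum_le_sum fun s hs => ?_)
      (sum_Icc_one_pow_le (Real.exp_nonneg _) exp_le_half (4 * a)))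
  have tilt_nonneg : 0 ≤ tilt n x s := zero_le_one.trans (one_le_tilt s hs)
  calc (n.choose s : ℝ) * ((tilt n x s)⁻¹ ^ (d * s) * (1 - p + p * tilt n x s) ^ s.choose 2)
      ≤ (Real.exp (x ^ 2) * tilt n x s) ^ s *
          ((tilt n x s)⁻¹ ^ (d * s) * Real.exp (14 * x ^ 2) ^ s) := by
        have := sub_nonneg.2 h.p_le_one
        have := mul_nonneg h.p_nonneg tilt_nonneg
        gcongr
        exacts [h.choose_le_tilt hs, h.edgeFactor_le hs]
    _ = (Real.exp (x ^ 2) * (tilt n x s * (tilt n x s)⁻¹ ^ d) * Real.exp (14 * x ^ 2)) ^ s := by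
      rw [pow_mul, ← mul_pow, ← mul_pow]
      ring_nf
    _ ≤ (Real.exp (x ^ 2) * Real.exp (-(16 * x ^ 2)) * Real.exp (14 * x ^ 2)) ^ s := by
      gcongr
      exact h.tilt_inv_pow_le hs
    _ = Real.exp (-x ^ 2) ^ s := by rw [← Real.exp_add, ← Real.exp_add]; ring_nf

lemma Regime.sixteen_pow_mul_le (h : Regime n p x a d κ) :
    n * 16 ^ κ * (1 - 3 / 4 * p) ^ (2 * n - 3 - 4) ≤ Real.exp (-(x ^ 6 / 4)) := by
  have hp := h.p_nonneg
  have sixteen_le : (16 : ℝ) ≤ Real.exp 3 := by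
    calc (16 : ℝ) ≤ 2.7 ^ 3 := by norm_num
      _ ≤ Real.exp 1 ^ 3 := by gcongr; linarith [Real.exp_one_gt_d9]
      _ = Real.exp 3 := by rw [← Real.exp_nat_mul]; norm_num
  have sub_le : 2 * (n : ℝ) - 7 ≤ (2 * n - 3 - 4 : ℕ) := by
    rw [sub_le_iff_le_add]; exact_mod_cast (by omega : 2 * n ≤ 2 * n - 3 - 4 + 7)
  have hx3 := h.le_x_pow 3
  calc n * 16 ^ κ * (1 - 3 / 4 * p) ^ (2 * n - 3 - 4)
      ≤ Real.exp (x ^ 6) * Real.exp 3 ^ κ *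
          Real.exp (-((2 * n - 3 - 4 : ℕ) * (3 / 4 * p))) := by
        have p_le : 3 / 4 * p ≤ 1 := by linarith [h.p_le_one]
        rw [← h.n_eq]
        gcongr
        exact one_sub_pow_le_exp_neg p_le _
    _ = Real.exp (x ^ 6 + κ * 3 - (2 * n - 3 - 4 : ℕ) * (3 / 4 * p)) := by
      rw [sub_eq_add_neg, Real.exp_add, Real.exp_add, Real.exp_nat_mul]
    _ ≤ Real.exp (-(x ^ 6 / 4)) := by
      have : (2 * (n : ℝ) - 7) * (3 / 4 * p) ≤ (2 * n - 3 - 4 : ℕ) * (3 / 4 * p) := by gcongr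
      apply Real.exp_le_exp.2
      nlinarith [h.le_np, h.κ_le, h.p_le_one]

lemma Regime.gnpProb_exists_isLow_isLow_le_exp (h : Regime n p x a d κ) :
    gnpProb n p (fun G => ∃ u v, u ≠ v ∧ IsLow G κ u ∧ IsLow G κ v ∧ G.edist u v ≤ (4 : ℕ)) ≤
      Real.exp (-(x ^ 6 / 8)) := by
  have growth : 80 * x ^ 24 ≤ Real.exp (x ^ 6 / 8) := by
    calc 80 * x ^ 24 = 327680 * (x ^ 6 / 8) ^ 4 := by ring
      _ ≤ Real.exp (x ^ 6 / 8) := mul_pow_le_exp (by have := h.x_pos; positivity) (by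
        have := h.le_x_pow 6
        norm_num [Nat.factorial]
        linarith)
  have base_nonneg : 0 ≤ 1 - 3 / 4 * p := by linarith [h.p_le_one]
  have one_le : 1 ≤ 2 * x ^ 6 := by linarith [h.le_x_pow 6]
  have np_nonneg : 0 ≤ n * p := mul_nonneg n.cast_nonneg h.p_nonneg
  refine (gnpProb_exists_isLow_isLow_edist_le h.p_nonneg h.p_le_one κ 4).trans ?_
  calc ∑ q ∈ range (4 + 1), n * (n * p) ^ q * 16 ^ κ * (1 - 3 / 4 * p) ^ (2 * n - 3 - 4)
      ≤ ∑ _q ∈ range (4 + 1),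
          n * (2 * x ^ 6) ^ 4 * 16 ^ κ * (1 - 3 / 4 * p) ^ (2 * n - 3 - 4) := by
        refine sum_le_sum fun q hq => ?_
        have : (n * p) ^ q ≤ (2 * x ^ 6) ^ 4 :=
          (pow_le_pow_left₀ np_nonneg h.np_le q).trans
            (pow_le_pow_right₀ one_le (Nat.lt_succ_iff.1 (mem_range.1 hq)))
        gcongr
    _ = 80 * x ^ 24 * (n * 16 ^ κ * (1 - 3 / 4 * p) ^ (2 * n - 3 - 4)) := by
      rw [sum_const, card_range, nsmul_eq_mul]
      push_cast
      ring
    _ ≤ Real.exp (x ^ 6 / 8) * Real.exp (-(x ^ 6 / 4)) := by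
      gcongr
      exact h.sixteen_pow_mul_le
    _ = Real.exp (-(x ^ 6 / 8)) := by rw [← Real.exp_add]; ring_nf

theorem Regime.gnpProb_not_isPseudorandom_le_exp (h : Regime n p x a d κ) :
    gnpProb n p (fun G => ¬ IsPseudorandom G a (2 * d) κ) ≤
      4 * Real.exp (-x) + Real.exp (1 - (n * p - x ^ 6)) := by
  have hx := h.le_x
  have hx2 : 2 * x ≤ x ^ 2 := by nlinarith
  have hx6 : 8 * x ≤ x ^ 6 := by
    calc 8 * x ≤ x ^ 5 * x := by gcongr; linarith [h.le_x_pow 5]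
      _ = x ^ 6 := by ring
  have hole : Real.exp (-(x ^ 2 / 2)) ≤ Real.exp (-x) := by gcongr; linarith
  have dense : Real.exp (-x ^ 2) ≤ Real.exp (-x) := by gcongr; linarith
  have low : Real.exp (-(x ^ 6 / 8)) ≤ Real.exp (-x) := by gcongr; linarith
  refine (gnpProb_not_isPseudorandom_le h.p_nonneg h.p_le_one a d κ).trans <|
    (add_le_add h.gnpProb_not_noHole_le_exp <| add_le_add h.gnpProb_exists_dense_le_exp <|
      add_le_add h.gnpProb_exists_isolated_le_exp h.gnpProb_exists_isLow_isLow_le_exp).trans ?_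
  linarith

lemma Regime.two_mul_two_mul_d_add_two_le (h : Regime n p x a d κ) : 2 * (2 * d) + 2 ≤ κ := by
  have : 2 * (2 * (d : ℝ)) + 2 ≤ κ := by
    nlinarith [h.le_x, h.d_le, h.le_κ, mul_le_mul_of_nonneg_right h.le_x (sq_nonneg x)]
  exact_mod_cast this

lemma Regime.div_pow_four_le (h : Regime n p x a d κ) : n / x ^ 4 ≤ n / x := by
  have hx := h.x_pos
  gcongr
  exact le_self_pow₀ (by linarith [h.le_x]) (by norm_num)

lemma Regime.one_le_div (h : Regime n p x a d κ) : 1 ≤ n / x := by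
  calc 1 ≤ x ^ 4 := one_le_pow₀ (by linarith [h.le_x])
    _ ≤ n / x ^ 4 := h.x_pow_four_le
    _ ≤ n / x := h.div_pow_four_le

lemma Regime.repairLoss_le (h : Regime n p x a d κ) :
    (a : ℝ) * (2 * κ + 2) ≤ 12 * (n / x) := by
  have hx := h.x_pos
  have hn := h.n_pos
  have := h.le_x_pow 3
  calc (a : ℝ) * (2 * κ + 2) ≤ 2 * (n / x ^ 4) * (6 * x ^ 3) := by
        gcongr
        exacts [h.a_le_two_mul, by linarith [h.κ_le]]
    _ = 12 * (n / x) := by field_simp; norm_num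

lemma Regime.colourLoss_le (h : Regime n p x a d κ) (r : ℕ) :
    ((r * ⌈x ^ 4⌉₊ + 2 ^ r * (2 ^ r * (3 * a)) : ℕ) : ℝ) ≤ (2 * r + 6 * 4 ^ r) * (n / x) := by
  have hx := h.x_pos
  have ceil_le : (⌈x ^ 4⌉₊ : ℝ) ≤ 2 * (n / x) := by
    have := Nat.ceil_lt_add_one (show 0 ≤ x ^ 4 by positivity)
    linarith [h.x_pow_four_le, h.div_pow_four_le, h.one_le_div]
  have a_le : (a : ℝ) ≤ 2 * (n / x) := by linarith [h.a_le_two_mul, h.div_pow_four_le]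
  calc ((r * ⌈x ^ 4⌉₊ + 2 ^ r * (2 ^ r * (3 * a)) : ℕ) : ℝ)
      = r * ⌈x ^ 4⌉₊ + 3 * 4 ^ r * a := by
        push_cast
        rw [show (4 : ℝ) = 2 * 2 by norm_num, mul_pow]
        ring
    _ ≤ r * (2 * (n / x)) + 3 * 4 ^ r * (2 * (n / x)) := by gcongr
    _ = (2 * r + 6 * 4 ^ r) * (n / x) := by ring

lemma Regime.a_mul_κ_add_two_le (h : Regime n p x a d κ) : a * (κ + 2) ≤ n := by
  have hx := h.x_pos
  have : (a : ℝ) * (κ + 2) ≤ n := by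
    calc (a : ℝ) * (κ + 2) ≤ a * (2 * κ + 2) := by
          gcongr
          linarith [show (0 : ℝ) ≤ κ by positivity]
      _ ≤ 12 * (n / x) := h.repairLoss_le
      _ ≤ x * (n / x) := by gcongr; linarith [h.le_x]
      _ = n := by field_simp
  exact_mod_cast this

lemma Regime.le_ceil_mul_a (h : Regime n p x a d κ) : n ≤ ⌈x ^ 4⌉₊ * a := by
  have hx := h.x_pos
  have : (n : ℝ) ≤ ⌈x ^ 4⌉₊ * a := by
    calc (n : ℝ) = x ^ 4 * (n / x ^ 4) := by field_simp
      _ ≤ ⌈x ^ 4⌉₊ * a := by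
        gcongr
        exacts [Nat.le_ceil _, h.le_a]
  exact_mod_cast this

end Regime

theorem IsPseudorandom.hasMonochromaticPerfectMatching_sub_loss {V K : Type*} [Fintype V]
    [Fintype K] [Nonempty K] {G : SimpleGraph V} {a D κ m q loss : ℕ}
    (hG : IsPseudorandom G a D κ) (hDκ : 2 * D + 2 ≤ κ) (card_V : Fintype.card V = 2 * m)
    (hq : 2 * m ≤ q * a)
    (hloss : Fintype.card K * q + 2 ^ Fintype.card K * (2 ^ Fintype.card K * (3 * a)) = loss)
    (hm : loss ≤ 2 * m) (haκ : a * (κ + 2) ≤ 2 * m) :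
    HasMonochromaticPerfectMatching G K
      (2 * m / (Fintype.card K + 1) - (loss + 1 + a * (2 * κ + 2))) := by
  let k := (2 * m - loss) / (Fintype.card K + 1)
  have r_pos : 0 < Fintype.card K := Fintype.card_pos
  have mul_k_le : (Fintype.card K + 1) * k ≤ 2 * m - loss := Nat.mul_div_le _ _
  have lt_mul_k : 2 * m - loss < (Fintype.card K + 1) * (k + 1) :=
    Nat.lt_mul_div_succ _ (Nat.succ_pos _)
  have two_k_le : 2 * k ≤ (Fintype.card K + 1) * k := by gcongr; omega
  have k_ge : 2 * m / ((Fintype.card K : ℝ) + 1) - loss ≤ k + 1 := by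
    have : (2 * m : ℝ) ≤ (Fintype.card K + 1) * (k + 1) + loss := by
      exact_mod_cast (by omega : 2 * m ≤ (Fintype.card K + 1) * (k + 1) + loss)
    rw [sub_le_iff_le_add, div_le_iff₀ (by positivity)]
    nlinarith [mul_nonneg loss.cast_nonneg (Fintype.card K).cast_nonneg (α := ℝ)]
  refine (hG.hasMonochromaticPerfectMatching hDκ card_V (k := k) (by omega) hq (by omega)
    haκ).mono_bound ?_
  linarith

theorem IsPseudorandom.hasMonochromaticPerfectMatching_of_regime {K : Type*} [Fintype K]
    [Nonempty K] {m a d κ : ℕ} {p x ε : ℝ} {G : SimpleGraph (Fin (2 * m))}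
    (hG : IsPseudorandom G a (2 * d) κ) (h : Regime (2 * m) p x a d κ)
    (hx : 13 + 2 * Fintype.card K + 6 * 4 ^ Fintype.card K ≤ x)
    (hεx : 13 + 2 * Fintype.card K + 6 * 4 ^ Fintype.card K ≤ ε * x) :
    HasMonochromaticPerfectMatching G K ((1 / (Fintype.card K + 1) - ε) * (2 * m)) := by
  have x_pos := h.x_pos
  have one_le_div := h.one_le_div
  have colourLoss_le := h.colourLoss_le (Fintype.card K)
  have mul_div : x * ((2 * m : ℕ) / x) = 2 * m := by field_simp; push_cast; ring
  have colourLoss_le_n := colourLoss_le.trans <| calc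
    (2 * Fintype.card K + 6 * 4 ^ Fintype.card K) * (((2 * m : ℕ) : ℝ) / x)
      ≤ x * ((2 * m : ℕ) / x) := by gcongr; linarith
    _ = 2 * m := mul_div
  refine (hG.hasMonochromaticPerfectMatching_sub_loss (K := K) h.two_mul_two_mul_d_add_two_le
    (Fintype.card_fin _) h.le_ceil_mul_a rfl (by exact_mod_cast colourLoss_le_n)
    h.a_mul_κ_add_two_le).mono_bound ?_
  have le_ε_mul := calc
    (13 + 2 * Fintype.card K + 6 * 4 ^ Fintype.card K) * (((2 * m : ℕ) : ℝ) / x)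
      ≤ ε * x * ((2 * m : ℕ) / x) := by gcongr
    _ = ε * (2 * m) := by rw [mul_assoc, mul_div]
  rw [sub_mul, one_div_mul_eq_div]
  linarith [h.repairLoss_le]

/-! ### Passage to the limit -/

open Filter

/-- The sixth root of `log n`, the scale `x` of `Regime`. -/
noncomputable def logSixthRoot (n : ℕ) : ℝ := Real.log n ^ (6⁻¹ : ℝ)

/-- The edge probability `p n` lowered to at most `2 * log n / n`. Having a perfect matching with
many edges of one colour is a monotone property, so it suffices to treat this probability. -/
noncomputable def truncatedProb (p : ℕ → ℝ) (n : ℕ) : ℝ := min (p n) (2 * Real.log n / n)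

lemma logSixthRoot_pow_six (n : ℕ) : logSixthRoot n ^ 6 = Real.log n :=
  mod_cast Real.rpow_inv_natCast_pow (Real.log_natCast_nonneg n) (by norm_num : 6 ≠ 0)

lemma tendsto_log_natCast_atTop : Tendsto (fun n : ℕ => Real.log n) atTop atTop :=
  Real.tendsto_log_atTop.comp tendsto_natCast_atTop_atTop

lemma tendsto_logSixthRoot_atTop : Tendsto logSixthRoot atTop atTop :=
  (tendsto_rpow_atTop (by norm_num)).comp tendsto_log_natCast_atTop

section Limit

variable {p : ℕ → ℝ}

lemma tendsto_mul_truncatedProb_sub_log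
    (hp : Tendsto (fun n : ℕ => n * p n - Real.log n) atTop atTop) :
    Tendsto (fun n : ℕ => n * truncatedProb p n - Real.log n) atTop atTop := by
  refine tendsto_atTop.2 fun b => ?_
  filter_upwards [tendsto_atTop.1 hp b, tendsto_atTop.1 tendsto_log_natCast_atTop b,
    eventually_gt_atTop 0] with n hnp hlog hn
  have hn₀ : (n : ℝ) ≠ 0 := by exact_mod_cast hn.ne'
  rcases min_choice (p n) (2 * Real.log n / n) with h | h
  · rwa [truncatedProb, h]
  · rw [truncatedProb, h, mul_div_cancel₀ _ hn₀]
    linarith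

lemma eventually_regime (hp₀ : ∀ n, 0 ≤ p n) (hp₁ : ∀ n, p n ≤ 1)
    (hp : Tendsto (fun n : ℕ => n * p n - Real.log n) atTop atTop) :
    ∀ᶠ n : ℕ in atTop, Regime n (truncatedProb p n) (logSixthRoot n)
      ⌈n / logSixthRoot n ^ 4⌉₊ (⌈16 * logSixthRoot n ^ 2⌉₊ + 1) ⌈logSixthRoot n ^ 3⌉₊ := by
  filter_upwards [tendsto_logSixthRoot_atTop.eventually_ge_atTop 200, eventually_gt_atTop 0,
    (tendsto_mul_truncatedProb_sub_log hp).eventually_ge_atTop 0] with n le_x hn hnp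
  have hn₀ : (0 : ℝ) < n := by exact_mod_cast hn
  have : 0 < logSixthRoot n := by linarith
  have := Real.log_natCast_nonneg n
  have ceil_le {y : ℝ} (hy : 0 ≤ y) : (⌈y⌉₊ : ℝ) ≤ y + 1 := (Nat.ceil_lt_add_one hy).le
  exact {
    le_x
    n_eq := by rw [logSixthRoot_pow_six, Real.exp_log hn₀]
    p_nonneg := le_min (hp₀ n) (by positivity)
    p_le_one := (min_le_left _ _).trans (hp₁ n)
    le_np := by rw [logSixthRoot_pow_six]; linarith
    np_le := calc
      n * truncatedProb p n ≤ n * (2 * Real.log n / n) := by gcongr; exact min_le_right _ _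
      _ = 2 * logSixthRoot n ^ 6 := by rw [logSixthRoot_pow_six]; field_simp
    le_a := Nat.le_ceil _
    a_le := ceil_le (by positivity)
    le_d := by push_cast; gcongr; exact Nat.le_ceil _
    d_le := by
      have := ceil_le (show 0 ≤ 16 * logSixthRoot n ^ 2 by positivity)
      push_cast
      linarith
    le_κ := Nat.le_ceil _
    κ_le := ceil_le (by positivity) }

/-- The bound of `Regime.gnpProb_not_isPseudorandom_le_exp` for `G(n, truncatedProb p n)`. -/
noncomputable def failureBound (p : ℕ → ℝ) (n : ℕ) : ℝ :=
  4 * Real.exp (-logSixthRoot n) +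
    Real.exp (1 - (n * truncatedProb p n - logSixthRoot n ^ 6))

lemma tendsto_failureBound (hp : Tendsto (fun n : ℕ => n * p n - Real.log n) atTop atTop) :
    Tendsto (failureBound p) atTop (nhds 0) := by
  have pseudorandom : Tendsto (fun n => 4 * Real.exp (-logSixthRoot n)) atTop (nhds 0) := by
    simpa using (Real.tendsto_exp_neg_atTop_nhds_zero.comp tendsto_logSixthRoot_atTop).const_mul 4
  have isolated : Tendsto (fun n : ℕ => Real.exp (1 - (n * truncatedProb p n - Real.log n)))
      atTop (nhds 0) :=
    Real.tendsto_exp_atBot.comp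
      (tendsto_atBot_add_const_left _ 1 (tendsto_neg_atTop_atBot.comp
        (tendsto_mul_truncatedProb_sub_log hp)))
  have sum := pseudorandom.add isolated
  rw [add_zero] at sum
  exact sum.congr fun n => by rw [failureBound, logSixthRoot_pow_six]

lemma tendsto_two_mul_atTop : Tendsto (fun m : ℕ => 2 * m) atTop atTop :=
  tendsto_id.const_mul_atTop' two_pos

lemma eventually_one_sub_failureBound_le (K : Type*) [Fintype K] [Nonempty K] {ε : ℝ} (hε : 0 < ε)
    (hp₀ : ∀ n, 0 ≤ p n) (hp₁ : ∀ n, p n ≤ 1)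
    (hp : Tendsto (fun n : ℕ => n * p n - Real.log n) atTop atTop) :
    ∀ᶠ m : ℕ in atTop, 1 - failureBound p (2 * m) ≤ gnpProb (2 * m) (p (2 * m)) fun G =>
      HasMonochromaticPerfectMatching G K ((1 / (Fintype.card K + 1) - ε) * (2 * m)) := by
  filter_upwards [tendsto_two_mul_atTop.eventually (eventually_regime hp₀ hp₁ hp),
    tendsto_two_mul_atTop.eventually (tendsto_logSixthRoot_atTop.eventually_ge_atTop _),
    tendsto_two_mul_atTop.eventually
      ((tendsto_logSixthRoot_atTop.const_mul_atTop hε).eventually_ge_atTop _)]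
    with m hreg hx hεx
  calc 1 - failureBound p (2 * m)
      ≤ 1 - gnpProb (2 * m) (truncatedProb p (2 * m)) (fun G => ¬ IsPseudorandom G _ _ _) :=
        sub_le_sub_left hreg.gnpProb_not_isPseudorandom_le_exp 1
    _ = gnpProb (2 * m) (truncatedProb p (2 * m)) (fun G => IsPseudorandom G _ _ _) := by
      rw [sub_eq_iff_eq_add, gnpProb_add_gnpProb_not]
    _ ≤ gnpProb (2 * m) (truncatedProb p (2 * m)) (fun G =>
          HasMonochromaticPerfectMatching G K ((1 / (Fintype.card K + 1) - ε) * (2 * m))) :=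
      gnpProb_mono hreg.p_nonneg hreg.p_le_one fun G hG =>
        hG.hasMonochromaticPerfectMatching_of_regime hreg hx hεx
    _ ≤ _ := gnpProb_mono_prob hreg.p_nonneg (min_le_left _ _) (hp₁ _)
      fun G H hGH hG => hG.mono_graph hGH

end Limit

end MonochromaticMatching

open MonochromaticMatching in
theorem perfect_matching_many_edges_same_colour_general {K : Type*} [Fintype K] [Nonempty K]
    {ε : ℝ} (hε : 0 < ε) {p : ℕ → ℝ} (hp₀ : ∀ n, 0 ≤ p n) (hp₁ : ∀ n, p n ≤ 1)
    (hp : Filter.Tendsto (fun n : ℕ => n * p n - Real.log n) Filter.atTop Filter.atTop) :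
    Filter.Tendsto
      (fun m : ℕ => gnpProb (2 * m) (p (2 * m)) fun G =>
        HasMonochromaticPerfectMatching G K ((1 / (Fintype.card K + 1) - ε) * (2 * m)))
      Filter.atTop (nhds 1) := by
  have lower_bound := ((tendsto_failureBound hp).comp tendsto_two_mul_atTop).const_sub 1
  rw [sub_zero] at lower_bound
  exact tendsto_of_tendsto_of_tendsto_of_le_of_le' lower_bound tendsto_const_nhds
    (eventually_one_sub_failureBound_le K hε hp₀ hp₁ hp)
    (.of_forall fun m => gnpProb_le_one (hp₀ _) (hp₁ _) _)

/-- **Theorem (perfect matchings with many edges of one colour).**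
Let `r ≥ 2` and `ε > 0`, and let `p : ℕ → [0,1]` satisfy `n·p(n) − log n → ∞`.
Then, as `n → ∞` through even integers (`n = 2m`), whp `G ~ G(n, p(n))` is such that
for every `r`-colouring of its edges there are a colour `i` and a perfect matching
with at least `(1/(r+1) − ε)·n` edges of colour `i`. -/
theorem perfect_matching_many_edges_same_colour
    (r : ℕ) (hr : 2 ≤ r) (ε : ℝ) (hε : 0 < ε)
    (p : ℕ → ℝ) (hp01 : ∀ n, 0 ≤ p n ∧ p n ≤ 1)
    (hp : Filter.Tendsto
      (fun n : ℕ => n * p n - Real.log n)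
      Filter.atTop Filter.atTop) :
    Filter.Tendsto
      (fun m : ℕ => gnpProb (2 * m) (p (2 * m)) (fun G =>
        ∀ c : Sym2 (Fin (2 * m)) → Fin r, ∃ i : Fin r, ∃ M : G.Subgraph,
          M.IsPerfectMatching ∧
          (1 / (r + 1 : ℝ) - ε) * (2 * m) ≤ ({e ∈ M.edgeSet | c e = i}.ncard : ℝ)))
      Filter.atTop (nhds 1) := by
  have : Nonempty (Fin r) := ⟨⟨0, by omega⟩⟩
  simpa only [MonochromaticMatching.HasMonochromaticPerfectMatching, Fintype.card_fin] using
    perfect_matching_many_edges_same_colour_general (K := Fin r) hε (fun n => (hp01 n).1)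
      (fun n => (hp01 n).2) hp
end

section
/- Let r ≥ 2 be an integer, let k_1,…,k_r ≥ 1 be integers, let 0 ≤ δ ≤ 1/(2(r+1)), and set k := max{k_1,…,k_r}. Let G be a graph on n vertices with at least (1−δ)·C(n,2) edges, and suppose that (1 − (r+1)δ)·n ≥ Σ_{i=1}^{r}(k_i − 1) + k + 1. Then for every r-colouring of the edges of G there exists i ∈ {1,…,r} such that G contains a matching of size k_i all of whose edges are coloured with colour i. -/
/-!
If `G` has matching number `ν`, there are a vertex set `S` and `m ≤ ν - |S|` such that `G - S` has
at most `C(2m+1, 2)` edges. To see this, remove one after the other vertices that are covered by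
every maximum matching; each removal lowers the matching number by one. When no such vertex is left,
the proof of Gallai's lemma shows that "no maximum matching misses both `u` and `v`" is a transitive
relation containing adjacency. Hence every edge meets the set `C` of the `2m` vertices covered by a
maximum matching, and each vertex of `C` has at most one neighbour outside `C`.

If no colour `i` had a matching of size `kᵢ`, apply this to each colour class and consider the
`N ≥ n - ∑ |Sᵢ|` vertices outside `⋃ Sᵢ`. Each of their `C(N, 2)` pairs is a non-edge of `G` or an
edge of some `Gᵢ - Sᵢ`, so `C(N, 2) ≤ δ C(n, 2) + ∑ C(2mᵢ+1, 2)`, which is false for large `n`.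
-/

open Finset

section Matchings

variable {V : Type*}

/-- A matching of `G`, encoded as the finite set of its edges rather than as a `G.Subgraph`, so that
it can be changed one edge at a time by `insert` and `erase`. -/
structure IsEdgeMatching (G : SimpleGraph V) (M : Finset (Sym2 V)) : Prop where
  subset_edgeSet : (M : Set (Sym2 V)) ⊆ G.edgeSet
  eq_of_mem : ∀ ⦃e⦄, e ∈ M → ∀ ⦃f⦄, f ∈ M → ∀ ⦃v⦄, v ∈ e → v ∈ f → e = f

/-- The matching number `ν(G)`. For infinite `V` the supremum may have the junk value `0`. -/
noncomputable def matchingNumber (G : SimpleGraph V) : ℕ :=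
  sSup (Finset.card '' {M | IsEdgeMatching G M})

/-- A matching of maximum size. -/
structure IsMaximumMatching (G : SimpleGraph V) (M : Finset (Sym2 V)) : Prop
    extends IsEdgeMatching G M where
  card_eq : #M = matchingNumber G

/-- The set of endpoints of the edges in `M`; the vertices outside it are those missed by `M`. -/
def coveredVerts [DecidableEq V] (M : Finset (Sym2 V)) : Finset V :=
  M.biUnion Sym2.toFinset

/-- The relation "no maximum matching misses both `u` and `v`" of Gallai's lemma, made reflexive. -/
def GallaiRel [DecidableEq V] (G : SimpleGraph V) (u v : V) : Prop :=
  ∀ ⦃M⦄, IsMaximumMatching G M → u ∉ coveredVerts M → v ∉ coveredVerts M → u = v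

/-- The edges of `G - S`, kept as edges on the full vertex type. -/
def edgesAvoiding (G : SimpleGraph V) (S : Finset V) : Set (Sym2 V) :=
  {e ∈ G.edgeSet | ∀ v ∈ S, v ∉ e}

variable {G H : SimpleGraph V} {M N : Finset (Sym2 V)} {e f : Sym2 V} {u v w x y : V}

theorem isEdgeMatching_empty : IsEdgeMatching G ∅ := ⟨by simp, by simp⟩

namespace IsEdgeMatching

theorem mono (hM : IsEdgeMatching G M) (hGH : G ≤ H) : IsEdgeMatching H M :=
  ⟨hM.subset_edgeSet.trans (SimpleGraph.edgeSet_mono hGH), hM.eq_of_mem⟩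

theorem subset (hM : IsEdgeMatching G M) (hNM : N ⊆ M) : IsEdgeMatching G N :=
  ⟨(Finset.coe_subset.2 hNM).trans hM.subset_edgeSet,
    fun _ he _ hf => hM.eq_of_mem (hNM he) (hNM hf)⟩

theorem exists_subgraph_isMatching (hM : IsEdgeMatching G M) :
    ∃ M' : G.Subgraph, M'.IsMatching ∧ M'.edgeSet = M := by
  let M' : G.Subgraph :=
    { verts := {v | ∃ e ∈ M, v ∈ e}
      Adj u v := s(u, v) ∈ M
      adj_sub huv := hM.subset_edgeSet huv
      edge_vert huv := ⟨_, huv, Sym2.mem_mk_left _ _⟩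
      symm := ⟨fun u v huv => by rwa [Sym2.eq_swap]⟩ }
  refine ⟨M', ?_, ?_⟩
  · rintro v ⟨e, he, w, rfl⟩
    refine ⟨w, he, fun w' hw' => ?_⟩
    exact Sym2.congr_right.1 (hM.eq_of_mem hw' he (Sym2.mem_mk_left _ _) (Sym2.mem_mk_left _ _))
  · ext e
    induction e with | _ u v => rfl

theorem card_le_matchingNumber [Finite V] (hM : IsEdgeMatching G M) : #M ≤ matchingNumber G :=
  le_csSup ((Set.toFinite _).image _).bddAbove (Set.mem_image_of_mem _ hM)

end IsEdgeMatching

theorem exists_isMaximumMatching [Finite V] (G : SimpleGraph V) : ∃ M, IsMaximumMatching G M := by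
  obtain ⟨M, hM, hcard⟩ : matchingNumber G ∈ Finset.card '' {M | IsEdgeMatching G M} :=
    Nat.sSup_mem ⟨_, Set.mem_image_of_mem _ isEdgeMatching_empty⟩
      ((Set.toFinite _).image _).bddAbove
  exact ⟨M, hM, hcard⟩

theorem exists_subgraph_isMatching_of_le_matchingNumber [Finite V] {k : ℕ}
    (hk : k ≤ matchingNumber G) :
    ∃ M : G.Subgraph, M.IsMatching ∧ M.edgeSet.ncard = k := by
  obtain ⟨M, hM⟩ := exists_isMaximumMatching G
  obtain ⟨N, hNM, rfl⟩ := Finset.exists_subset_card_eq (hk.trans_eq hM.card_eq.symm)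
  obtain ⟨N', hN', hedges⟩ := (hM.subset hNM).exists_subgraph_isMatching
  exact ⟨N', hN', by rw [hedges, Set.ncard_coe_finset]⟩

section Exchange

variable [DecidableEq V]

theorem mem_coveredVerts : v ∈ coveredVerts M ↔ ∃ e ∈ M, v ∈ e := by
  simp [coveredVerts]

theorem coveredVerts_mono (hMN : M ⊆ N) : coveredVerts M ⊆ coveredVerts N :=
  Finset.biUnion_subset_biUnion_of_subset_left _ hMN

theorem coveredVerts_insert_mk :
    coveredVerts (insert s(x, y) M) = {x, y} ∪ coveredVerts M := by
  rw [coveredVerts, Finset.biUnion_insert, Sym2.toFinset_mk_eq, coveredVerts]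

theorem notMem_of_notMem_coveredVerts (hx : x ∉ coveredVerts M) (hxe : x ∈ e) : e ∉ M :=
  fun he => hx (mem_coveredVerts.2 ⟨e, he, hxe⟩)

namespace IsEdgeMatching

theorem card_coveredVerts (hM : IsEdgeMatching G M) : #(coveredVerts M) = 2 * #M := by
  have hdisj : (M : Set (Sym2 V)).PairwiseDisjoint Sym2.toFinset := by
    intro e he f hf hef
    refine Finset.disjoint_left.2 fun v hve hvf => hef ?_
    exact hM.eq_of_mem he hf (Sym2.mem_toFinset.1 hve) (Sym2.mem_toFinset.1 hvf)
  have hcard : ∀ e ∈ M, #e.toFinset = 2 := fun e he =>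
    Sym2.card_toFinset_of_not_isDiag e (G.not_isDiag_of_mem_edgeSet (hM.subset_edgeSet he))
  rw [coveredVerts, Finset.card_biUnion hdisj, Finset.sum_const_nat hcard, mul_comm]

theorem insert_mk (hM : IsEdgeMatching G M) (hxy : G.Adj x y)
    (hx : x ∉ coveredVerts M) (hy : y ∉ coveredVerts M) :
    IsEdgeMatching G (insert s(x, y) M) := by
  have hnot : ∀ e ∈ M, ∀ v ∈ e, v ∉ s(x, y) := by
    intro e he v hve hv
    rcases Sym2.mem_iff.1 hv with rfl | rfl
    · exact notMem_of_notMem_coveredVerts hx hve he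
    · exact notMem_of_notMem_coveredVerts hy hve he
  refine ⟨?_, ?_⟩
  · rw [Finset.coe_insert]
    exact Set.insert_subset hxy hM.subset_edgeSet
  · intro e he f hf v hve hvf
    rcases Finset.mem_insert.1 he with rfl | he' <;> rcases Finset.mem_insert.1 hf with rfl | hf'
    · rfl
    · exact absurd hve (hnot f hf' v hvf)
    · exact absurd hvf (hnot e he' v hve)
    · exact hM.eq_of_mem he' hf' hve hvf

theorem notMem_coveredVerts_erase (hM : IsEdgeMatching G M) (he : e ∈ M) (hv : v ∈ e) :
    v ∉ coveredVerts (M.erase e) := by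
  intro hcov
  obtain ⟨f, hf, hvf⟩ := mem_coveredVerts.1 hcov
  exact Finset.ne_of_mem_erase hf (hM.eq_of_mem (Finset.mem_of_mem_erase hf) he hvf hv)

end IsEdgeMatching

namespace IsMaximumMatching

theorem mem_coveredVerts_or_of_adj [Finite V] (hM : IsMaximumMatching G M) (hxy : G.Adj x y) :
    x ∈ coveredVerts M ∨ y ∈ coveredVerts M := by
  by_contra! ⟨hx, hy⟩
  have hle := (hM.insert_mk hxy hx hy).card_le_matchingNumber
  rw [Finset.card_insert_of_notMem
    (notMem_of_notMem_coveredVerts hx (Sym2.mem_mk_left x y)), hM.card_eq] at hle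
  lia

theorem insert_erase (hM : IsMaximumMatching G M) (hxy : G.Adj x y) (hx : x ∉ coveredVerts M)
    (hf : f ∈ M) (hy : y ∈ f) : IsMaximumMatching G (insert s(x, y) (M.erase f)) := by
  have hx' : x ∉ coveredVerts (M.erase f) :=
    fun h => hx (coveredVerts_mono (Finset.erase_subset f M) h)
  have hmatching : IsEdgeMatching G (insert s(x, y) (M.erase f)) :=
    (hM.subset (Finset.erase_subset f M)).insert_mk hxy hx' (hM.notMem_coveredVerts_erase hf hy)
  refine ⟨hmatching, ?_⟩
  rw [Finset.card_insert_of_notMem (notMem_of_notMem_coveredVerts hx' (Sym2.mem_mk_left x y)),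
    Finset.card_erase_add_one hf, hM.card_eq]

-- Replace the edge of `N` at the `M`-partner `y` of `x` by `s(x, y)`.
theorem exists_card_inter_lt [Finite V] (hM : IsMaximumMatching G M) (hN : IsMaximumMatching G N)
    (hxM : x ∈ coveredVerts M) (hxN : x ∉ coveredVerts N) (hvN : v ∉ coveredVerts N) (hxv : x ≠ v) :
    ∃ N', IsMaximumMatching G N' ∧ v ∉ coveredVerts N' ∧ #(M ∩ N) < #(M ∩ N') := by
  obtain ⟨_, hxy, y, rfl⟩ := mem_coveredVerts.1 hxM
  have hadj : G.Adj x y := hM.subset_edgeSet hxy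
  have hyN : y ∈ coveredVerts N := (hN.mem_coveredVerts_or_of_adj hadj).resolve_left hxN
  obtain ⟨f, hfN, hyf⟩ := mem_coveredVerts.1 hyN
  have hfM : f ∉ M := by
    intro hfM
    obtain rfl := hM.eq_of_mem hfM hxy hyf (Sym2.mem_mk_right x y)
    exact notMem_of_notMem_coveredVerts hxN (Sym2.mem_mk_left x y) hfN
  have hvy : v ≠ y := fun h => hvN (h ▸ hyN)
  refine ⟨insert s(x, y) (N.erase f), hN.insert_erase hadj hxN hfN hyf, ?_, ?_⟩
  · have hvN' : v ∉ coveredVerts (N.erase f) :=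
      fun h => hvN (coveredVerts_mono (Finset.erase_subset f N) h)
    simp [coveredVerts_insert_mk, hxv.symm, hvy, hvN']
  · have hxyN : s(x, y) ∉ N := notMem_of_notMem_coveredVerts hxN (Sym2.mem_mk_left x y)
    rw [Finset.inter_insert_of_mem hxy, Finset.inter_erase,
      Finset.erase_eq_of_notMem fun h => hfM (Finset.mem_of_mem_inter_left h),
      Finset.card_insert_of_notMem fun h => hxyN (Finset.mem_of_mem_inter_right h)]
    exact Nat.lt_succ_self _

end IsMaximumMatching

namespace GallaiRel

theorem symm (huv : GallaiRel G u v) : GallaiRel G v u :=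
  fun _ hM hv hu => (huv hM hu hv).symm

theorem of_adj [Finite V] (huv : G.Adj u v) : GallaiRel G u v :=
  fun _ hM hu hv => absurd (hM.mem_coveredVerts_or_of_adj huv) (by simp [hu, hv])

-- Among the maximum matchings missing `v`, one that shares the most edges with a maximum matching
-- missing `u` and `w` can still be brought closer to it.
theorem trans [Finite V] (hv : ∃ N, IsMaximumMatching G N ∧ v ∉ coveredVerts N)
    (huv : GallaiRel G u v) (hvw : GallaiRel G v w) : GallaiRel G u w := by
  intro M hM hu hw
  by_contra huw
  have hvM : v ∈ coveredVerts M := by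
    by_contra hvM
    exact huw ((huv hM hu hvM).trans (hvw hM hvM hw))
  obtain ⟨N, ⟨hN, hvN⟩, hmax⟩ :=
    Set.exists_max_image {N | IsMaximumMatching G N ∧ v ∉ coveredVerts N} (fun N => #(M ∩ N))
      (Set.toFinite _) hv
  have huN : u ∈ coveredVerts N := by
    by_contra huN
    exact hu (huv hN huN hvN ▸ hvM)
  have hwN : w ∈ coveredVerts N := by
    by_contra hwN
    exact hw (hvw hN hvN hwN ▸ hvM)
  have hcard : #(coveredVerts M) = #(coveredVerts N) := by
    rw [hM.card_coveredVerts, hN.card_coveredVerts, hM.card_eq, hN.card_eq]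
  have htwo : 1 < #(coveredVerts M \ coveredVerts N) := by
    rw [Finset.card_sdiff_comm hcard, Finset.one_lt_card]
    exact ⟨u, Finset.mem_sdiff.2 ⟨huN, hu⟩, w, Finset.mem_sdiff.2 ⟨hwN, hw⟩, huw⟩
  obtain ⟨x, hx, hxv⟩ := Finset.exists_mem_ne htwo v
  obtain ⟨hxM, hxN⟩ := Finset.mem_sdiff.1 hx
  obtain ⟨N', hN', hvN', hlt⟩ := hM.exists_card_inter_lt hN hxM hxN hvN hxv
  exact (hmax N' ⟨hN', hvN'⟩).not_gt hlt

end GallaiRel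

end Exchange

theorem ncard_edgeSet_le_of_isVertexCover [Finite V] {C : Finset V} (hC : G.IsVertexCover C)
    (hout : ∀ a ∈ C, (G.neighborSet a \ C).Subsingleton) :
    G.edgeSet.ncard ≤ (#C + 1).choose 2 := by
  classical
  have hpartner : ∀ a, ∃ b, a ∈ C → G.neighborSet a \ C ⊆ {b} := by
    intro a
    by_cases ha : a ∈ C
    · obtain h | ⟨b, h⟩ := (hout a ha).eq_empty_or_singleton
      · exact ⟨a, fun _ => by simp [h]⟩
      · exact ⟨b, fun _ => h.subset⟩
    · exact ⟨a, fun h => absurd h ha⟩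
  choose partner hpartner using hpartner
  have hleaving : ∀ a b, a ∈ C → b ∉ C → G.Adj a b →
      s(a, b) ∈ C.image fun a => s(a, partner a) := fun a b ha hb hab =>
    Finset.mem_image.2 ⟨a, ha, by rw [hpartner a ha ⟨hab, by simpa using hb⟩]⟩
  have hsub : G.edgeSet ⊆
      ↑(C.offDiag.image (fun p => s(p.1, p.2)) ∪ C.image fun a => s(a, partner a)) := by
    intro e he
    induction e with | _ a b
    rw [Finset.mem_coe, Finset.mem_union]
    by_cases ha : a ∈ C <;> by_cases hb : b ∈ C
    · exact Or.inl (Finset.mem_image.2 ⟨(a, b), Finset.mem_offDiag.2 ⟨ha, hb, he.ne⟩, rfl⟩)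
    · exact Or.inr (hleaving a b ha hb he)
    · exact Or.inr (Sym2.eq_swap ▸ hleaving b a hb ha he.symm)
    · exact absurd (hC he) (by simp [ha, hb])
  calc G.edgeSet.ncard
      ≤ #(C.offDiag.image (fun p => s(p.1, p.2)) ∪ C.image fun a => s(a, partner a)) := by
        rw [← Set.ncard_coe_finset]
        exact Set.ncard_le_ncard hsub
    _ ≤ (#C).choose 2 + #C :=
        (Finset.card_union_le _ _).trans
          (add_le_add (Sym2.card_image_offDiag C).le Finset.card_image_le)
    _ = (#C + 1).choose 2 := by rw [Nat.choose_succ_succ' (#C) 1, Nat.choose_one_right, add_comm]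

theorem ncard_edgeSet_le_of_forall_exists_notMem_coveredVerts [Finite V] [DecidableEq V]
    (h : ∀ v, ∃ M, IsMaximumMatching G M ∧ v ∉ coveredVerts M) :
    G.edgeSet.ncard ≤ (2 * matchingNumber G + 1).choose 2 := by
  obtain ⟨M, hM⟩ := exists_isMaximumMatching G
  rw [← hM.card_eq, ← hM.card_coveredVerts]
  refine ncard_edgeSet_le_of_isVertexCover (fun _ _ => hM.mem_coveredVerts_or_of_adj) ?_
  rintro a - b ⟨hab, hb⟩ b' ⟨hab', hb'⟩
  have hrel : GallaiRel G b b' := (GallaiRel.of_adj hab).symm.trans (h a) (.of_adj hab')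
  exact hrel hM hb hb'

theorem matchingNumber_deleteIncidenceSet_lt [Finite V] [DecidableEq V]
    (hx : ∀ M, IsMaximumMatching G M → x ∈ coveredVerts M) :
    matchingNumber (G.deleteIncidenceSet x) < matchingNumber G := by
  obtain ⟨M, hM⟩ := exists_isMaximumMatching (G.deleteIncidenceSet x)
  have hMG : IsEdgeMatching G M := hM.mono (G.deleteIncidenceSet_le x)
  have hxM : x ∉ coveredVerts M := by
    intro hxM
    obtain ⟨e, he, hxe⟩ := mem_coveredVerts.1 hxM
    have hdel := hM.subset_edgeSet he
    rw [G.edgeSet_deleteIncidenceSet] at hdel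
    exact hdel.2 ⟨hdel.1, hxe⟩
  rw [← hM.card_eq]
  exact hMG.card_le_matchingNumber.lt_of_ne fun hcard => hxM (hx M ⟨hMG, hcard⟩)

theorem edgesAvoiding_empty : edgesAvoiding G ∅ = G.edgeSet := by
  simp [edgesAvoiding]

theorem edgesAvoiding_insert [DecidableEq V] {S : Finset V} :
    edgesAvoiding G (insert x S) = edgesAvoiding (G.deleteIncidenceSet x) S := by
  ext e
  simp only [edgesAvoiding, G.edgeSet_deleteIncidenceSet, SimpleGraph.incidenceSet,
    Finset.forall_mem_insert, Set.mem_sdiff, Set.mem_ofPred_eq]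
  tauto

theorem exists_card_add_le_matchingNumber_ncard_edgesAvoiding_le [Finite V] (G : SimpleGraph V) :
    ∃ (S : Finset V) (m : ℕ),
      #S + m ≤ matchingNumber G ∧ (edgesAvoiding G S).ncard ≤ (2 * m + 1).choose 2 := by
  classical
  induction hν : matchingNumber G using Nat.strong_induction_on generalizing G with
  | _ ν ih =>
    subst hν
    by_cases hmissed : ∀ v, ∃ M, IsMaximumMatching G M ∧ v ∉ coveredVerts M
    · refine ⟨∅, matchingNumber G, by simp, ?_⟩
      rw [edgesAvoiding_empty]
      exact ncard_edgeSet_le_of_forall_exists_notMem_coveredVerts hmissed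
    · push Not at hmissed
      obtain ⟨x, hx⟩ := hmissed
      have hlt := matchingNumber_deleteIncidenceSet_lt hx
      obtain ⟨S, m, hcard, hedges⟩ := ih _ hlt (G.deleteIncidenceSet x) rfl
      refine ⟨insert x S, m, ?_, by rwa [edgesAvoiding_insert]⟩
      have := Finset.card_insert_le x S
      lia

section Counting

variable [Fintype V]

theorem ncard_edgeSet_compl_add_ncard_edgeSet (G : SimpleGraph V) :
    Gᶜ.edgeSet.ncard + G.edgeSet.ncard = (Fintype.card V).choose 2 := by
  classical
  have hdisj : Disjoint Gᶜ.edgeSet G.edgeSet := SimpleGraph.disjoint_edgeSet.2 disjoint_compl_left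
  rw [← Set.ncard_union_eq hdisj, ← SimpleGraph.edgeSet_sup, compl_sup_eq_top,
    ← SimpleGraph.card_edgeFinset_top_eq_card_choose_two, ← Set.ncard_coe_finset,
    SimpleGraph.coe_edgeFinset]

theorem ncard_edgesAvoiding_top [DecidableEq V] (S : Finset V) :
    (edgesAvoiding (⊤ : SimpleGraph V) S).ncard = (#Sᶜ).choose 2 := by
  have hpairs : edgesAvoiding (⊤ : SimpleGraph V) S =
      (Sᶜ.offDiag.image fun p => s(p.1, p.2) : Finset (Sym2 V)) := by
    ext e
    induction e with | _ a b
    simp only [edgesAvoiding, Set.mem_ofPred_eq, SimpleGraph.mem_edgeSet, SimpleGraph.top_adj,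
      Sym2.mem_iff, Finset.mem_coe, Finset.mem_image, Finset.mem_offDiag, Finset.mem_compl,
      Prod.exists, Sym2.eq_iff]
    grind
  rw [hpairs, Set.ncard_coe_finset]
  exact Sym2.card_image_offDiag Sᶜ

variable {ι : Type*} [Fintype ι]

theorem choose_card_compl_biUnion_le [DecidableEq V] {H : ι → SimpleGraph V}
    (hGH : G ≤ ⨆ i, H i) (S : ι → Finset V) :
    (#(univ.biUnion S)ᶜ).choose 2 ≤
      Gᶜ.edgeSet.ncard + ∑ i, (edgesAvoiding (H i) (S i)).ncard := by
  have hsub : edgesAvoiding (⊤ : SimpleGraph V) (univ.biUnion S) ⊆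
      Gᶜ.edgeSet ∪ ⋃ i ∈ univ, edgesAvoiding (H i) (S i) := by
    rintro e ⟨he, havoid⟩
    rw [← compl_sup_eq_top (x := G), SimpleGraph.edgeSet_sup] at he
    refine he.imp id fun heG => ?_
    obtain ⟨i, hi⟩ : ∃ i, e ∈ (H i).edgeSet := by
      simpa [SimpleGraph.edgeSet_iSup] using SimpleGraph.edgeSet_mono hGH heG
    refine Set.mem_biUnion (Finset.mem_univ i) ⟨hi, fun v hv => havoid v ?_⟩
    exact Finset.mem_biUnion.2 ⟨i, Finset.mem_univ i, hv⟩
  calc (#(univ.biUnion S)ᶜ).choose 2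
      = (edgesAvoiding (⊤ : SimpleGraph V) (univ.biUnion S)).ncard :=
        (ncard_edgesAvoiding_top _).symm
    _ ≤ (Gᶜ.edgeSet ∪ ⋃ i ∈ univ, edgesAvoiding (H i) (S i)).ncard := Set.ncard_le_ncard hsub
    _ ≤ Gᶜ.edgeSet.ncard + ∑ i, (edgesAvoiding (H i) (S i)).ncard :=
        (Set.ncard_union_le _ _).trans
          (Nat.add_le_add_left (Finset.set_ncard_biUnion_le _ _) _)

theorem ncard_edgeSet_compl_le {δ : ℝ}
    (hedges : (1 - δ) * ((Fintype.card V).choose 2 : ℝ) ≤ (G.edgeSet.ncard : ℝ)) :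
    (Gᶜ.edgeSet.ncard : ℝ) ≤ δ * (Fintype.card V).choose 2 := by
  have hsplit : (Gᶜ.edgeSet.ncard : ℝ) + G.edgeSet.ncard = (Fintype.card V).choose 2 := by
    exact_mod_cast ncard_edgeSet_compl_add_ncard_edgeSet G
  linarith

end Counting

-- Here `s = ∑ |Sᵢ|` and `t = ∑ mᵢ`.
theorem add_lt_mul_sub_one_of_add_le {n N δ r s t k : ℝ} (hδ : 0 ≤ δ) (hr : 0 ≤ r) (hn : 0 ≤ n)
    (ht : 0 ≤ t) (hk : 1 ≤ k) (hN : n - s ≤ N) (hs : s ≤ r * k)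
    (hcond : s + t + k + 1 ≤ (1 - (r + 1) * δ) * n) :
    δ * (n * (n - 1)) + 4 * k * t < N * (N - 1) := by
  have hdefect : 0 ≤ (r + 1) * δ * n := by positivity
  have hNlarge : t + k + 1 ≤ N - (r + 1) * δ * n := by linarith
  have hkN : k ≤ N := by linarith [hNlarge]
  have hnN : n ≤ (r + 1) * N := by linarith [mul_le_mul_of_nonneg_left hkN hr]
  calc δ * (n * (n - 1)) + 4 * k * t
      < δ * n * n + (t + k + 1) * (t + k) := by nlinarith [sq_nonneg (t - k), mul_nonneg hδ hn]
    _ ≤ δ * n * ((r + 1) * N) + N * (N - (r + 1) * δ * n - 1) := by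
        gcongr <;> linarith
    _ = N * (N - 1) := by ring

theorem sum_two_mul_choose_two_le {ι : Type*} [Fintype ι] {m : ι → ℕ} {k : ℕ}
    (hm : ∀ i, m i + 1 ≤ k) :
    ∑ i, 2 * ((2 * m i + 1).choose 2 : ℝ) ≤ 4 * k * ∑ i, (m i : ℝ) := by
  rw [Finset.mul_sum]
  refine Finset.sum_le_sum fun i _ => ?_
  have hmi : (m i : ℝ) + 1 ≤ k := by exact_mod_cast hm i
  rw [Nat.cast_choose_two]
  push_cast
  nlinarith [(m i).cast_nonneg (α := ℝ)]

section Colouring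

variable [Fintype V] {ι : Type*} [Fintype ι]

theorem card_sub_sum_card_le_card_compl_biUnion [DecidableEq V] (S : ι → Finset V) :
    (Fintype.card V : ℝ) - ∑ i, (#(S i) : ℝ) ≤ #(univ.biUnion S)ᶜ := by
  have hunion : #(univ.biUnion S) ≤ ∑ i, #(S i) := Finset.card_biUnion_le
  have hcompl := Finset.card_add_card_compl (univ.biUnion S)
  rw [sub_le_iff_le_add]
  exact_mod_cast (by lia : Fintype.card V ≤ #(univ.biUnion S)ᶜ + ∑ i, #(S i))

theorem card_compl_biUnion_mul_sub_one_le [DecidableEq V] {H : ι → SimpleGraph V}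
    (hGH : G ≤ ⨆ i, H i) {δ : ℝ}
    (hedges : (1 - δ) * ((Fintype.card V).choose 2 : ℝ) ≤ (G.edgeSet.ncard : ℝ))
    {S : ι → Finset V} {m : ι → ℕ} {k : ℕ}
    (hfew : ∀ i, (edgesAvoiding (H i) (S i)).ncard ≤ (2 * m i + 1).choose 2)
    (hm : ∀ i, m i + 1 ≤ k) :
    (#(univ.biUnion S)ᶜ : ℝ) * (#(univ.biUnion S)ᶜ - 1) ≤
      δ * (Fintype.card V * (Fintype.card V - 1)) + 4 * k * ∑ i, (m i : ℝ) := by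
  have hcount : ((#(univ.biUnion S)ᶜ).choose 2 : ℝ) ≤
      δ * (Fintype.card V).choose 2 + ∑ i, ((2 * m i + 1).choose 2 : ℝ) :=
    calc ((#(univ.biUnion S)ᶜ).choose 2 : ℝ)
        ≤ Gᶜ.edgeSet.ncard + ∑ i, ((edgesAvoiding (H i) (S i)).ncard : ℝ) := by
          exact_mod_cast choose_card_compl_biUnion_le hGH S
      _ ≤ δ * (Fintype.card V).choose 2 + ∑ i, ((2 * m i + 1).choose 2 : ℝ) := by
          gcongr with i
          · exact ncard_edgeSet_compl_le hedges
          · exact hfew i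
  have hsum := sum_two_mul_choose_two_le hm
  rw [← Finset.mul_sum] at hsum
  rw [Nat.cast_choose_two, Nat.cast_choose_two] at hcount
  linarith

theorem exists_le_matchingNumber_of_le_iSup [Nonempty ι] {H : ι → SimpleGraph V}
    (hGH : G ≤ ⨆ i, H i) (k : ι → ℕ) {δ : ℝ} (hδ : 0 ≤ δ)
    (hedges : (1 - δ) * ((Fintype.card V).choose 2 : ℝ) ≤ (G.edgeSet.ncard : ℝ))
    (hcond : (∑ i, ((k i : ℝ) - 1)) + ((univ.sup k : ℕ) : ℝ) + 1 ≤
      (1 - (Fintype.card ι + 1) * δ) * Fintype.card V) :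
    ∃ i, k i ≤ matchingNumber (H i) := by
  classical
  by_contra! hsmall
  choose S m hSm hfew using fun i =>
    exists_card_add_le_matchingNumber_ncard_edgesAvoiding_le (H i)
  have hSmk (i : ι) : #(S i) + m i + 1 ≤ k i := (Nat.succ_le_succ (hSm i)).trans (hsmall i)
  have hSm_sup (i : ι) : #(S i) + m i + 1 ≤ univ.sup k :=
    (hSmk i).trans (Finset.le_sup (Finset.mem_univ i))
  have hpairs := card_compl_biUnion_mul_sub_one_le hGH hedges hfew (k := univ.sup k)
    fun i => by linarith [hSm_sup i]
  have hone : (1 : ℝ) ≤ (univ.sup k : ℕ) := by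
    exact_mod_cast (Nat.le_add_left 1 _).trans (hSm_sup (Classical.arbitrary ι))
  have hsum : (∑ i, (#(S i) : ℝ)) + ∑ i, (m i : ℝ) ≤ ∑ i, ((k i : ℝ) - 1) := by
    rw [← Finset.sum_add_distrib]
    refine Finset.sum_le_sum fun i _ => le_sub_iff_add_le.2 ?_
    exact_mod_cast hSmk i
  have hdeleted : ∑ i, (#(S i) : ℝ) ≤ Fintype.card ι * (univ.sup k : ℕ) := by
    exact_mod_cast Finset.sum_le_card_nsmul univ (fun i => #(S i)) _
      fun i _ => by linarith [hSm_sup i]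
  refine hpairs.not_gt (add_lt_mul_sub_one_of_add_le hδ (Nat.cast_nonneg _) (Nat.cast_nonneg _)
    (Finset.sum_nonneg fun i _ => Nat.cast_nonneg _) hone
    (card_sub_sum_card_le_card_compl_biUnion S) hdeleted ?_)
  linarith

end Colouring

end Matchings

theorem matching_general_general {V ι : Type*} [Fintype V] [Fintype ι] [Nonempty ι]
    (G : SimpleGraph V) (k : ι → ℕ) {δ : ℝ} (hδ : 0 ≤ δ)
    (hedges : (1 - δ) * ((Fintype.card V).choose 2 : ℝ) ≤ (G.edgeSet.ncard : ℝ))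
    (hcond : (∑ i, ((k i : ℝ) - 1)) + ((univ.sup k : ℕ) : ℝ) + 1 ≤
      (1 - (Fintype.card ι + 1) * δ) * Fintype.card V) (c : Sym2 V → ι) :
    ∃ i : ι, ∃ M : G.Subgraph,
      M.IsMatching ∧ M.edgeSet.ncard = k i ∧ ∀ e ∈ M.edgeSet, c e = i := by
  let colorClass (i : ι) : SimpleGraph V := G.deleteEdges {e | c e ≠ i}
  have hcover : G ≤ ⨆ i, colorClass i := fun u v huv =>
    SimpleGraph.iSup_adj.2 ⟨c s(u, v), by simpa [colorClass] using huv⟩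
  obtain ⟨i, hi⟩ := exists_le_matchingNumber_of_le_iSup hcover k hδ hedges hcond
  obtain ⟨M, hM, hcard⟩ := exists_subgraph_isMatching_of_le_matchingNumber hi
  have hedgeSet : (M.map (.ofLE (G.deleteEdges_le _))).edgeSet = M.edgeSet := by simp
  refine ⟨i, M.map (.ofLE (G.deleteEdges_le _)), hM.map_ofLE _, hedgeSet ▸ hcard, ?_⟩
  intro e he
  have hmem : e ∈ (colorClass i).edgeSet := M.edgeSet_subset (hedgeSet ▸ he)
  simp only [colorClass, SimpleGraph.edgeSet_deleteEdges] at hmem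
  exact not_not.1 hmem.2

/-- **Theorem (Cockayne–Lorimer for almost complete graphs).**
Let `r ≥ 2`, `k₁,…,k_r ≥ 1`, `0 ≤ δ ≤ 1/(2(r+1))`, and `k := max kᵢ`. Let `G` be a
graph on `n` vertices with at least `(1−δ)·C(n,2)` edges, and suppose
`(1 − (r+1)δ)·n ≥ Σᵢ (kᵢ − 1) + k + 1`. Then for every `r`-colouring of the edges
of `G` there is a colour `i` such that `G` contains a matching of size `kᵢ` all of
whose edges have colour `i`. -/
theorem matching_general
    {V : Type*} [Fintype V] (G : SimpleGraph V) (n : ℕ) (hn : Fintype.card V = n)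
    (r : ℕ) (hr : 2 ≤ r) (k : Fin r → ℕ) (hk : ∀ i, 1 ≤ k i)
    (δ : ℝ) (hδ0 : 0 ≤ δ) (hδ1 : δ ≤ 1 / (2 * (r + 1)))
    (hedges : (1 - δ) * (n.choose 2 : ℝ) ≤ (G.edgeSet.ncard : ℝ))
    (hcond : (∑ i, ((k i : ℝ) - 1)) + ((Finset.univ.sup k : ℕ) : ℝ) + 1 ≤ (1 - (r + 1) * δ) * n) :
    ∀ c : Sym2 V → Fin r, ∃ i : Fin r, ∃ M : G.Subgraph,
      M.IsMatching ∧ M.edgeSet.ncard = k i ∧ ∀ e ∈ M.edgeSet, c e = i := by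
  have : Nonempty (Fin r) := ⟨0, by lia⟩
  subst hn
  exact matching_general_general G k hδ0 hedges (by simpa using hcond)
end

section
/- Let r ≥ 2 be an integer, let 0 ≤ δ ≤ 1/(2(r+1)), and let G be a graph on n vertices with at least (1−δ)·C(n,2) edges. Then in every r-colouring of the edges of G there is a monochromatic matching of size at least ⌊(1/(r+1) − δ)·n⌋. -/
/-!
By the Tutte–Berge formula the colour-`i` edges have a deficiency set `Aᵢ`: they contain a matching
`Mᵢ` with `2|Aᵢ| + ρᵢ ≤ 2|Mᵢ|`, where `ρᵢ` is the number of vertices minus the number of parts in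
the partition of the vertices into the singletons of `Aᵢ` and the components left by deleting `Aᵢ`.
Outside all the sets `Aᵢ`, two vertices in different parts of every partition are non-adjacent, so
there are few such pairs. On a set `U` with at most `d|U|` of them (counted in both orders) the
ranks of the restricted partitions satisfy `∑ᵢ ρᵢ + ρⱼ ≥ 2(|U| - d) - 3` for some `j`:
* if every part has at most `|U|/2` elements, this follows by counting pairs inside parts;
* if the `j`-th partition has a part `C` with more than `|U|/2` elements, then `ρⱼ ≥ |C| - 1`, and
  a vertex of `C` and one of `U \ C` that are rarely separated from the opposite side have many
  neighbours there, which form a double star and bound `∑_{i ≠ j} ρᵢ` from below.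
Adding up the inequalities `2|Aᵢ| + ρᵢ ≤ 2|Mᵢ|`, with `j` counted twice, gives the theorem.
-/

open Finset SimpleGraph

section TutteBerge

variable {V V' W : Type*} {G : SimpleGraph V} {G' : SimpleGraph V'}

theorem two_mul_ncard_edgeSet_of_isMatching [Finite V] {M : G.Subgraph} (hM : M.IsMatching) :
    2 * M.edgeSet.ncard = M.verts.ncard := by
  classical
  cases nonempty_fintype V
  have hdeg (v : M.verts) : M.degree v = 1 :=
    Subgraph.degree_eq_one_iff_existsUnique_adj.mpr (hM v.2)
  rw [← M.image_coe_edgeSet_coe,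
    Set.ncard_image_of_injective _ (Sym2.map.injective Subtype.val_injective),
    ← coe_edgeFinset, Set.ncard_coe_finset, ← M.coe.sum_degrees_eq_twice_card_edges]
  simp only [Subgraph.coe_degree, hdeg, sum_const, card_univ, smul_eq_mul, mul_one,
    Set.fintypeCard_eq_ncard]

theorem ncard_oddComponents_congr (φ : G ≃g G') :
    G.oddComponents.ncard = G'.oddComponents.ncard := by
  have hsupp (C : G.ConnectedComponent) :
      (φ.connectedComponentEquiv C).supp.ncard = C.supp.ncard :=
    (Nat.card_congr (ConnectedComponent.isoEquivSupp φ C)).symm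
  have himage : φ.connectedComponentEquiv '' G.oddComponents = G'.oddComponents := by
    ext C
    obtain ⟨C, rfl⟩ := φ.connectedComponentEquiv.surjective C
    rw [φ.connectedComponentEquiv.injective.mem_set_image]
    simp only [oddComponents, Set.mem_ofPred_eq, hsupp]
  rw [← himage, Set.ncard_image_of_injective _ φ.connectedComponentEquiv.injective]

theorem even_ncard_oddComponents_deleteVerts_add_ncard_iff [Finite V] (G : SimpleGraph V)
    (u : Set V) :
    Even (((⊤ : G.Subgraph).deleteVerts u).coe.oddComponents.ncard + u.ncard) ↔
      Even (Nat.card V) := by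
  have hodd := odd_ncard_oddComponents ((⊤ : G.Subgraph).deleteVerts u).coe
  have hcard : Nat.card ((⊤ : G.Subgraph).deleteVerts u).verts + u.ncard = Nat.card V := by
    rw [Nat.card_coe_set_eq, Subgraph.deleteVerts_verts, Subgraph.verts_top,
      ← Set.compl_eq_univ_sdiff, add_comm, Set.ncard_add_ncard_compl]
  rw [← hcard]
  grind

/-- The join of `G` with the complete graph on `W`. -/
def joinComplete (G : SimpleGraph V) (W : Type*) : SimpleGraph (V ⊕ W) :=
  (G ⊕g completeGraph W) ⊔ completeBipartiteGraph V W

@[simp]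
theorem joinComplete_adj_inl_inl {x y : V} :
    (joinComplete G W).Adj (.inl x) (.inl y) ↔ G.Adj x y := by
  simp [joinComplete]

theorem joinComplete_adj_inr {w : W} {z : V ⊕ W} (h : z ≠ .inr w) :
    (joinComplete G W).Adj (.inr w) z := by
  cases z <;> simp_all [joinComplete, eq_comm]

theorem exists_isMatching_of_isPerfectMatching_joinComplete [Finite V] [Finite W]
    {P : (joinComplete G W).Subgraph} (hP : P.IsPerfectMatching) :
    ∃ M : G.Subgraph, M.IsMatching ∧ Nat.card V ≤ 2 * M.edgeSet.ncard + Nat.card W := by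
  let M : G.Subgraph :=
    { verts := {x | ∃ y, P.Adj (.inl x) (.inl y)}
      Adj x y := P.Adj (.inl x) (.inl y)
      adj_sub h := joinComplete_adj_inl_inl.mp (P.adj_sub h)
      edge_vert h := ⟨_, h⟩
      symm := ⟨fun _ _ h => h.symm⟩ }
  have hM : M.IsMatching := by
    rintro x ⟨y, hxy⟩
    exact ⟨y, hxy, fun z hxz => Sum.inl_injective (hP.1.eq_of_adj_left hxz hxy)⟩
  have hpartner (x : ↥M.vertsᶜ) : ∃ w, P.Adj (.inl x.1) (.inr w) := by
    obtain ⟨y | w, hxy, -⟩ := hP.1 (hP.2 (.inl x.1))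
    exacts [absurd ⟨y, hxy⟩ x.2, ⟨w, hxy⟩]
  choose partner hpartner using hpartner
  have hinj : Function.Injective partner := fun x y hxy =>
    Subtype.ext (Sum.inl_injective (hP.1.eq_of_adj_right (hpartner x) (hxy ▸ hpartner y)))
  refine ⟨M, hM, ?_⟩
  rw [two_mul_ncard_edgeSet_of_isMatching hM, ← Set.ncard_add_ncard_compl M.verts,
    ← Nat.card_coe_set_eq M.vertsᶜ]
  exact Nat.add_le_add_left (Nat.card_le_card_of_injective partner hinj) _

theorem ncard_oddComponents_le_one_of_preconnected (hG : G.Preconnected) :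
    G.oddComponents.ncard ≤ 1 :=
  have := hG.subsingleton_connectedComponent
  Set.ncard_le_one_of_subsingleton _

theorem preconnected_deleteVerts_joinComplete {u : Set (V ⊕ W)} {w : W} (hw : .inr w ∉ u) :
    ((⊤ : (joinComplete G W).Subgraph).deleteVerts u).coe.Preconnected := by
  let hub : ((⊤ : (joinComplete G W).Subgraph).deleteVerts u).verts := ⟨.inr w, by simp [hw]⟩
  have hreach (z : ((⊤ : (joinComplete G W).Subgraph).deleteVerts u).verts) :
      ((⊤ : (joinComplete G W).Subgraph).deleteVerts u).coe.Reachable hub z := by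
    by_cases hz : z = hub
    · rw [hz]
    · refine Adj.reachable ?_
      have := z.2.2
      simp [hub, hw, this, joinComplete_adj_inr (G := G) (fun h => hz (Subtype.ext h))]
  exact fun x y => (hreach x).symm.trans (hreach y)

theorem ncard_oddComponents_deleteVerts_joinComplete (G : SimpleGraph V) {u : Set (V ⊕ W)}
    (hu : Set.range Sum.inr ⊆ u) :
    ((⊤ : (joinComplete G W).Subgraph).deleteVerts u).coe.oddComponents.ncard =
      ((⊤ : G.Subgraph).deleteVerts (Sum.inl ⁻¹' u)).coe.oddComponents.ncard := by
  let toJoin (x : ((⊤ : G.Subgraph).deleteVerts (Sum.inl ⁻¹' u)).verts) :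
      ((⊤ : (joinComplete G W).Subgraph).deleteVerts u).verts := ⟨.inl x.1, ⟨trivial, x.2.2⟩⟩
  have hbij : Function.Bijective toJoin := by
    refine ⟨fun x y h => Subtype.ext (Sum.inl_injective (congrArg Subtype.val h)), ?_⟩
    rintro ⟨x | w, hz⟩
    exacts [⟨⟨x, ⟨trivial, hz.2⟩⟩, rfl⟩, absurd (hu ⟨w, rfl⟩) hz.2]
  exact (ncard_oddComponents_congr ⟨Equiv.ofBijective toJoin hbij, by simp [toJoin]⟩).symm

theorem ncard_eq_ncard_preimage_inl_add_card [Finite V] [Finite W] {u : Set (V ⊕ W)}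
    (hu : Set.range Sum.inr ⊆ u) : u.ncard = (Sum.inl ⁻¹' u).ncard + Nat.card W := by
  have hinr : Sum.inr ⁻¹' u = (Set.univ : Set W) := Set.eq_univ_of_forall fun w => hu ⟨w, rfl⟩
  have hdisj : Disjoint (Sum.inl '' (Sum.inl ⁻¹' u)) (Sum.inr '' (Sum.inr ⁻¹' u)) :=
    Set.isCompl_range_inl_range_inr.disjoint.mono (Set.image_subset_range _ _)
      (Set.image_subset_range _ _)
  nth_rw 1 [← Set.image_preimage_inl_union_image_preimage_inr u]
  rw [Set.ncard_union_eq hdisj, Set.ncard_image_of_injective _ Sum.inl_injective,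
    Set.ncard_image_of_injective _ Sum.inr_injective, hinr, Set.ncard_univ]

theorem exists_card_add_two_le_ncard_oddComponents [Finite V] [Finite W]
    (heven : Even (Nat.card V + Nat.card W))
    (hfree : ∀ P : (joinComplete G W).Subgraph, ¬ P.IsPerfectMatching) :
    ∃ A : Set V, A.ncard + Nat.card W + 2 ≤
      ((⊤ : G.Subgraph).deleteVerts A).coe.oddComponents.ncard := by
  rw [← Nat.card_sum] at heven
  obtain ⟨u, hviolator⟩ := exists_isTutteViolator hfree heven
  have hgap : u.ncard + 2 ≤
      ((⊤ : (joinComplete G W).Subgraph).deleteVerts u).coe.oddComponents.ncard := by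
    have := (even_ncard_oddComponents_deleteVerts_add_ncard_iff (joinComplete G W) u).mpr heven
    rw [IsTutteViolator] at hviolator
    grind
  have hu : Set.range Sum.inr ⊆ u := by
    rintro _ ⟨w, rfl⟩
    by_contra hw
    have := ncard_oddComponents_le_one_of_preconnected
      (preconnected_deleteVerts_joinComplete (G := G) hw)
    omega
  refine ⟨Sum.inl ⁻¹' u, ?_⟩
  rwa [← ncard_eq_ncard_preimage_inl_add_card hu,
    ← ncard_oddComponents_deleteVerts_joinComplete G hu]

theorem exists_isMatching_tutteBerge [Finite V] (G : SimpleGraph V) :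
    ∃ M : G.Subgraph, M.IsMatching ∧ ∃ A : Set V, Nat.card V + A.ncard ≤
      2 * M.edgeSet.ncard + ((⊤ : G.Subgraph).deleteVerts A).coe.oddComponents.ncard := by
  obtain ⟨M, hM, hmax⟩ := Set.exists_max_image {M : G.Subgraph | M.IsMatching}
    (fun M => M.edgeSet.ncard) (Set.toFinite _) ⟨⊥, fun _ h => h.elim⟩
  refine ⟨M, hM, ?_⟩
  have hverts : 2 * M.edgeSet.ncard ≤ Nat.card V :=
    (two_mul_ncard_edgeSet_of_isMatching hM).trans_le (Set.ncard_le_card _)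
  obtain hsmall | hlarge := Nat.lt_or_ge (Nat.card V) (2 * M.edgeSet.ncard + 2)
  · refine ⟨∅, ?_⟩
    rw [Set.ncard_empty]
    obtain heven | hodd := Nat.even_or_odd (Nat.card V)
    · grind
    · have := IsTutteViolator.empty (G := G) hodd
      rw [IsTutteViolator, Set.ncard_empty] at this
      omega
  · obtain ⟨e, he⟩ := Nat.exists_eq_add_of_le hlarge
    have hfree (P : (joinComplete G (Fin e)).Subgraph) : ¬ P.IsPerfectMatching := by
      intro hP
      obtain ⟨M', hM', hcard⟩ := exists_isMatching_of_isPerfectMatching_joinComplete hP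
      have := hmax M' hM'
      rw [Nat.card_fin] at hcard
      omega
    obtain ⟨A, hA⟩ := exists_card_add_two_le_ncard_oddComponents
      (by rw [Nat.card_fin, he]; grind) hfree
    rw [Nat.card_fin] at hA
    exact ⟨A, by omega⟩

end TutteBerge

section PartitionRank

variable {α β : Type*} [DecidableEq β] {κ : α → β} {U : Finset α}

/-- The rank of the partition of `U` into the fibres of `κ`: the size of `U` minus the number of
parts, i.e. the number of edges in a spanning forest of the disjoint union of cliques on the
parts. The subtraction never truncates. -/
def partitionRank (κ : α → β) (U : Finset α) : ℕ := #U - #(U.image κ)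

theorem partitionRank_add_card_image (κ : α → β) (U : Finset α) :
    partitionRank κ U + #(U.image κ) = #U :=
  Nat.sub_add_cancel card_image_le

theorem partitionRank_eq_sum (κ : α → β) (U : Finset α) :
    partitionRank κ U = ∑ b ∈ U.image κ, (#{x ∈ U | κ x = b} - 1) := by
  have hpart : ∀ b ∈ U.image κ, 1 ≤ #{x ∈ U | κ x = b} := fun b hb => by
    obtain ⟨x, hx, rfl⟩ := mem_image.mp hb
    exact card_pos.mpr ⟨x, by simp [hx]⟩
  rw [sum_tsub_distrib _ hpart, ← card_eq_sum_card_image, sum_const, smul_eq_mul, mul_one,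
    partitionRank]

theorem card_filter_offDiag_eq_le_mul_partitionRank {t : ℕ}
    (ht : ∀ x ∈ U, #{y ∈ U | κ y = κ x} ≤ t) :
    #{p ∈ U.offDiag | κ p.1 = κ p.2} ≤ t * partitionRank κ U := by
  classical
  have hmaps : ∀ p ∈ {p ∈ U.offDiag | κ p.1 = κ p.2}, κ p.1 ∈ U.image κ := fun p hp =>
    mem_image_of_mem _ (mem_offDiag.mp (mem_filter.mp hp).1).1
  rw [card_eq_sum_card_fiberwise hmaps, partitionRank_eq_sum, mul_sum]
  refine sum_le_sum fun b hb => ?_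
  obtain ⟨x, hx, rfl⟩ := mem_image.mp hb
  calc #{p ∈ {p ∈ U.offDiag | κ p.1 = κ p.2} | κ p.1 = κ x}
      ≤ #{y ∈ U | κ y = κ x}.offDiag := card_le_card fun p => by
        simp only [mem_filter, mem_offDiag]
        grind
    _ = #{y ∈ U | κ y = κ x} * (#{y ∈ U | κ y = κ x} - 1) := by
        rw [offDiag_card, Nat.mul_sub_one]
    _ ≤ t * (#{y ∈ U | κ y = κ x} - 1) := Nat.mul_le_mul_right _ (ht x hx)

theorem partitionRank_mono (κ : α → β) {U' : Finset α} (h : U ⊆ U') :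
    partitionRank κ U ≤ partitionRank κ U' := by
  classical
  have himage : #(U'.image κ) ≤ #(U.image κ) + #(U' \ U) := by
    rw [← union_sdiff_of_subset h, image_union, union_sdiff_of_subset h]
    exact (card_union_le _ _).trans (Nat.add_le_add_left card_image_le _)
  have hU := partitionRank_add_card_image κ U
  have hU' := partitionRank_add_card_image κ U'
  have := card_sdiff_add_card_eq_card h
  omega

theorem card_le_partitionRank [DecidableEq α] {T : Finset α} (hTU : T ⊆ U)
    (hT : ∀ x ∈ T, ∃ y ∈ U \ T, κ y = κ x) : #T ≤ partitionRank κ U := by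
  have himage : U.image κ = (U \ T).image κ := by
    refine (image_subset_iff.mpr fun x hx => ?_).antisymm (image_subset_image sdiff_subset)
    by_cases hxT : x ∈ T
    · exact mem_image.mpr (hT x hxT)
    · exact mem_image_of_mem κ (mem_sdiff.mpr ⟨hx, hxT⟩)
  have hle : #(U.image κ) ≤ #(U \ T) := himage ▸ card_image_le
  have := partitionRank_add_card_image κ U
  have := card_sdiff_add_card_eq_card hTU
  omega

theorem card_fiber_le_partitionRank_add_one {x : α} (hx : x ∈ U) :
    #{y ∈ U | κ y = κ x} ≤ partitionRank κ U + 1 := by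
  classical
  have hxfiber : x ∈ ({y ∈ U | κ y = κ x} : Finset α) := by simp [hx]
  rw [← card_erase_add_one hxfiber]
  refine Nat.add_le_add_right (card_le_partitionRank ?_ fun y hy => ⟨x, ?_⟩) 1 <;> grind

end PartitionRank

section Interedges

variable {α β : Type*}

theorem exists_card_mul_card_filter_le_card_interedges (r : α → β → Prop)
    [∀ a, DecidablePred (r a)] {s : Finset α} (hs : s.Nonempty) (t : Finset β) :
    ∃ a ∈ s, #s * #{b ∈ t | r a b} ≤ #(Rel.interedges r s t) := by
  have hcount : #(Rel.interedges r s t) = ∑ a ∈ s, #{b ∈ t | r a b} := by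
    simp only [Rel.interedges, card_filter, sum_product]
  obtain ⟨a, ha, hmin⟩ := s.exists_min_image (fun a => #{b ∈ t | r a b}) hs
  exact ⟨a, ha, by simpa [hcount] using card_nsmul_le_sum s _ _ hmin⟩

theorem two_mul_card_interedges_le_of_disjoint [DecidableEq α] (r : α → α → Prop) [DecidableRel r]
    [Std.Symm r] {s t : Finset α} (hst : Disjoint s t) :
    2 * #(Rel.interedges r s t) ≤ #(Rel.interedges r (s ∪ t) (s ∪ t)) := by
  have hdisj : Disjoint (Rel.interedges r s t) (Rel.interedges r t s) :=
    disjoint_left.mpr fun p hp hp' => disjoint_left.mp hst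
      (Rel.mem_interedges_iff.mp hp).1 (Rel.mem_interedges_iff.mp hp').1
  calc 2 * #(Rel.interedges r s t)
      = #(Rel.interedges r s t) + #(Rel.interedges r t s) := by
        rw [two_mul, Rel.card_interedges_comm t s]
    _ = #(Rel.interedges r s t ∪ Rel.interedges r t s) := (card_union_of_disjoint hdisj).symm
    _ ≤ #(Rel.interedges r (s ∪ t) (s ∪ t)) := card_le_card <| union_subset
        (Rel.interedges_mono subset_union_left subset_union_right)
        (Rel.interedges_mono subset_union_right subset_union_left)

end Interedges

theorem add_le_sub_add_two_mul_of_mul_le {t u d q a b : ℝ} (hd : 0 ≤ d) (hdu : d < u)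
    (hut : u ≤ t) (ha : t * a ≤ q) (hb : u * b ≤ q) (hq : 2 * q ≤ d * (t + u)) :
    a + b ≤ t - u + 2 * d := by
  have hu : 0 < u := hd.trans_lt hdu
  have ht : 0 < t := hu.trans_le hut
  have hab : 2 * (t * u * (a + b)) ≤ d * (t + u) ^ 2 := by
    calc 2 * (t * u * (a + b)) = 2 * (u * (t * a) + t * (u * b)) := by ring
      _ ≤ 2 * (u * q + t * q) := by gcongr
      _ = 2 * q * (t + u) := by ring
      _ ≤ d * (t + u) * (t + u) := by gcongr
      _ = d * (t + u) ^ 2 := by ring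
  have hgap : d * (t - u) ^ 2 ≤ 2 * (t * u) * (t - u) := by
    have hdt : d * (t - u) ≤ 2 * (t * u) := by nlinarith
    calc d * (t - u) ^ 2 = d * (t - u) * (t - u) := by ring
      _ ≤ 2 * (t * u) * (t - u) := mul_le_mul_of_nonneg_right hdt (sub_nonneg.mpr hut)
  have hexpand : (t + u) ^ 2 = (t - u) ^ 2 + 4 * (t * u) := by ring
  refine le_of_mul_le_mul_left ?_ (by positivity : 0 < 2 * (t * u))
  rw [hexpand] at hab
  linarith

section Separated

variable {α ι : Type*} {β : ι → Type*} [Fintype ι] [∀ i, DecidableEq (β i)] {κ : ∀ i, α → β i}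

/-- Two points are separated by the family `κ` of partitions (given by their fibres) if no member
of the family has them in the same part. -/
abbrev Separated (κ : ∀ i, α → β i) (x y : α) : Prop := ∀ i, κ i x ≠ κ i y

instance : Std.Symm (Separated κ) := ⟨fun _ _ h i => (h i).symm⟩

theorem card_mul_card_le_card_interedges_separated_add {U : Finset α} {t : ℕ}
    (ht : ∀ i, ∀ x ∈ U, #{y ∈ U | κ i y = κ i x} ≤ t) :
    #U * #U ≤ #U + #(Rel.interedges (Separated κ) U U) + t * ∑ i, partitionRank (κ i) U := by
  classical
  have hcover : U.offDiag ⊆ Rel.interedges (Separated κ) U U ∪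
      univ.biUnion fun i => {p ∈ U.offDiag | κ i p.1 = κ i p.2} := by
    intro p hp
    by_cases hsep : Separated κ p.1 p.2
    · have := mem_offDiag.mp hp
      exact mem_union_left _ (Rel.mem_interedges_iff.mpr ⟨this.1, this.2.1, hsep⟩)
    · obtain ⟨i, hi⟩ := not_forall_not.mp hsep
      exact mem_union_right _ (mem_biUnion.mpr ⟨i, mem_univ i, mem_filter.mpr ⟨hp, hi⟩⟩)
  have hoffDiag : #U * #U - #U ≤
      #(Rel.interedges (Separated κ) U U) + t * ∑ i, partitionRank (κ i) U := by
    rw [← offDiag_card, mul_sum]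
    refine (card_le_card hcover).trans ((card_union_le _ _).trans ?_)
    gcongr
    exact card_biUnion_le.trans
      (sum_le_sum fun i _ => card_filter_offDiag_eq_le_mul_partitionRank (ht i))
  omega

theorem card_double_star_le_partitionRank [DecidableEq α] {γ : Type*} [DecidableEq γ] (κ : α → γ)
    {C D : Finset α} (hCD : Disjoint C D) {v w : α} (hv : v ∈ D) (hw : w ∈ C) :
    #({x ∈ C | κ x = κ v} ∪ {y ∈ D.erase v | κ y = κ w}) ≤ partitionRank κ (C ∪ D) := by
  have hvC : v ∉ C := disjoint_right.mp hCD hv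
  have hwD : w ∉ D := disjoint_left.mp hCD hw
  refine card_le_partitionRank (by grind) fun x hx => ?_
  by_cases hvw : κ w = κ v
  · exact ⟨v, by grind⟩
  · obtain hx | hx := mem_union.mp hx
    · exact ⟨v, by grind⟩
    · exact ⟨w, by grind⟩

theorem card_not_separated_add_card_not_separated_le [DecidableEq α] [DecidableEq ι]
    {C D : Finset α} {j : ι} (hj : ∀ x ∈ C, ∀ y ∈ D, κ j x ≠ κ j y)
    {v w : α} (hv : v ∈ D) (hw : w ∈ C) :
    #{x ∈ C | ¬ Separated κ v x} + #{y ∈ D | ¬ Separated κ w y} ≤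
      ∑ i ∈ univ.erase j, partitionRank (κ i) (C ∪ D) + 1 := by
  have hCD : Disjoint C D := disjoint_left.mpr fun x hC hD => hj x hC x hD rfl
  have hcover : {x ∈ C | ¬ Separated κ v x} ∪ {y ∈ D | ¬ Separated κ w y}.erase v ⊆
      (univ.erase j).biUnion fun i =>
        {x ∈ C | κ i x = κ i v} ∪ {y ∈ D.erase v | κ i y = κ i w} := by
    intro x hx
    simp only [Separated, mem_union, mem_erase, mem_filter, not_forall, not_not] at hx
    obtain ⟨hxC, i, hi⟩ | ⟨hxv, hxD, i, hi⟩ := hx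
    · have hij : i ≠ j := fun h => hj x hxC v hv (h ▸ hi.symm)
      exact mem_biUnion.mpr ⟨i, by grind⟩
    · have hij : i ≠ j := fun h => hj w hw x hxD (h ▸ hi)
      exact mem_biUnion.mpr ⟨i, by grind⟩
  have hdisj : Disjoint {x ∈ C | ¬ Separated κ v x} ({y ∈ D | ¬ Separated κ w y}.erase v) :=
    hCD.mono (filter_subset _ _) ((erase_subset _ _).trans (filter_subset _ _))
  have herase : #{y ∈ D | ¬ Separated κ w y} ≤ #({y ∈ D | ¬ Separated κ w y}.erase v) + 1 :=
    Nat.le_add_of_sub_le pred_card_le_card_erase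
  calc #{x ∈ C | ¬ Separated κ v x} + #{y ∈ D | ¬ Separated κ w y}
      ≤ #({x ∈ C | ¬ Separated κ v x} ∪ {y ∈ D | ¬ Separated κ w y}.erase v) + 1 := by
        rw [card_union_of_disjoint hdisj]
        omega
    _ ≤ ∑ i ∈ univ.erase j, partitionRank (κ i) (C ∪ D) + 1 := by
        gcongr
        exact (card_le_card hcover).trans <| card_biUnion_le.trans <|
          sum_le_sum fun i _ => card_double_star_le_partitionRank (κ i) hCD hv hw

theorem two_mul_card_sub_le_sum_erase_partitionRank [DecidableEq α] [DecidableEq ι]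
    {C D : Finset α} {j : ι} {d : ℝ} (hj : ∀ x ∈ C, ∀ y ∈ D, κ j x ≠ κ j y)
    (hDC : #D ≤ #C) (hd : 0 ≤ d) (hdD : d < #D)
    (hsep : (#(Rel.interedges (Separated κ) (C ∪ D) (C ∪ D)) : ℝ) ≤ d * #(C ∪ D)) :
    2 * (#D - d) - 1 ≤ (∑ i ∈ univ.erase j, partitionRank (κ i) (C ∪ D) : ℕ) := by
  have hCD : Disjoint C D := disjoint_left.mpr fun x hC hD => hj x hC x hD rfl
  have hD : D.Nonempty := card_pos.mp (by exact_mod_cast hd.trans_lt hdD)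
  have hC : C.Nonempty := card_pos.mp (hD.card_pos.trans_le hDC)
  obtain ⟨w, hw, hwcard⟩ := exists_card_mul_card_filter_le_card_interedges (Separated κ) hC D
  obtain ⟨v, hv, hvcard⟩ := exists_card_mul_card_filter_le_card_interedges (Separated κ) hD C
  rw [Rel.card_interedges_comm D C] at hvcard
  have hpairs : (2 * #(Rel.interedges (Separated κ) C D) : ℝ) ≤ d * (#C + #D) := by
    rw [card_union_of_disjoint hCD, Nat.cast_add] at hsep
    refine le_trans ?_ hsep
    exact_mod_cast two_mul_card_interedges_le_of_disjoint (Separated κ) hCD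
  have hfew : (#{y ∈ D | Separated κ w y} + #{x ∈ C | Separated κ v x} : ℝ) ≤
      #C - #D + 2 * d :=
    add_le_sub_add_two_mul_of_mul_le hd hdD (by exact_mod_cast hDC) (by exact_mod_cast hwcard)
      (by exact_mod_cast hvcard) hpairs
  have hmany := card_not_separated_add_card_not_separated_le hj hv hw
  have hsplitC : #{x ∈ C | Separated κ v x} + #{x ∈ C | ¬ Separated κ v x} = #C :=
    card_filter_add_card_filter_not _
  have hsplitD : #{y ∈ D | Separated κ w y} + #{y ∈ D | ¬ Separated κ w y} = #D :=
    card_filter_add_card_filter_not _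
  have htotal : (#C + #D : ℝ) ≤ #{y ∈ D | Separated κ w y} + #{x ∈ C | Separated κ v x} +
      (∑ i ∈ univ.erase j, partitionRank (κ i) (C ∪ D) : ℕ) + 1 := by
    exact_mod_cast (by omega)
  linarith

theorem two_mul_card_sub_le_sum_partitionRank_of_small {U : Finset α} {d : ℝ}
    (hsmall : ∀ i, ∀ x ∈ U, 2 * #{y ∈ U | κ i y = κ i x} ≤ #U)
    (hd : 0 ≤ d) (hsep : (#(Rel.interedges (Separated κ) U U) : ℝ) ≤ d * #U) :
    2 * (#U - d) - 2 ≤ (∑ i, partitionRank (κ i) U : ℕ) := by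
  obtain rfl | hU := U.eq_empty_or_nonempty
  · rw [card_empty, Nat.cast_zero]
    linarith
  have hcount := card_mul_card_le_card_interedges_separated_add (κ := κ) (U := U) (t := #U / 2)
    fun i x hx => by have := hsmall i x hx; omega
  have hhalf : 2 * (#U / 2 * ∑ i, partitionRank (κ i) U) ≤ #U * ∑ i, partitionRank (κ i) U := by
    rw [← mul_assoc]
    exact Nat.mul_le_mul_right _ (Nat.mul_div_le _ _)
  have hcount_cast : (2 * (#U * #U) : ℝ) ≤ 2 * (#U + #(Rel.interedges (Separated κ) U U)) +
      #U * (∑ i, partitionRank (κ i) U : ℕ) := by exact_mod_cast (by omega)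
  refine le_of_mul_le_mul_left ?_ (Nat.cast_pos.mpr hU.card_pos : (0 : ℝ) < #U)
  linarith

theorem two_mul_card_sub_le_sum_partitionRank_add_of_large {U : Finset α} {d : ℝ} {j : ι} {x : α}
    (hx : x ∈ U) (hlarge : #U ≤ 2 * #{y ∈ U | κ j y = κ j x}) (hd : 0 ≤ d)
    (hsep : (#(Rel.interedges (Separated κ) U U) : ℝ) ≤ d * #U) :
    2 * (#U - d) - 3 ≤ (∑ i, partitionRank (κ i) U + partitionRank (κ j) U : ℕ) := by
  classical
  have hrank : (#{y ∈ U | κ j y = κ j x} : ℝ) ≤ partitionRank (κ j) U + 1 := by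
    exact_mod_cast card_fiber_le_partitionRank_add_one hx
  have hunion : {y ∈ U | κ j y = κ j x} ∪ {y ∈ U | κ j y ≠ κ j x} = U :=
    filter_union_filter_not_eq _ _
  have hcard : #{y ∈ U | κ j y = κ j x} + #{y ∈ U | κ j y ≠ κ j x} = #U :=
    card_filter_add_card_filter_not _
  have hcard_cast : (#{y ∈ U | κ j y = κ j x} + #{y ∈ U | κ j y ≠ κ j x} : ℝ) = #U := by
    exact_mod_cast hcard
  rw [← add_sum_erase _ _ (mem_univ j), Nat.cast_add, Nat.cast_add]
  obtain hle | hlt := le_or_gt (#{y ∈ U | κ j y ≠ κ j x} : ℝ) d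
  · linarith
  · have hrest := two_mul_card_sub_le_sum_erase_partitionRank (κ := κ) (j := j)
      (C := {y ∈ U | κ j y = κ j x}) (by grind) (by omega) hd hlt (by rwa [hunion])
    rw [hunion] at hrest
    linarith

theorem exists_two_mul_card_sub_le_sum_partitionRank_add [Nonempty ι] {U : Finset α} {d : ℝ}
    (hd : 0 ≤ d) (hsep : (#(Rel.interedges (Separated κ) U U) : ℝ) ≤ d * #U) :
    ∃ j, 2 * (#U - d) - 3 ≤ (∑ i, partitionRank (κ i) U + partitionRank (κ j) U : ℕ) := by
  by_cases hsmall : ∀ i, ∀ x ∈ U, 2 * #{y ∈ U | κ i y = κ i x} ≤ #U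
  · obtain ⟨j⟩ := ‹Nonempty ι›
    have hsum := two_mul_card_sub_le_sum_partitionRank_of_small hsmall hd hsep
    refine ⟨j, ?_⟩
    rw [Nat.cast_add]
    linarith
  · push Not at hsmall
    obtain ⟨j, x, hx, hlarge⟩ := hsmall
    exact ⟨j, two_mul_card_sub_le_sum_partitionRank_add_of_large hx hlarge.le hd hsep⟩

end Separated

section ComponentLabel

variable {V : Type*}

open scoped Classical in
/-- Labels each vertex of `A` by itself and each other vertex by its connected component in the
graph obtained from `G` by deleting `A`. The fibres are the singletons of `A` and these
components. -/
noncomputable def componentLabel (G : SimpleGraph V) (A : Set V) (x : V) :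
    A ⊕ ((⊤ : G.Subgraph).deleteVerts A).coe.ConnectedComponent :=
  if h : x ∈ A then .inl ⟨x, h⟩ else .inr (connectedComponentMk _ ⟨x, trivial, h⟩)

theorem componentLabel_surjective (G : SimpleGraph V) (A : Set V) :
    Function.Surjective (componentLabel G A) := by
  rintro (⟨x, hx⟩ | C)
  · exact ⟨x, dif_pos hx⟩
  · obtain ⟨⟨x, hx⟩, rfl⟩ := C.exists_rep
    exact ⟨x, dif_neg hx.2⟩

theorem componentLabel_eq_of_adj {G : SimpleGraph V} {A : Set V} {x y : V} (hx : x ∉ A)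
    (hy : y ∉ A) (hxy : G.Adj x y) : componentLabel G A x = componentLabel G A y := by
  rw [componentLabel, componentLabel, dif_neg hx, dif_neg hy]
  refine congrArg Sum.inr (ConnectedComponent.connectedComponentMk_eq_of_adj ?_)
  simpa [hx, hy] using hxy

open scoped Classical in
theorem exists_isMatching_two_mul_ncard_add_partitionRank_le [Fintype V] (G : SimpleGraph V) :
    ∃ M : G.Subgraph, M.IsMatching ∧ ∃ A : Set V,
      2 * A.ncard + partitionRank (componentLabel G A) univ ≤ 2 * M.edgeSet.ncard := by
  obtain ⟨M, hM, A, hdeficiency⟩ := exists_isMatching_tutteBerge G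
  refine ⟨M, hM, A, ?_⟩
  have hrank := partitionRank_add_card_image (componentLabel G A) univ
  have himage : #(univ.image (componentLabel G A)) =
      A.ncard + Nat.card ((⊤ : G.Subgraph).deleteVerts A).coe.ConnectedComponent := by
    rw [image_univ_of_surjective (componentLabel_surjective G A), card_univ,
      ← Nat.card_eq_fintype_card, Nat.card_sum, Nat.card_coe_set_eq]
  have hodd := Set.ncard_le_card ((⊤ : G.Subgraph).deleteVerts A).coe.oddComponents
  rw [card_univ, ← Nat.card_eq_fintype_card] at hrank
  omega

end ComponentLabel

section MonochromaticMatching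

variable {V ι : Type*}

theorem ncard_edgeSet_add_ncard_edgeSet_compl [Fintype V] (G : SimpleGraph V) :
    G.edgeSet.ncard + Gᶜ.edgeSet.ncard = (Fintype.card V).choose 2 := by
  classical
  rw [← Set.ncard_union_eq (disjoint_edgeSet.mpr disjoint_compl_right), ← edgeSet_sup,
    sup_compl_eq_top, ← coe_edgeFinset, Set.ncard_coe_finset,
    card_edgeFinset_top_eq_card_choose_two]

open scoped Classical in
theorem card_interedges_separated_componentLabel_le [Finite V] [Fintype ι] [Nonempty ι]
    {G : SimpleGraph V} {H : ι → SimpleGraph V} (hGH : G ≤ ⨆ i, H i) {A : ι → Set V} {U : Finset V}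
    (hU : ∀ i, ∀ x ∈ U, x ∉ A i) :
    #(Rel.interedges (Separated fun i => componentLabel (H i) (A i)) U U) ≤
      2 * Gᶜ.edgeSet.ncard := by
  cases nonempty_fintype V
  rw [← coe_edgeFinset, Set.ncard_coe_finset, two_mul_card_edgeFinset]
  refine card_le_card fun p hp => ?_
  obtain ⟨hx, hy, hsep⟩ := Rel.mem_interedges_iff.mp hp
  have hne : p.1 ≠ p.2 := fun h => by
    obtain ⟨i⟩ := ‹Nonempty ι›
    exact hsep i (congrArg _ h)
  have hnadj : ¬ G.Adj p.1 p.2 := fun hadj => by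
    obtain ⟨i, hi⟩ := iSup_adj.mp (hGH hadj)
    exact hsep i (componentLabel_eq_of_adj (hU i _ hx) (hU i _ hy) hi)
  simpa using ⟨hne, hnadj⟩

theorem exists_finset_forall_notMem_card_le [Fintype V] [Fintype ι] (A : ι → Set V) :
    ∃ U : Finset V, (∀ i, ∀ x ∈ U, x ∉ A i) ∧ Fintype.card V ≤ #U + ∑ i, (A i).ncard := by
  classical
  refine ⟨(univ.biUnion fun i => (A i).toFinset)ᶜ, fun i x hx hxA => ?_, ?_⟩
  · exact mem_compl.mp hx (mem_biUnion.mpr ⟨i, mem_univ i, Set.mem_toFinset.mpr hxA⟩)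
  · rw [← card_compl_add_card (univ.biUnion fun i => (A i).toFinset)]
    gcongr
    exact card_biUnion_le.trans (sum_le_sum fun i _ => (Set.ncard_eq_toFinset_card' (A i)).ge)

open scoped Classical in
theorem exists_isMatching_forall_two_mul_ncard_add_partitionRank_le [Finite V] [Finite ι]
    [Nonempty ι] (H : ι → SimpleGraph V) :
    ∃ k, ∃ M : (H k).Subgraph, M.IsMatching ∧ ∃ A : ι → Set V, ∀ i, ∀ U : Finset V,
      2 * (A i).ncard + partitionRank (componentLabel (H i) (A i)) U ≤ 2 * M.edgeSet.ncard := by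
  cases nonempty_fintype V
  choose M hM A hMA using fun i => exists_isMatching_two_mul_ncard_add_partitionRank_le (H i)
  obtain ⟨k, hk⟩ := Finite.exists_max fun i => (M i).edgeSet.ncard
  refine ⟨k, M k, hM k, A, fun i U => ?_⟩
  have := partitionRank_mono (componentLabel (H i) (A i)) (subset_univ U)
  have := hMA i
  have := hk i
  omega

theorem le_succ_mul_of_le_add_mul {n r u m : ℕ} (hn : n ≤ u + r * m) (hm : (r + 1) * m ≤ n) :
    n ≤ (r + 1) * u := by
  have : (r + 1) * n ≤ (r + 1) * u + r * n :=
    calc (r + 1) * n ≤ (r + 1) * (u + r * m) := Nat.mul_le_mul_left _ hn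
      _ = (r + 1) * u + r * ((r + 1) * m) := by ring
      _ ≤ (r + 1) * u + r * n := by gcongr
  linarith

theorem exists_isMatching_of_le_iSup [Fintype V] [Fintype ι] [Nonempty ι] {G : SimpleGraph V}
    {H : ι → SimpleGraph V} (hGH : G ≤ ⨆ i, H i) {δ : ℝ} (hδ : 0 ≤ δ)
    (hG : (2 * Gᶜ.edgeSet.ncard : ℝ) ≤ δ * Fintype.card V ^ 2) :
    ∃ i, ∃ M : (H i).Subgraph, M.IsMatching ∧
      2 * (1 - (Fintype.card ι + 1) * δ) * Fintype.card V - 3 ≤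
        2 * ((Fintype.card ι + 1) * (M.edgeSet.ncard : ℝ)) := by
  classical
  obtain ⟨k, M, hM, A, hMA⟩ := exists_isMatching_forall_two_mul_ncard_add_partitionRank_le H
  obtain ⟨U, hU, hcard⟩ := exists_finset_forall_notMem_card_le A
  refine ⟨k, M, hM, ?_⟩
  have hsum : 2 * ∑ i, (A i).ncard + ∑ i, partitionRank (componentLabel (H i) (A i)) U ≤
      2 * (Fintype.card ι * M.edgeSet.ncard) := by
    rw [mul_sum, ← sum_add_distrib, mul_left_comm, ← smul_eq_mul (Fintype.card ι), ← card_univ]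
    exact sum_le_card_nsmul _ _ _ fun i _ => hMA i U
  set d : ℝ := (Fintype.card ι + 1) * δ * Fintype.card V with hd
  have hd0 : 0 ≤ d := by positivity
  obtain hlarge | hsmall := le_total (Fintype.card V) ((Fintype.card ι + 1) * M.edgeSet.ncard)
  · have : (Fintype.card V : ℝ) ≤ (Fintype.card ι + 1) * M.edgeSet.ncard := by
      exact_mod_cast hlarge
    linarith
  have hcardU : (Fintype.card V : ℝ) ≤ (Fintype.card ι + 1) * #U := by
    exact_mod_cast le_succ_mul_of_le_add_mul (by omega) hsmall
  have hsep : (#(Rel.interedges (Separated fun i => componentLabel (H i) (A i)) U U) : ℝ) ≤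
      d * #U :=
    calc (#(Rel.interedges (Separated fun i => componentLabel (H i) (A i)) U U) : ℝ)
        ≤ 2 * Gᶜ.edgeSet.ncard := by
          exact_mod_cast card_interedges_separated_componentLabel_le hGH hU
      _ ≤ δ * Fintype.card V * Fintype.card V := by linarith
      _ ≤ δ * Fintype.card V * ((Fintype.card ι + 1) * #U) := by gcongr
      _ = d * #U := by rw [hd]; ring
  obtain ⟨j, hj⟩ := exists_two_mul_card_sub_le_sum_partitionRank_add hd0 hsep
  have htotal : (2 * Fintype.card V + (∑ i, partitionRank (componentLabel (H i) (A i)) U +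
        partitionRank (componentLabel (H j) (A j)) U : ℕ) : ℝ) ≤
      2 * #U + 2 * ((Fintype.card ι + 1) * M.edgeSet.ncard) := by
    exact_mod_cast (by linarith [hMA j U])
  linarith

end MonochromaticMatching

theorem monochromatic_matching_almost_complete_general {V ι : Type*} [Fintype V] [Fintype ι]
    [Nonempty ι] (G : SimpleGraph V) {δ : ℝ} (hδ : 0 ≤ δ)
    (hedges : (1 - δ) * ((Fintype.card V).choose 2 : ℝ) ≤ G.edgeSet.ncard) (c : Sym2 V → ι) :
    ∃ i, ∃ M : G.Subgraph, M.IsMatching ∧ (∀ e ∈ M.edgeSet, c e = i) ∧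
      ⌊(1 / (Fintype.card ι + 1 : ℝ) - δ) * Fintype.card V⌋ ≤ (M.edgeSet.ncard : ℤ) := by
  let C : G.EdgeLabeling ι := fun e => c e
  have hcompl : (2 * Gᶜ.edgeSet.ncard : ℝ) ≤ δ * Fintype.card V ^ 2 := by
    have hsum : (G.edgeSet.ncard + Gᶜ.edgeSet.ncard : ℝ) = (Fintype.card V).choose 2 := by
      exact_mod_cast ncard_edgeSet_add_ncard_edgeSet_compl G
    have hδn : 0 ≤ δ * Fintype.card V := by positivity
    rw [Nat.cast_choose_two] at hedges hsum
    linarith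
  obtain ⟨i, M, hM, hcard⟩ := exists_isMatching_of_le_iSup C.iSup_labelGraph.ge hδ hcompl
  have hmap : (M.map (Hom.ofLE C.labelGraph_le)).edgeSet = M.edgeSet := by
    simp [Subgraph.edgeSet_map]
  refine ⟨i, M.map (Hom.ofLE C.labelGraph_le), hM.map_ofLE _, ?_⟩
  rw [hmap]
  refine ⟨fun e he => ?_, ?_⟩
  · induction e with
    | _ x y => exact ((C.labelGraph_adj x y).mp (M.adj_sub he)).2
  · have hι : (1 : ℝ) ≤ Fintype.card ι := by exact_mod_cast Fintype.card_pos (α := ι)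
    rw [Int.floor_le_iff, Int.cast_natCast]
    refine lt_of_mul_lt_mul_left ?_ (by positivity : (0 : ℝ) ≤ 2 * (Fintype.card ι + 1))
    calc 2 * (Fintype.card ι + 1) * ((1 / (Fintype.card ι + 1 : ℝ) - δ) * Fintype.card V)
        = 2 * (1 - (Fintype.card ι + 1) * δ) * Fintype.card V := by field_simp
      _ < 2 * (Fintype.card ι + 1) * (M.edgeSet.ncard + 1) := by linarith

/-- **Corollary (monochromatic matchings in almost complete graphs).**
Let `r ≥ 2`, `0 ≤ δ ≤ 1/(2(r+1))`, and let `G` be a graph on `n` vertices with at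
least `(1−δ)·C(n,2)` edges. Then in every `r`-colouring of the edges of `G` there
is a monochromatic matching of size at least `⌊(1/(r+1) − δ)·n⌋`. -/
theorem monochromatic_matching_almost_complete
    {V : Type*} [Fintype V] (G : SimpleGraph V) (n : ℕ) (hn : Fintype.card V = n)
    (r : ℕ) (hr : 2 ≤ r)
    (δ : ℝ) (hδ0 : 0 ≤ δ) (hδ1 : δ ≤ 1 / (2 * (r + 1)))
    (hedges : (1 - δ) * (n.choose 2 : ℝ) ≤ (G.edgeSet.ncard : ℝ)) :
    ∀ c : Sym2 V → Fin r, ∃ i : Fin r, ∃ M : G.Subgraph,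
      M.IsMatching ∧ (∀ e ∈ M.edgeSet, c e = i) ∧
      ⌊(1 / (r + 1 : ℝ) - δ) * n⌋ ≤ (M.edgeSet.ncard : ℤ) := by
  have : NeZero r := ⟨by omega⟩
  subst hn
  intro c
  simpa only [Fintype.card_fin] using monochromatic_matching_almost_complete_general G hδ0 hedges c
end
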